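/- arXiv:1801.02162 — 2 statements merged into one kernel-verified Lean document; each statement's English description precedes it below -/
import Mathlib

section
/- For a fixed angle ω ∈ (0,π) and a circular arc sequence Ω* consisting of at least two arcs, there is at most one convex polygon P such that Ω* is the maximal ω-cloud of P. -/
open EuclideanGeometry Real Set
open scoped Classical

noncomputable section

abbrev Plane := EuclideanSpace ℝ (Fin 2)

/-- The unit vector in direction `θ`. -/
def unitVec (θ : ℝ) : Plane := (WithLp.equiv 2 (Fin 2 → ℝ)).symm ![Real.cos θ, Real.sin θ]

/-- The closed ray from `x` in direction `d`. -/
def ray (x d : Plane) : Set Plane := {y | ∃ t : ℝ, 0 ≤ t ∧ y = x + t • d}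

/-- The closed wedge with apex `x` bounded by the rays in directions `d₁` and `d₂`. -/
def wedgeSet (x d₁ d₂ : Plane) : Set Plane :=
  {y | ∃ s t : ℝ, 0 ≤ s ∧ 0 ≤ t ∧ y = x + s • d₁ + t • d₂}

/-- The wedge with apex `x`, arm directions `d₁`, `d₂` (unit vectors at angle `ω`),
is a minimal `ω`-wedge for `P`: it contains `P` and both arms touch `P`. -/
def IsMinWedge (P : Set Plane) (ω : ℝ) (x d₁ d₂ : Plane) : Prop :=
  ‖d₁‖ = 1 ∧ ‖d₂‖ = 1 ∧ InnerProductGeometry.angle d₁ d₂ = ω ∧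
  P ⊆ wedgeSet x d₁ d₂ ∧ (P ∩ ray x d₁).Nonempty ∧ (P ∩ ray x d₂).Nonempty

/-- The `ω`-cloud of `P`: the locus of apices of all minimal `ω`-wedges. -/
def omegaCloud (P : Set Plane) (ω : ℝ) : Set Plane := {x | ∃ d₁ d₂, IsMinWedge P ω x d₁ d₂}

/-- `V` is the vertex set of a convex polygon: at least 3 points, in strictly convex position. -/
def IsConvexPolygon (V : Finset Plane) : Prop :=
  3 ≤ V.card ∧ ∀ v ∈ V, v ∉ convexHull ℝ ((V.erase v : Finset Plane) : Set Plane)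

/-- The interior angle of a convex body `P` at a boundary point `v`, defined as the
supremum of angles `∠ a v b` over `a, b ∈ P \ {v}`. -/
def interiorAngle (P : Set Plane) (v : Plane) : ℝ :=
  sSup {θ : ℝ | ∃ a ∈ P, ∃ b ∈ P, a ≠ v ∧ b ≠ v ∧ θ = EuclideanGeometry.angle a v b}

/-- A circular arc, given by center, radius, starting angle and angular extent. -/
structure CircArc where
  center : Plane
  radius : ℝ
  start : ℝ
  delta : ℝ

/-- The (closed) point set of a circular arc. -/
def CircArc.points (A : CircArc) : Set Plane :=
  {p | ∃ θ ∈ Set.Icc A.start (A.start + A.delta), p = A.center + A.radius • unitVec θ}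

/-- The relative interior of a circular arc. -/
def CircArc.intPoints (A : CircArc) : Set Plane :=
  {p | ∃ θ ∈ Set.Ioo A.start (A.start + A.delta), p = A.center + A.radius • unitVec θ}

/-- The start point of an arc when it is traversed clockwise. -/
def CircArc.cwStart (A : CircArc) : Plane := A.center + A.radius • unitVec (A.start + A.delta)

/-- The end point of an arc when it is traversed clockwise. -/
def CircArc.cwEnd (A : CircArc) : Plane := A.center + A.radius • unitVec A.start

/-- The set of (bisector) directions of minimal `ω`-wedges of `P` with apex `x`. -/
def wedgeDirs (P : Set Plane) (ω : ℝ) (x : Plane) : Set Plane :=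
  {d | ∃ d₁ d₂, IsMinWedge P ω x d₁ d₂ ∧ d = (‖d₁ + d₂‖)⁻¹ • (d₁ + d₂)}

/-- On every interior point of the arc `A`, the minimal `ω`-wedge of `P` touches `P`
at `p` (with one arm) and `q` (with the other arm). -/
def ContactPair (P : Set Plane) (ω : ℝ) (A : CircArc) (p q : Plane) : Prop :=
  ∀ x ∈ A.intPoints, ∃ d₁ d₂, IsMinWedge P ω x d₁ d₂ ∧ p ∈ ray x d₁ ∧ q ∈ ray x d₂

/-!
Turn a wedge of angle `ω` around a polygon, so that the outward normals of its arms have directions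
`θ` and `θ + α`, where `α = π - ω`. Its apex traces the cloud, and the support function of the
polygon, hence the polygon, can be read off the apex as a function of `θ`. So the point is to
recover from the trace of the apex its parametrization. While the arms touch the polygon at two
fixed points, the apex moves along a circle at angular speed `2`. When it reaches a vertex that both
arms touch, it rests there until one arm leaves the vertex, and then departs.

Let two polygons have the same cloud. On every arc the two apexes move at the same speed, so they
differ there by a constant phase.

* If neither apex ever rests, the phase `δ` is the same all the way around, and averaging the apex
  against `exp (-iθ)` shows that `exp (iδ) = 1`: the average is a fixed complex number times the
  mean of the support function, which is positive.
* If they are once on the same arc with phase `0`, they agree from then on. Indeed, if one of them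
  rested and the other did not, both would depart from the same vertex, and departures from a given
  vertex along a given arc occur at the same parameter.
* Otherwise let one apex rest, and follow it from its departure at `θ`. The other one is behind by a
  phase `ε` in `(0, α)`, and comes to rest when the first has turned by `α - ε`. The same holds
  after the departure of the other one, with the roles exchanged, and together these two legs make
  up a turn by exactly `α`, at whose end the first apex rests and from which it departs along the
  same circle. So the cloud is this circle.
-/

namespace OmegaCloud

open Complex (I)
open Filter
open scoped ComplexConjugate Topology

/-! ### Directions and heights -/

/-- The unit vector at angle `θ`. -/
def dir (θ : ℝ) : ℂ := Complex.exp (θ * I)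

lemma dir_re (θ : ℝ) : (dir θ).re = Real.cos θ := Complex.exp_ofReal_mul_I_re θ

lemma dir_im (θ : ℝ) : (dir θ).im = Real.sin θ := Complex.exp_ofReal_mul_I_im θ

lemma dir_eq_cos_add_sin_mul_I (θ : ℝ) : dir θ = Real.cos θ + Real.sin θ * I := by
  rw [dir, Complex.exp_mul_I, Complex.ofReal_cos, Complex.ofReal_sin]

lemma dir_add (a b : ℝ) : dir (a + b) = dir a * dir b := by
  rw [dir, dir, dir, Complex.ofReal_add, add_mul, Complex.exp_add]

@[simp] lemma dir_zero : dir 0 = 1 := by simp [dir]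

@[simp] lemma dir_pi : dir π = -1 := Complex.exp_pi_mul_I

lemma dir_two_pi : dir (2 * π) = 1 := by rw [two_mul, dir_add, dir_pi]; norm_num

lemma dir_ne_zero (θ : ℝ) : dir θ ≠ 0 := Complex.exp_ne_zero _

lemma norm_dir (θ : ℝ) : ‖dir θ‖ = 1 := Complex.norm_exp_ofReal_mul_I θ

lemma dir_neg_mul_dir (θ : ℝ) : dir (-θ) * dir θ = 1 := by rw [← dir_add]; simp

lemma dir_sub_mul_dir (a b : ℝ) : dir (a - b) * dir b = dir a := by
  rw [← dir_add, sub_add_cancel]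

lemma continuous_dir : Continuous dir := by unfold dir; fun_prop

lemma exists_dir_eq {z : ℂ} (hz : ‖z‖ = 1) : ∃ θ, dir θ = z := (Complex.norm_eq_one_iff z).1 hz

lemma ofReal_cos_eq (θ : ℝ) : (Real.cos θ : ℂ) = (dir θ + dir (-θ)) / 2 := by
  simp only [dir_eq_cos_add_sin_mul_I, Real.cos_neg, Real.sin_neg, Complex.ofReal_neg]; ring

lemma ofReal_sin_eq (θ : ℝ) : (Real.sin θ : ℂ) = -I * (dir θ - dir (-θ)) / 2 := by
  simp only [dir_eq_cos_add_sin_mul_I, Real.cos_neg, Real.sin_neg, Complex.ofReal_neg]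
  linear_combination (Real.sin θ : ℂ) * Complex.I_mul_I

lemma dir_add_congr {a b : ℝ} (h : dir a = dir b) (t : ℝ) : dir (a + t) = dir (b + t) := by
  rw [dir_add, dir_add, h]

lemma eq_of_dir_eq {a b : ℝ} (h : dir a = dir b) (hab : |a - b| < 2 * π) : a = b := by
  have hcos : Real.cos (a - b) = 1 := by
    rw [← dir_re, sub_eq_add_neg, dir_add, h, mul_comm, dir_neg_mul_dir, Complex.one_re]
  exact sub_eq_zero.1 ((Real.cos_eq_one_iff_of_lt_of_lt (abs_lt.1 hab).1 (abs_lt.1 hab).2).1 hcos)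

lemma periodic_dir : Function.Periodic dir (2 * π) := fun θ => by
  rw [dir_add, dir_two_pi, mul_one]

lemma exists_mem_Ico_dir_eq (a θ : ℝ) : ∃ s ∈ Ico a (a + 2 * π), dir s = dir θ :=
  let ⟨s, hs, h⟩ := periodic_dir.exists_mem_Ico Real.two_pi_pos θ a
  ⟨s, hs, h.symm⟩

/-- The height of a point in direction `θ`: its inner product with the unit vector `dir θ`. -/
def height (θ : ℝ) : ℂ →L[ℝ] ℝ := innerSL ℝ (dir θ)

lemma height_apply (θ : ℝ) (v : ℂ) :
    height θ v = v.re * Real.cos θ + v.im * Real.sin θ := by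
  rw [height, innerSL_apply_apply, Complex.inner, ← dir_re, ← dir_im]
  simp only [Complex.mul_re, Complex.conj_re, Complex.conj_im]
  ring

lemma height_congr {a b : ℝ} (h : dir a = dir b) : height a = height b := by
  rw [height, height, h]

lemma continuous_height_left (v : ℂ) : Continuous fun θ => height θ v := by
  simp only [height_apply]; fun_prop

lemma height_mul_I_mul_dir (b φ ψ : ℝ) : height ψ (b * I * dir φ) = b * Real.sin (ψ - φ) := by
  simp only [height_apply, Complex.mul_re, Complex.mul_im, Complex.I_re, Complex.I_im,
    Complex.ofReal_re, Complex.ofReal_im, dir_re, dir_im, Real.sin_sub]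
  ring

lemma sin_sub_mul_height (a b s : ℝ) (v : ℂ) :
    Real.sin (b - a) * height s v =
      Real.sin (b - s) * height a v + Real.sin (s - a) * height b v := by
  simp only [height_apply, Real.sin_sub]
  ring

lemma eq_of_height_eq {a b : ℝ} (hab : Real.sin (b - a) ≠ 0) {x y : ℂ}
    (ha : height a x = height a y) (hb : height b x = height b y) : x = y := by
  have agree (s : ℝ) : height s x = height s y := mul_left_cancel₀ hab <| by
    rw [sin_sub_mul_height a b, sin_sub_mul_height a b, ha, hb]
  apply Complex.ext
  · simpa [height_apply] using agree 0
  · simpa [height_apply] using agree (π / 2)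

lemma exists_eq_add_of_height_eq {x y : ℂ} {θ : ℝ} (h : height θ x = height θ y) :
    ∃ l : ℝ, x = y + l * I * dir θ := by
  refine ⟨height (θ + π / 2) (x - y), eq_of_height_eq (a := θ) (b := θ + π / 2) (by simp) ?_ ?_⟩
  · simp only [map_add, height_mul_I_mul_dir, h, sub_self, Real.sin_zero, mul_zero, add_zero]
  · simp only [map_add, map_sub, height_mul_I_mul_dir, add_sub_cancel_left, Real.sin_pi_div_two]
    ring

/-! ### Support function and contact points -/

section Support

variable {V : Finset ℂ} {v w : ℂ} {a b s θ : ℝ}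

/-- The support function of `V`, and hence of its convex hull (`0` if `V` is empty). -/
def support (V : Finset ℂ) (θ : ℝ) : ℝ := ⨆ v : V, height θ v

lemma support_congr (h : dir a = dir b) : support V a = support V b := by
  rw [support, support, height_congr h]

lemma height_le_support (hv : v ∈ V) (θ : ℝ) : height θ v ≤ support V θ :=
  le_ciSup (f := fun v : V => height θ v) (Set.finite_range _).bddAbove ⟨v, hv⟩

lemma continuous_support (hV : V.Nonempty) : Continuous (support V) := by
  have := hV.to_subtype
  have hsup : support V = fun θ => Finset.univ.sup' Finset.univ_nonempty fun v : V => height θ v :=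
    funext fun θ => (Finset.sup'_univ_eq_ciSup _).symm
  rw [hsup]
  exact Continuous.finset_sup'_apply _ fun v _ => continuous_height_left v

/-- `v` is a point of `V` on the supporting line of `V` with outer normal `dir θ`. -/
def IsExtremal (V : Finset ℂ) (θ : ℝ) (v : ℂ) : Prop := v ∈ V ∧ height θ v = support V θ

lemma exists_isExtremal (hV : V.Nonempty) (θ : ℝ) : ∃ v, IsExtremal V θ v := by
  have := hV.to_subtype
  obtain ⟨v, hv⟩ := exists_eq_ciSup_of_finite (f := fun v : V => height θ v)
  exact ⟨v, v.2, hv⟩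

lemma isExtremal_congr (h : dir a = dir b) : IsExtremal V a v ↔ IsExtremal V b v := by
  rw [IsExtremal, IsExtremal, height_congr h, support_congr h]

lemma isClosed_setOf_isExtremal (hV : V.Nonempty) (v : ℂ) : IsClosed {θ | IsExtremal V θ v} :=
  isClosed_const.and (isClosed_eq (continuous_height_left v) (continuous_support hV))

lemma IsExtremal.eq_of_sin_ne_zero (hab : Real.sin (b - a) ≠ 0) (hva : IsExtremal V a v)
    (hvb : IsExtremal V b v) (hwa : IsExtremal V a w) (hwb : IsExtremal V b w) : v = w :=
  eq_of_height_eq hab (hva.2.trans hwa.2.symm) (hvb.2.trans hwb.2.symm)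

lemma IsExtremal.of_mem_Icc (ha : IsExtremal V a v) (hb : IsExtremal V b v) (hab : b < a + π)
    (hs : s ∈ Icc a b) : IsExtremal V s v := by
  rcases hs.1.eq_or_lt with rfl | has
  · exact ha
  obtain ⟨w, hw⟩ := exists_isExtremal ⟨v, ha.1⟩ s
  refine ⟨ha.1, (height_le_support ha.1 s).antisymm ?_⟩
  have hsin : 0 < Real.sin (b - a) :=
    Real.sin_pos_of_pos_of_lt_pi (by linarith [hs.2]) (by linarith)
  have hbs : 0 ≤ Real.sin (b - s) :=
    Real.sin_nonneg_of_nonneg_of_le_pi (by linarith [hs.2]) (by linarith)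
  have hsa : 0 ≤ Real.sin (s - a) :=
    Real.sin_nonneg_of_nonneg_of_le_pi (by linarith) (by linarith [hs.2])
  rw [← hw.2, ← mul_le_mul_iff_right₀ hsin, sin_sub_mul_height a b, sin_sub_mul_height a b,
    ha.2, hb.2]
  gcongr <;> exact height_le_support hw.1 _

lemma exists_eventually_isExtremal (hV : V.Nonempty) (θ : ℝ) :
    ∃ v, ∀ᶠ t in 𝓝[≥] (0 : ℝ), IsExtremal V (θ + t) v := by
  obtain ⟨v, -, hv⟩ : ∃ v ∈ V, ∃ᶠ t in 𝓝[>] (0 : ℝ), IsExtremal V (θ + t) v := by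
    by_contra! hnone
    obtain ⟨t, ht⟩ := ((eventually_all_finset V).2 hnone).exists
    obtain ⟨v, hv⟩ := exists_isExtremal hV (θ + t)
    exact ht v hv.1 hv
  have hlim : Tendsto (θ + ·) (𝓝[>] (0 : ℝ)) (𝓝 θ) := by
    simpa using (continuous_const_add θ).tendsto' 0 _ rfl |>.mono_left nhdsWithin_le_nhds
  have hθ : IsExtremal V θ v :=
    (isClosed_setOf_isExtremal hV v).mem_of_frequently_of_tendsto hv hlim
  obtain ⟨u, hu, hu0, huπ⟩ := (hv.and_eventually (Ioo_mem_nhdsGT Real.pi_pos)).exists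
  refine ⟨v, mem_of_superset (Icc_mem_nhdsGE hu0) fun t ht => ?_⟩
  exact hθ.of_mem_Icc hu (by linarith) ⟨by linarith [ht.1], by linarith [ht.2]⟩

/-- The point of `V` that is extremal in all directions just after `θ` (arbitrary if `V` is
empty): the end, counterclockwise, of the face of the hull of `V` with outer normal `dir θ`. -/
def contact (V : Finset ℂ) (θ : ℝ) : ℂ :=
  Classical.epsilon fun v => ∀ᶠ t in 𝓝[≥] (0 : ℝ), IsExtremal V (θ + t) v

lemma contact_congr (h : dir a = dir b) : contact V a = contact V b := by
  simp only [contact, isExtremal_congr (dir_add_congr h _)]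

lemma eventually_isExtremal_contact (hV : V.Nonempty) (θ : ℝ) :
    ∀ᶠ t in 𝓝[≥] (0 : ℝ), IsExtremal V (θ + t) (contact V θ) :=
  Classical.epsilon_spec (exists_eventually_isExtremal hV θ)

lemma isExtremal_contact (hV : V.Nonempty) (θ : ℝ) : IsExtremal V θ (contact V θ) := by
  simpa using (eventually_isExtremal_contact hV θ).self_of_nhdsWithin self_mem_Ici

lemma contact_mem (hV : V.Nonempty) (θ : ℝ) : contact V θ ∈ V := (isExtremal_contact hV θ).1

lemma height_contact (hV : V.Nonempty) (θ : ℝ) : height θ (contact V θ) = support V θ :=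
  (isExtremal_contact hV θ).2

lemma contact_eq_of_isExtremal (ha : IsExtremal V a v) (hb : IsExtremal V b v) (hab : a < b)
    (hba : b < a + π) : contact V a = v := by
  have hV : V.Nonempty := ⟨v, ha.1⟩
  obtain ⟨t, ht, ht0, htb⟩ := (((eventually_isExtremal_contact hV a).filter_mono
    (nhdsWithin_mono _ Ioi_subset_Ici_self)).and (Ioo_mem_nhdsGT (sub_pos.2 hab))).exists
  have hsin : Real.sin (a + t - a) ≠ 0 := by
    rw [add_sub_cancel_left]
    exact (Real.sin_pos_of_pos_of_lt_pi ht0 (by linarith)).ne'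
  exact IsExtremal.eq_of_sin_ne_zero hsin (isExtremal_contact hV a) ht ha
    (ha.of_mem_Icc hb hba ⟨by linarith, by linarith⟩)

lemma eventually_contact_add_eq (hV : V.Nonempty) (θ : ℝ) :
    ∀ᶠ t in 𝓝[≥] (0 : ℝ), contact V (θ + t) = contact V θ := by
  have hev := (eventually_isExtremal_contact hV θ).and
    (nhdsWithin_le_nhds (gt_mem_nhds Real.pi_pos))
  obtain ⟨u, hu0, hu⟩ := mem_nhdsGE_iff_exists_Icc_subset.1 hev
  have huu := hu (right_mem_Icc.2 hu0.le)
  refine mem_of_superset (Ico_mem_nhdsGE hu0) fun t ht => ?_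
  exact contact_eq_of_isExtremal (hu (Ico_subset_Icc_self ht)).1 huu.1
    (by linarith [ht.2]) (by linarith [ht.1, huu.2])

lemma IsExtremal.exists_contact_eq_add (hv : IsExtremal V θ v) :
    ∃ l : ℝ, 0 ≤ l ∧ contact V θ = v + l * I * dir θ := by
  have hV : V.Nonempty := ⟨v, hv.1⟩
  obtain ⟨l, hl⟩ := exists_eq_add_of_height_eq ((height_contact hV θ).trans hv.2.symm)
  refine ⟨l, ?_, hl⟩
  obtain ⟨t, ht, ht0, htπ⟩ := (((eventually_isExtremal_contact hV θ).filter_mono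
    (nhdsWithin_mono _ Ioi_subset_Ici_self)).and (Ioo_mem_nhdsGT Real.pi_pos)).exists
  have hle : height (θ + t) v ≤ height (θ + t) (contact V θ) :=
    (height_le_support hv.1 _).trans_eq ht.2.symm
  rw [hl, map_add, height_mul_I_mul_dir, add_sub_cancel_left, le_add_iff_nonneg_right] at hle
  exact nonneg_of_mul_nonneg_left hle (Real.sin_pos_of_pos_of_lt_pi ht0 htπ)

lemma le_add_pi_of_forall_isExtremal (hV : V.Nontrivial) (hv : ∀ s ∈ Icc a b, IsExtremal V s v) :
    b ≤ a + π := by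
  by_contra! hab
  have hπ := Real.pi_pos
  obtain ⟨w, hw, hwv⟩ := hV.exists_ne v
  have hle (s : ℝ) (hs : s ∈ Icc a b) : height s w ≤ height s v :=
    (height_le_support hw s).trans_eq (hv s hs).2.symm
  have hflip (s : ℝ) (x : ℂ) : height (s + π) x = -height s x := by
    simp only [height_apply, Real.cos_add_pi, Real.sin_add_pi]; ring
  have hwa : height a w = height a v := by
    have h1 := hle a ⟨le_rfl, by linarith⟩
    have h2 := hle (a + π) ⟨by linarith, by linarith⟩
    rw [hflip, hflip] at h2
    linarith
  obtain ⟨t, ht0, ht⟩ := exists_between (lt_min (sub_pos.2 hab) hπ)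
  rw [lt_min_iff] at ht
  have hwt : height (a + t) w = height (a + t) v := by
    have h1 := hle (a + t) ⟨by linarith, by linarith⟩
    have h2 := hle (a + t + π) ⟨by linarith, by linarith⟩
    rw [hflip, hflip] at h2
    linarith
  refine hwv (eq_of_height_eq (a := a) (b := a + t) ?_ hwa hwt)
  rw [add_sub_cancel_left]
  exact (Real.sin_pos_of_pos_of_lt_pi ht0 ht.2).ne'

end Support

/-! ### Wedge apices -/

section Apex

variable {V : Finset ℂ} {α a b t s θ : ℝ} {p q x y : ℂ}

/-- The intersection point of the lines `height θ · = a` and `height (θ + α) · = b`. -/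
def lineMeet (α a b θ : ℝ) : ℂ := (a + ((b - a * Real.cos α) / Real.sin α : ℝ) * I) * dir θ

lemma height_add_mul_I_mul_dir (a b θ t : ℝ) :
    height (θ + t) ((a + b * I) * dir θ) = a * Real.cos t + b * Real.sin t := by
  simp only [height_apply, Complex.mul_re, Complex.mul_im, Complex.add_re, Complex.add_im,
    Complex.I_re, Complex.I_im, Complex.ofReal_re, Complex.ofReal_im, dir_re, dir_im,
    Real.cos_add, Real.sin_add]
  linear_combination (a * Real.cos t + b * Real.sin t) * Real.sin_sq_add_cos_sq θ

lemma height_lineMeet_left (α a b θ : ℝ) : height θ (lineMeet α a b θ) = a := by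
  have h := height_add_mul_I_mul_dir a ((b - a * Real.cos α) / Real.sin α) θ 0
  rwa [add_zero, Real.cos_zero, Real.sin_zero, mul_one, mul_zero, add_zero] at h

lemma height_lineMeet_right (hα : α ∈ Ioo 0 π) (a b θ : ℝ) :
    height (θ + α) (lineMeet α a b θ) = b := by
  have hsin := (Real.sin_pos_of_mem_Ioo hα).ne'
  rw [lineMeet, height_add_mul_I_mul_dir]
  field_simp
  ring

lemma eq_of_height_eq_of_height_add_eq (hα : α ∈ Ioo 0 π) (h₁ : height θ x = height θ y)
    (h₂ : height (θ + α) x = height (θ + α) y) : x = y :=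
  eq_of_height_eq (by rw [add_sub_cancel_left]; exact (Real.sin_pos_of_mem_Ioo hα).ne') h₁ h₂

/-- The apex of the wedge containing `V` whose arms have outer normals `dir θ` and
`dir (θ + α)` and touch `V`; its angle is `π - α`. -/
def apex (V : Finset ℂ) (α θ : ℝ) : ℂ := lineMeet α (support V θ) (support V (θ + α)) θ

lemma height_apex (V : Finset ℂ) (α θ : ℝ) : height θ (apex V α θ) = support V θ :=
  height_lineMeet_left ..

lemma height_add_apex (hα : α ∈ Ioo 0 π) (V : Finset ℂ) (θ : ℝ) :
    height (θ + α) (apex V α θ) = support V (θ + α) :=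
  height_lineMeet_right hα ..

lemma apex_eq_of_height_eq (hα : α ∈ Ioo 0 π) (h₁ : height θ x = support V θ)
    (h₂ : height (θ + α) x = support V (θ + α)) : apex V α θ = x :=
  eq_of_height_eq_of_height_add_eq hα ((height_apex V α θ).trans h₁.symm)
    ((height_add_apex hα V θ).trans h₂.symm)

lemma continuous_apex (hV : V.Nonempty) (α : ℝ) : Continuous (apex V α) := by
  have := continuous_support hV
  have := continuous_dir
  unfold apex lineMeet
  fun_prop

lemma apex_congr (h : dir a = dir b) : apex V α a = apex V α b := by
  rw [apex, apex, lineMeet, lineMeet, h, support_congr h, support_congr (dir_add_congr h α)]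

/-- While its arms slide along `p` and `q`, the apex of a wedge of angle `π - α` moves on a
circle (inscribed angle theorem); this is its center. -/
def arcCenter (α : ℝ) (p q : ℂ) : ℂ := I * (dir (-α) * q - dir α * p) / (2 * Real.sin α)

/-- The vector from the center of the circle `arcCenter α p q` to the apex of the wedge
with outer normals `dir 0` and `dir α`. -/
def arcSpoke (α : ℝ) (p q : ℂ) : ℂ := I * dir α * conj (q - p) / (2 * Real.sin α)

lemma ofReal_sin_ne_zero (hα : α ∈ Ioo 0 π) : (Real.sin α : ℂ) ≠ 0 :=
  Complex.ofReal_ne_zero.2 (Real.sin_pos_of_mem_Ioo hα).ne'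

lemma conj_dir (θ : ℝ) : conj (dir θ) = dir (-θ) := by
  apply Complex.ext <;> simp [dir_re, dir_im]

lemma ofReal_height (θ : ℝ) (v : ℂ) :
    (height θ v : ℂ) = (v * dir (-θ) + conj v * dir θ) / 2 := by
  have hre : height θ v = (v * dir (-θ)).re := by
    rw [height_apply, Complex.mul_re, dir_re, dir_im, Real.cos_neg, Real.sin_neg]; ring
  rw [hre, Complex.re_eq_add_conj, map_mul, conj_dir, neg_neg]

lemma lineMeet_height_eq (hα : α ∈ Ioo 0 π) (p q : ℂ) (θ : ℝ) :
    lineMeet α (height θ p) (height (θ + α) q) θ =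
      arcCenter α p q + arcSpoke α p q * dir (2 * θ) := by
  have hsin := ofReal_sin_ne_zero hα
  simp only [lineMeet, arcCenter, arcSpoke, Complex.ofReal_div, Complex.ofReal_sub,
    Complex.ofReal_mul, ofReal_height, neg_add, dir_add, two_mul θ, map_sub]
  field_simp
  linear_combination dir θ * (p * dir (-θ) + conj p * dir θ) * ofReal_sin_eq α -
    I * dir θ * (p * dir (-θ) + conj p * dir θ) * ofReal_cos_eq α +
    I * (q * dir (-α) - dir α * p) * dir_neg_mul_dir θ

lemma apex_eq_of_isExtremal (hα : α ∈ Ioo 0 π) (hp : IsExtremal V θ p)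
    (hq : IsExtremal V (θ + α) q) :
    apex V α θ = arcCenter α p q + arcSpoke α p q * dir (2 * θ) := by
  rw [apex, ← hp.2, ← hq.2, lineMeet_height_eq hα]

end Apex

/-! ### Arcs of the apex curve -/

section Arcs

variable {V : Finset ℂ} {α a b t s θ : ℝ} {x : ℂ}

lemma arcCenter_self (hα : α ∈ Ioo 0 π) (x : ℂ) : arcCenter α x x = x := by
  have hsin := ofReal_sin_ne_zero hα
  rw [arcCenter]
  field_simp
  rw [ofReal_sin_eq]
  ring

lemma arcCenter_add_mul_I_mul_dir (hα : α ∈ Ioo 0 π) (p q : ℂ) (m l θ : ℝ) :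
    arcCenter α (p + m * I * dir θ) (q + l * I * dir (θ + α)) =
      arcCenter α p q - dir θ * (l - m * dir α) / (2 * Real.sin α) := by
  have hsin := ofReal_sin_ne_zero hα
  simp only [arcCenter, dir_add]
  field_simp
  linear_combination dir θ * (l * dir (-α) * dir α - m * dir α) * Complex.I_mul_I -
    dir θ * l * dir_neg_mul_dir α

lemma arcSpoke_ne_zero (hα : α ∈ Ioo 0 π) {p q : ℂ} (hpq : p ≠ q) : arcSpoke α p q ≠ 0 :=
  div_ne_zero (mul_ne_zero (mul_ne_zero Complex.I_ne_zero (dir_ne_zero α))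
    ((map_ne_zero _).2 (sub_ne_zero.2 hpq.symm))) (mul_ne_zero two_ne_zero (ofReal_sin_ne_zero hα))

/-- The center of the arc traced by the apex of `V` just after `θ`. -/
def center (V : Finset ℂ) (α θ : ℝ) : ℂ := arcCenter α (contact V θ) (contact V (θ + α))

/-- The arms of the wedge touch `V` at different points just after `θ`, so its apex is moving. -/
def IsMoving (V : Finset ℂ) (α θ : ℝ) : Prop := contact V θ ≠ contact V (θ + α)

/-- The position, at parameter `θ + t`, of the apex of the wedge whose arms keep sliding along
the two points they touch just after `θ`. -/
def sweep (V : Finset ℂ) (α θ t : ℝ) : ℂ :=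
  center V α θ + dir (2 * t) * (apex V α θ - center V α θ)

lemma center_congr (h : dir a = dir b) : center V α a = center V α b := by
  rw [center, center, contact_congr h, contact_congr (dir_add_congr h α)]

lemma isMoving_congr (h : dir a = dir b) : IsMoving V α a ↔ IsMoving V α b := by
  rw [IsMoving, IsMoving, contact_congr h, contact_congr (dir_add_congr h α)]

@[simp] lemma sweep_zero (V : Finset ℂ) (α θ : ℝ) : sweep V α θ 0 = apex V α θ := by simp [sweep]

lemma continuous_sweep (V : Finset ℂ) (α θ : ℝ) : Continuous (sweep V α θ) := by
  have := continuous_dir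
  unfold sweep
  fun_prop

lemma apex_sub_center (hα : α ∈ Ioo 0 π) (hV : V.Nonempty) (θ : ℝ) :
    apex V α θ - center V α θ = arcSpoke α (contact V θ) (contact V (θ + α)) * dir (2 * θ) := by
  rw [apex_eq_of_isExtremal hα (isExtremal_contact hV θ) (isExtremal_contact hV (θ + α)), center,
    add_sub_cancel_left]

lemma IsMoving.apex_sub_center_ne_zero (hα : α ∈ Ioo 0 π) (hV : V.Nonempty)
    (hθ : IsMoving V α θ) : apex V α θ - center V α θ ≠ 0 := by
  rw [apex_sub_center hα hV]
  exact mul_ne_zero (arcSpoke_ne_zero hα hθ) (dir_ne_zero _)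

lemma sweep_eq_lineMeet (hα : α ∈ Ioo 0 π) (hV : V.Nonempty) (θ t : ℝ) :
    sweep V α θ t = lineMeet α (height (θ + t) (contact V θ))
      (height (θ + t + α) (contact V (θ + α))) (θ + t) := by
  rw [lineMeet_height_eq hα, sweep, apex_sub_center hα hV, mul_add 2, dir_add, center]
  ring

lemma height_sweep (hα : α ∈ Ioo 0 π) (hV : V.Nonempty) (θ t : ℝ) :
    height (θ + t) (sweep V α θ t) = height (θ + t) (contact V θ) := by
  rw [sweep_eq_lineMeet hα hV, height_lineMeet_left]

lemma height_add_sweep (hα : α ∈ Ioo 0 π) (hV : V.Nonempty) (θ t : ℝ) :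
    height (θ + t + α) (sweep V α θ t) = height (θ + t + α) (contact V (θ + α)) := by
  rw [sweep_eq_lineMeet hα hV, height_lineMeet_right hα]

lemma apex_add_eq_sweep (hα : α ∈ Ioo 0 π) (hV : V.Nonempty)
    (h₁ : IsExtremal V (θ + t) (contact V θ))
    (h₂ : IsExtremal V (θ + t + α) (contact V (θ + α))) : apex V α (θ + t) = sweep V α θ t := by
  rw [sweep_eq_lineMeet hα hV, apex, h₁.2, h₂.2]

lemma eventually_apex_add_eq_sweep (hα : α ∈ Ioo 0 π) (hV : V.Nonempty) (θ : ℝ) :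
    ∀ᶠ t in 𝓝[≥] (0 : ℝ), apex V α (θ + t) = sweep V α θ t := by
  filter_upwards [eventually_isExtremal_contact hV θ, eventually_isExtremal_contact hV (θ + α)]
    with t h₁ h₂
  exact apex_add_eq_sweep hα hV h₁ (by rwa [add_right_comm])

lemma IsMoving.sweep_inj (hα : α ∈ Ioo 0 π) (hV : V.Nonempty) (hθ : IsMoving V α θ)
    (hts : |t - s| < π) (h : sweep V α θ t = sweep V α θ s) : t = s := by
  have hdir : dir (2 * t) = dir (2 * s) :=
    mul_right_cancel₀ (hθ.apex_sub_center_ne_zero hα hV) (add_left_cancel h)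
  have h2 : 2 * t = 2 * s := eq_of_dir_eq hdir (by
    rw [← mul_sub, abs_mul, abs_two]; linarith)
  linarith

lemma contact_eq_of_apex_eq (hα : α ∈ Ioo 0 π) (hx : x ∈ V) (h : apex V α θ = x) :
    contact V θ = x := by
  have h₁ : IsExtremal V θ x := ⟨hx, by rw [← h, height_apex]⟩
  have h₂ : IsExtremal V (θ + α) x := ⟨hx, by rw [← h, height_add_apex hα]⟩
  exact contact_eq_of_isExtremal h₁ h₂ (by linarith [hα.1]) (by linarith [hα.2])

lemma exists_contact_eq_apex_sub (hα : α ∈ Ioo 0 π) (hV : V.Nonempty) (θ : ℝ) :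
    ∃ l : ℝ, 0 ≤ l ∧ contact V θ = apex V α θ - l * I * dir θ := by
  obtain ⟨l, hl⟩ :=
    exists_eq_add_of_height_eq ((height_contact hV θ).trans (height_apex V α θ).symm)
  refine ⟨-l, ?_, by rw [hl, Complex.ofReal_neg]; ring⟩
  have hle := height_le_support (contact_mem hV θ) (θ + α)
  rw [hl, map_add, height_mul_I_mul_dir, height_add_apex hα, add_sub_cancel_left,
    add_le_iff_nonpos_right] at hle
  exact neg_nonneg.2 (nonpos_of_mul_nonpos_left hle (Real.sin_pos_of_mem_Ioo hα))

lemma exists_contact_add_eq_apex_add (hα : α ∈ Ioo 0 π) (hV : V.Nonempty) (θ : ℝ) :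
    ∃ l : ℝ, 0 ≤ l ∧ contact V (θ + α) = apex V α θ + l * I * dir (θ + α) := by
  obtain ⟨l, hl⟩ :=
    exists_eq_add_of_height_eq ((height_contact hV (θ + α)).trans (height_add_apex hα V θ).symm)
  refine ⟨l, ?_, hl⟩
  have hle := height_le_support (contact_mem hV (θ + α)) θ
  rw [hl, map_add, height_mul_I_mul_dir, height_apex, sub_add_cancel_left, Real.sin_neg,
    add_le_iff_nonpos_right, mul_neg, neg_nonpos] at hle
  exact nonneg_of_mul_nonneg_left hle (Real.sin_pos_of_mem_Ioo hα)

lemma IsMoving.exists_contact_add_eq_apex_add (hα : α ∈ Ioo 0 π) (hV : V.Nonempty)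
    (hθ : IsMoving V α θ) :
    ∃ l : ℝ, 0 < l ∧ contact V (θ + α) = apex V α θ + l * I * dir (θ + α) := by
  obtain ⟨l, hl₀, hl⟩ := OmegaCloud.exists_contact_add_eq_apex_add hα hV θ
  refine ⟨l, hl₀.lt_of_ne ?_, hl⟩
  rintro rfl
  rw [Complex.ofReal_zero, zero_mul, zero_mul, add_zero] at hl
  exact hθ ((contact_eq_of_apex_eq hα (contact_mem hV _) hl.symm))

lemma center_eq_apex_sub (hα : α ∈ Ioo 0 π) {k l : ℝ}
    (hk : contact V θ = apex V α θ - k * I * dir θ)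
    (hl : contact V (θ + α) = apex V α θ + l * I * dir (θ + α)) :
    center V α θ = apex V α θ - dir θ * (l + k * dir α) / (2 * Real.sin α) := by
  have h := arcCenter_add_mul_I_mul_dir hα (apex V α θ) (apex V α θ) (-k) l θ
  rw [arcCenter_self hα, Complex.ofReal_neg, neg_mul, neg_mul, neg_mul, ← sub_eq_add_neg,
    sub_neg_eq_add, ← hk, ← hl] at h
  exact h

end Arcs

/-! ### Matching the arcs of two apex curves -/

section Matching

variable {V V' : Finset ℂ} {α θ θ' : ℝ}

/-- Just after `θ` the apex of `V` and just after `θ'` the apex of `V'` trace the same arc, at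
the same speed. -/
structure SameSweep (V V' : Finset ℂ) (α θ θ' : ℝ) : Prop where
  isMoving_left : IsMoving V α θ
  isMoving_right : IsMoving V' α θ'
  apex_eq : apex V' α θ' = apex V α θ
  center_eq : center V' α θ' = center V α θ

lemma SameSweep.symm (h : SameSweep V V' α θ θ') : SameSweep V' V α θ' θ :=
  ⟨h.isMoving_right, h.isMoving_left, h.apex_eq.symm, h.center_eq.symm⟩

lemma SameSweep.sweep_eq (h : SameSweep V V' α θ θ') : sweep V' α θ' = sweep V α θ := by
  funext t
  rw [sweep, sweep, h.apex_eq, h.center_eq]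

lemma SameSweep.congr_left {a b : ℝ} (hab : dir a = dir b) (h : SameSweep V V' α a θ') :
    SameSweep V V' α b θ' :=
  ⟨(isMoving_congr hab).1 h.isMoving_left, h.isMoving_right, h.apex_eq.trans (apex_congr hab),
    h.center_eq.trans (center_congr hab)⟩

lemma eq_of_frequently_mem_sphere {c c' z : ℂ} {r : ℝ} (hz : z ≠ 0)
    (h : ∃ᶠ t in 𝓝[>] (0 : ℝ), c + dir (2 * t) * z ∈ Metric.sphere c' r) : c = c' := by
  by_contra hne
  have hfar (u : ℝ) (hu : 0 < u) :
      ∃ t, c + dir (2 * t) * z ∈ Metric.sphere c' r ∧ t ∈ Ioo 0 u :=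
    (h.and_eventually (Ioo_mem_nhdsGT hu)).exists
  obtain ⟨t₁, h₁, hpos₁, hlt₁⟩ := hfar π Real.pi_pos
  obtain ⟨t₂, h₂, hpos₂, hlt₂⟩ := hfar t₁ hpos₁
  obtain ⟨t₃, h₃, hpos₃, hlt₃⟩ := hfar t₂ hpos₂
  have hinj {s t : ℝ} (hs : s ∈ Ioo 0 π) (ht : t ∈ Ioo 0 π)
      (hst : c + dir (2 * s) * z = c + dir (2 * t) * z) : s = t := by
    have := eq_of_dir_eq (mul_right_cancel₀ hz (add_left_cancel hst))
      (abs_lt.2 ⟨by linarith [hs.1, ht.2], by linarith [hs.2, ht.1]⟩)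
    linarith
  have hcircle (t : ℝ) : dist (c + dir (2 * t) * z) c = ‖z‖ := by
    rw [dist_self_add_left, norm_mul, norm_dir, one_mul]
  rcases EuclideanGeometry.eq_of_dist_eq_of_dist_eq_of_finrank_eq_two Complex.finrank_real_complex
    hne (fun h₁₂ => hlt₂.ne (hinj ⟨hpos₂, by linarith⟩ ⟨hpos₁, hlt₁⟩ h₁₂.symm))
    (hcircle t₁) (hcircle t₂) (hcircle t₃) h₁ h₂ h₃ with h₃₁ | h₃₂
  · exact (hlt₃.trans hlt₂).ne (hinj ⟨hpos₃, by linarith⟩ ⟨hpos₁, hlt₁⟩ h₃₁)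
  · exact hlt₃.ne (hinj ⟨hpos₃, by linarith⟩ ⟨hpos₂, by linarith⟩ h₃₂)

lemma dir_eq_or_dir_eq_add_pi {a b : ℝ} (h : dir (2 * a) = dir (2 * b)) :
    dir a = dir b ∨ dir a = dir (b + π) := by
  rw [dir_add, dir_pi, mul_neg_one]
  rw [two_mul, two_mul, dir_add, dir_add] at h
  exact mul_self_eq_mul_self_iff.1 h

lemma dir_eq_or_of_mul_dir_eq {ρ : ℂ} {κ s t : ℝ} (hρ : ρ ≠ 0)
    (h : dir (2 * t) * (ρ * dir (2 * κ)) = ρ * dir (2 * s)) :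
    dir s = dir (κ + t) ∨ dir s = dir (κ + π + t) := by
  rw [add_right_comm]
  refine dir_eq_or_dir_eq_add_pi (mul_left_cancel₀ hρ ?_)
  rw [← h, mul_add, dir_add]
  ring

lemma frequently_contact_of_range_subset (hα : α ∈ Ioo 0 π) (hV : V.Nonempty) (hV' : V'.Nonempty)
    (hr : range (apex V α) ⊆ range (apex V' α)) (θ : ℝ) :
    ∃ p q : ℂ, ∃ᶠ t in 𝓝[>] (0 : ℝ), ∃ s, contact V' s = p ∧ contact V' (s + α) = q ∧
      apex V' α s = sweep V α θ t := by
  by_contra! hnone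
  have hall := (eventually_all_finset (V' ×ˢ V')).2 fun pq _ => hnone pq.1 pq.2
  obtain ⟨t, ht, htV⟩ := (hall.and ((eventually_apex_add_eq_sweep hα hV θ).filter_mono
    (nhdsWithin_mono _ Ioi_subset_Ici_self))).exists
  obtain ⟨s, hs⟩ := hr ⟨θ + t, rfl⟩
  exact ht (contact V' s, contact V' (s + α))
    (Finset.mem_product.2 ⟨contact_mem hV' _, contact_mem hV' _⟩) s rfl rfl (hs.trans htV)

lemma apex_eq_of_contact_eq {p q : ℂ} {s : ℝ} (hα : α ∈ Ioo 0 π) (hV : V.Nonempty)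
    (hp : contact V s = p) (hq : contact V (s + α) = q) :
    apex V α s = arcCenter α p q + arcSpoke α p q * dir (2 * s) :=
  apex_eq_of_isExtremal hα (hp ▸ isExtremal_contact hV s) (hq ▸ isExtremal_contact hV (s + α))

lemma sameSweep_of_frequently_contact {p q : ℂ} {κ : ℝ} (hα : α ∈ Ioo 0 π) (hV : V.Nonempty)
    (hV' : V'.Nonempty) (hθ : IsMoving V α θ) (hc : center V α θ = arcCenter α p q)
    (hκ : arcSpoke α p q * dir (2 * κ) = apex V α θ - center V α θ)
    (h : ∃ᶠ t in 𝓝[>] (0 : ℝ), contact V' (κ + t) = p ∧ contact V' (κ + t + α) = q) :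
    SameSweep V V' α θ κ := by
  have hright := ((eventually_contact_add_eq hV' κ).and
    (eventually_contact_add_eq hV' (κ + α))).filter_mono (nhdsWithin_mono _ Ioi_subset_Ici_self)
  obtain ⟨t, ⟨hpt, hqt⟩, hp, hq⟩ := (h.and_eventually hright).exists
  rw [hpt] at hp
  rw [add_right_comm, hqt] at hq
  refine ⟨hθ, fun hpq => hθ.apex_sub_center_ne_zero hα hV ?_, ?_, ?_⟩
  · rw [← hκ, hp, hq, hpq, arcSpoke, sub_self, map_zero, mul_zero, zero_div, zero_mul]
  · rw [apex_eq_of_contact_eq hα hV' hp.symm hq.symm, hκ, ← hc, add_sub_cancel]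
  · rw [center, ← hp, ← hq, hc]

theorem exists_sameSweep (hα : α ∈ Ioo 0 π) (hV : V.Nonempty) (hV' : V'.Nonempty)
    (hr : range (apex V α) ⊆ range (apex V' α)) (hθ : IsMoving V α θ) :
    ∃ θ', SameSweep V V' α θ θ' := by
  obtain ⟨p, q, hpq⟩ := frequently_contact_of_range_subset hα hV hV' hr θ
  set ρ := arcSpoke α p q with hρ_def
  set z := apex V α θ - center V α θ
  have hz : z ≠ 0 := hθ.apex_sub_center_ne_zero hα hV
  have hsphere {s t : ℝ} (hp : contact V' s = p) (hq : contact V' (s + α) = q)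
      (hs : apex V' α s = sweep V α θ t) :
      center V α θ + dir (2 * t) * z = arcCenter α p q + ρ * dir (2 * s) :=
    hs.symm.trans (apex_eq_of_contact_eq hα hV' hp hq)
  have hc : center V α θ = arcCenter α p q := by
    refine eq_of_frequently_mem_sphere (r := ‖ρ‖) hz (hpq.mono ?_)
    rintro t ⟨s, hp, hq, hs⟩
    rw [hsphere hp hq hs, mem_sphere_iff_norm, add_sub_cancel_left, norm_mul, norm_dir, mul_one]
  have hspoke {s t : ℝ} (hp : contact V' s = p) (hq : contact V' (s + α) = q)
      (hs : apex V' α s = sweep V α θ t) : dir (2 * t) * z = ρ * dir (2 * s) :=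
    add_left_cancel ((hsphere hp hq hs).trans (by rw [hc]))
  obtain ⟨κ, hκ⟩ : ∃ κ, ρ * dir (2 * κ) = z := by
    obtain ⟨t, s, hp, hq, hs⟩ := hpq.exists
    refine ⟨s - t, mul_left_cancel₀ (dir_ne_zero (2 * t)) ?_⟩
    rw [hspoke hp hq hs, mul_left_comm, ← dir_add, mul_sub, add_sub_cancel]
  have hphase : ∃ᶠ t in 𝓝[>] (0 : ℝ), (contact V' (κ + t) = p ∧ contact V' (κ + t + α) = q) ∨
      (contact V' (κ + π + t) = p ∧ contact V' (κ + π + t + α) = q) := by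
    refine hpq.mono ?_
    rintro t ⟨s, rfl, rfl, hs⟩
    have hρ : ρ ≠ 0 := left_ne_zero_of_mul (hκ ▸ hz)
    refine (dir_eq_or_of_mul_dir_eq hρ (hκ ▸ hspoke rfl rfl hs)).imp (fun h => ?_) fun h => ?_
    all_goals exact ⟨contact_congr h.symm, contact_congr (dir_add_congr h.symm α)⟩
  rcases frequently_or_distrib.1 hphase with h | h
  · exact ⟨κ, sameSweep_of_frequently_contact hα hV hV' hθ hc hκ h⟩
  · refine ⟨κ + π, sameSweep_of_frequently_contact hα hV hV' hθ hc ?_ h⟩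
    rw [mul_add, dir_add, dir_two_pi, mul_one, ← hρ_def, hκ]

lemma IsMoving.sin_sub_nonpos {a b : ℝ} (hα : α ∈ Ioo 0 π) (hV : V.Nonempty)
    (ha : IsMoving V α a) (hab : apex V α a = apex V α b) :
    Real.sin (b - a) ≤ 0 ∧ Real.sin (b - a - α) ≤ 0 := by
  obtain ⟨l, hl, hcontact⟩ := ha.exists_contact_add_eq_apex_add hα hV
  have h₁ := height_le_support (contact_mem hV (a + α)) (b + α)
  have h₂ := height_le_support (contact_mem hV (a + α)) b
  rw [hcontact, hab, map_add, height_mul_I_mul_dir, height_add_apex hα, add_sub_add_right_eq_sub,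
    add_le_iff_nonpos_right] at h₁
  rw [hcontact, hab, map_add, height_mul_I_mul_dir, height_apex, ← sub_sub,
    add_le_iff_nonpos_right] at h₂
  exact ⟨nonpos_of_mul_nonpos_right h₁ hl, nonpos_of_mul_nonpos_right h₂ hl⟩

lemma IsMoving.dir_eq_of_apex_eq {a b : ℝ} (hα : α ∈ Ioo 0 π) (hV : V.Nonempty)
    (ha : IsMoving V α a) (hb : IsMoving V α b) (hab : apex V α a = apex V α b) :
    dir a = dir b := by
  obtain ⟨hba, hbaα⟩ := ha.sin_sub_nonpos hα hV hab
  obtain ⟨hab', -⟩ := hb.sin_sub_nonpos hα hV hab.symm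
  rw [← neg_sub, Real.sin_neg] at hab'
  have hsin : Real.sin (b - a) = 0 := by linarith
  have hcos : Real.cos (b - a) = 1 := by
    refine (Real.sin_eq_zero_iff_cos_eq.1 hsin).resolve_right fun hcos => ?_
    rw [Real.sin_sub, hsin, hcos] at hbaα
    linarith [Real.sin_pos_of_mem_Ioo hα]
  rw [← dir_sub_mul_dir b a, dir_eq_cos_add_sin_mul_I (b - a), hsin, hcos]
  simp

lemma SameSweep.of_apex_eq (hα : α ∈ Ioo 0 π) (hV : V.Nonempty) (hV' : V'.Nonempty)
    (hr : range (apex V α) ⊆ range (apex V' α)) (hθ : IsMoving V α θ) (hθ' : IsMoving V' α θ')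
    (h : apex V' α θ' = apex V α θ) : SameSweep V V' α θ θ' := by
  obtain ⟨κ, hκ⟩ := exists_sameSweep hα hV hV' hr hθ
  exact (hκ.symm.congr_left
    (hκ.isMoving_right.dir_eq_of_apex_eq hα hV' hθ' (hκ.apex_eq.trans h.symm))).symm

end Matching

/-! ### Rests and departures -/

section Departure

variable {V : Finset ℂ} {α θ : ℝ}

lemma eqOn_Icc_of_forall_eventually_eq {X : Type*} [TopologicalSpace X] [T2Space X] {f g : ℝ → X}
    {a b : ℝ} (hf : Continuous f) (hg : Continuous g) (ha : f a = g a)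
    (h : ∀ m ∈ Ico a b, EqOn f g (Icc a m) → ∀ᶠ t in 𝓝[≥] (0 : ℝ), f (m + t) = g (m + t)) :
    EqOn f g (Icc a b) := by
  -- For `a ≤ x` the condition defining `S` is `EqOn f g (Icc a x)`, but it is visibly closed.
  set S := {x : ℝ | ∀ y ∈ Ici a, f (min y x) = g (min y x)} with hS
  have hclosed : IsClosed S := by
    simp only [hS, ofPred_forall]
    exact isClosed_biInter fun y _ => isClosed_eq (by fun_prop) (by fun_prop)
  have hsub : Icc a b ⊆ S := by
    refine (hclosed.inter isClosed_Icc).Icc_subset_of_forall_mem_nhdsWithin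
      (fun y hy => by rw [min_eq_right hy, ha]) ?_
    rintro x ⟨hxS, hx⟩
    have hax : EqOn f g (Icc a x) := fun y hy => by simpa [hy.2] using hxS y hy.1
    obtain ⟨u, hu, hxu⟩ := mem_nhdsGE_iff_exists_Icc_subset.1 (h x hx hax)
    filter_upwards [Ioo_mem_nhdsGT (lt_add_of_pos_right x hu)] with x' hx' y hy
    rcases le_total (min y x') x with hle | hle
    · exact hax ⟨le_min hy (hx.1.trans hx'.1.le), hle⟩
    · have hmem : min y x' - x ∈ Icc 0 u :=
        ⟨sub_nonneg.2 hle, by linarith [min_le_right y x', hx'.2]⟩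
      simpa using hxu hmem
  intro y hy
  simpa using hsub hy y hy.1

/-- The apex of `V` sits at a point of `V` at `θ`, and moves off just after. -/
structure IsDeparture (V : Finset ℂ) (α θ : ℝ) : Prop where
  contact_eq_apex : contact V θ = apex V α θ
  isMoving : IsMoving V α θ

lemma exists_isDeparture (hα : α ∈ Ioo 0 π) (hV : V.Nontrivial) (hθ : ¬IsMoving V α θ) :
    ∃ θ₂ ∈ Ioo θ (θ + π), IsDeparture V α θ₂ ∧ ∀ s ∈ Icc θ θ₂, apex V α s = contact V θ := by
  have hne := hV.nonempty
  have hθα : contact V (θ + α) = contact V θ := (not_not.1 hθ).symm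
  set x := contact V θ
  have hx : x ∈ V := contact_mem hne θ
  obtain ⟨m, hm, hext, hend⟩ : ∃ m ∈ Ici θ, (∀ s ∈ Icc θ m, IsExtremal V s x) ∧
      ¬∀ᶠ t in 𝓝[≥] (0 : ℝ), IsExtremal V (m + t) x := by
    by_contra! hnone
    have hall := eqOn_Icc_of_forall_eventually_eq (f := fun s => height s x) (b := θ + 2 * π)
      (continuous_height_left x) (continuous_support hne) (height_contact hne θ)
      fun m hm hext => (hnone m hm.1 fun s hs => ⟨hx, hext hs⟩).mono fun _ ht => ht.2
    linarith [le_add_pi_of_forall_isExtremal hV fun s hs => ⟨hx, hall hs⟩, Real.pi_pos]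
  have hmπ : m ≤ θ + π := le_add_pi_of_forall_isExtremal hV hext
  have hmx : contact V m ≠ x := fun h => hend (h ▸ eventually_isExtremal_contact hne m)
  have hmα : θ + α < m := by
    by_contra! hle
    rcases hle.eq_or_lt with rfl | hlt
    · exact hmx hθα
    · exact hmx (contact_eq_of_isExtremal (hext m ⟨hm, le_rfl⟩)
        (hθα ▸ isExtremal_contact hne (θ + α)) hlt (by linarith [hα.2, mem_Ici.1 hm]))
  have hapex (s : ℝ) (hs : s ∈ Icc θ (m - α)) : apex V α s = x :=
    apex_eq_of_height_eq hα (hext s ⟨hs.1, by linarith [hs.2, hα.1]⟩).2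
      (hext (s + α) ⟨by linarith [hs.1, hα.1], by linarith [hs.2]⟩).2
  have hlast : apex V α (m - α) = x := hapex _ ⟨by linarith, le_rfl⟩
  have hcontact : contact V (m - α) = x := contact_eq_of_apex_eq hα hx hlast
  refine ⟨m - α, ⟨by linarith, by linarith [hα.1]⟩, ⟨hcontact.trans hlast.symm, ?_⟩, hapex⟩
  rw [IsMoving, hcontact, sub_add_cancel]
  exact hmx.symm

end Departure

/-! ### Apexes that never rest -/

section NeverResting

variable {V V' : Finset ℂ} {α δ : ℝ}

lemma support_eq_of_eqOn_apex {a : ℝ} (h : EqOn (apex V α) (apex V' α) (Ico a (a + 2 * π))) :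
    support V = support V' := by
  funext θ
  obtain ⟨s, hs, hsθ⟩ := exists_mem_Ico_dir_eq a θ
  rw [← support_congr hsθ, ← support_congr hsθ, ← height_apex V α, ← height_apex V' α, h hs]

lemma integral_height_eq_zero (v : ℂ) : ∫ t in 0..2 * π, height t v = 0 := by
  simp only [height_apply]
  rw [intervalIntegral.integral_add (Continuous.intervalIntegrable (by fun_prop) _ _)
    (Continuous.intervalIntegrable (by fun_prop) _ _)]
  simp

lemma exists_height_lt {v w : ℂ} (hvw : w ≠ v) : ∃ t ∈ Icc 0 (2 * π), height t v < height t w := by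
  by_contra! h
  have hπ := Real.pi_pos
  have hE := h 0 ⟨le_rfl, by linarith⟩
  have hN := h (π / 2) ⟨by linarith, by linarith⟩
  have hW := h π ⟨hπ.le, by linarith⟩
  have hS := h (π / 2 + π) ⟨by linarith, by linarith⟩
  simp only [height_apply, cos_zero, sin_zero, cos_pi_div_two, sin_pi_div_two, cos_pi, sin_pi,
    cos_add_pi, sin_add_pi, mul_one, mul_zero, add_zero, zero_add, mul_neg, neg_zero,
    neg_le_neg_iff] at hE hN hW hS
  exact hvw (Complex.ext (le_antisymm hE hW) (le_antisymm hN hS))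

lemma integral_support_pos (hV : V.Nontrivial) : 0 < ∫ t in 0..2 * π, support V t := by
  obtain ⟨v, hv, w, hw, hvw⟩ := hV
  have hcs := continuous_support ⟨v, hv⟩
  have hch := continuous_height_left v
  have hpos : 0 < ∫ t in 0..2 * π, (support V t - height t v) := by
    refine intervalIntegral.integral_pos Real.two_pi_pos (hcs.sub hch).continuousOn
      (fun t _ => sub_nonneg.2 (height_le_support hv t)) ?_
    obtain ⟨t, ht, hlt⟩ := exists_height_lt hvw.symm
    exact ⟨t, ht, sub_pos.2 (hlt.trans_le (height_le_support hw t))⟩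
  rwa [intervalIntegral.integral_sub (hcs.intervalIntegrable _ _) (hch.intervalIntegrable _ _),
    integral_height_eq_zero, sub_zero] at hpos

lemma periodic_support (V : Finset ℂ) : Function.Periodic (support V) (2 * π) :=
  fun θ => support_congr (periodic_dir θ)

lemma periodic_apex (V : Finset ℂ) (α : ℝ) : Function.Periodic (apex V α) (2 * π) :=
  fun θ => apex_congr (periodic_dir θ)

lemma integral_apex_mul_dir_neg (hV : V.Nonempty) (α : ℝ) :
    ∫ t in 0..2 * π, apex V α t * dir (-t) =
      (1 + ((1 - Real.cos α) / Real.sin α : ℝ) * I) * (∫ t in 0..2 * π, support V t : ℝ) := by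
  have hcont := continuous_support hV
  have hshift : ∫ t in 0..2 * π, support V (t + α) = ∫ t in 0..2 * π, support V t := by
    rw [intervalIntegral.integral_comp_add_right, zero_add, add_comm,
      (periodic_support V).intervalIntegral_add_eq α 0, zero_add]
  have hfun (t : ℝ) : apex V α t * dir (-t) =
      support V t + ((support V (t + α) - support V t * Real.cos α) / Real.sin α : ℝ) * I := by
    rw [apex, lineMeet, mul_assoc, mul_comm (dir t), dir_neg_mul_dir, mul_one]
  simp only [hfun]
  rw [intervalIntegral.integral_add (Continuous.intervalIntegrable (by fun_prop) _ _)
      (Continuous.intervalIntegrable (by fun_prop) _ _), intervalIntegral.integral_mul_const,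
    intervalIntegral.integral_ofReal, intervalIntegral.integral_ofReal,
    intervalIntegral.integral_div, intervalIntegral.integral_sub
      (Continuous.intervalIntegrable (by fun_prop) _ _)
      (Continuous.intervalIntegrable (by fun_prop) _ _), intervalIntegral.integral_mul_const,
    hshift]
  push_cast
  ring

lemma dir_eq_one_of_apex_eq_apex_add (hV : V.Nontrivial) (hV' : V'.Nontrivial)
    (h : ∀ t ∈ Icc 0 (2 * π), apex V α t = apex V' α (t + δ)) : dir δ = 1 := by
  have hper : Function.Periodic (fun t => apex V' α t * dir (-t)) (2 * π) := fun t => by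
    simp only [periodic_apex V' α t, neg_add, ← periodic_dir (-t + -(2 * π)), neg_add_cancel_right]
  have hint : ∫ t in 0..2 * π, apex V α t * dir (-t) =
      dir δ * ∫ t in 0..2 * π, apex V' α t * dir (-t) := calc
    _ = ∫ t in 0..2 * π, dir δ * (apex V' α (t + δ) * dir (-(t + δ))) := by
      refine intervalIntegral.integral_congr fun t ht => ?_
      rw [uIcc_of_le Real.two_pi_pos.le] at ht
      simp only [h t ht]
      rw [mul_left_comm, ← dir_add, neg_add, add_comm (-t), add_neg_cancel_left]
    _ = dir δ * ∫ t in 0 + δ..2 * π + δ, apex V' α t * dir (-t) := by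
      rw [intervalIntegral.integral_const_mul,
        intervalIntegral.integral_comp_add_right fun t => apex V' α t * dir (-t)]
    _ = _ := by rw [zero_add, add_comm, hper.intervalIntegral_add_eq δ 0, zero_add]
  rw [integral_apex_mul_dir_neg hV.nonempty, integral_apex_mul_dir_neg hV'.nonempty,
    mul_left_comm] at hint
  have hne : (1 + ((1 - Real.cos α) / Real.sin α : ℝ) * I) ≠ 0 := fun h => by
    simpa only [Complex.add_re, Complex.one_re, Complex.re_ofReal_mul, Complex.I_re, mul_zero,
      add_zero, Complex.zero_re, one_ne_zero] using congrArg Complex.re h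
  have hdir := mul_left_cancel₀ hne hint
  have hpos := integral_support_pos hV
  have hpos' := integral_support_pos hV'
  have hnorm := congrArg norm hdir
  rw [norm_mul, norm_dir, one_mul, Complex.norm_real, Complex.norm_real,
    Real.norm_of_nonneg hpos.le, Real.norm_of_nonneg hpos'.le] at hnorm
  rw [hnorm] at hdir
  exact (mul_eq_right₀ (Complex.ofReal_ne_zero.2 hpos'.ne')).1 hdir.symm

theorem support_eq_of_forall_isMoving (hα : α ∈ Ioo 0 π) (hV : V.Nontrivial) (hV' : V'.Nontrivial)
    (hr : range (apex V α) ⊆ range (apex V' α)) (hmov : ∀ θ, IsMoving V α θ)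
    (hmov' : ∀ θ, IsMoving V' α θ) : support V = support V' := by
  obtain ⟨δ, hδ⟩ := exists_sameSweep hα hV.nonempty hV'.nonempty hr (hmov 0)
  have hlag : EqOn (apex V α) (fun t => apex V' α (t + δ)) (Icc 0 (2 * π)) := by
    refine eqOn_Icc_of_forall_eventually_eq (continuous_apex hV.nonempty α)
      ((continuous_apex hV'.nonempty α).comp (continuous_add_const δ))
      (by rw [zero_add, hδ.apex_eq]) fun m hm heq => ?_
    have hsame : SameSweep V V' α m (m + δ) := .of_apex_eq hα hV.nonempty hV'.nonempty hr (hmov m)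
      (hmov' _) (heq (right_mem_Icc.2 hm.1)).symm
    filter_upwards [eventually_apex_add_eq_sweep hα hV.nonempty m,
      eventually_apex_add_eq_sweep hα hV'.nonempty (m + δ)] with t ht ht'
    rw [ht, add_right_comm, ht', hsame.sweep_eq]
  have hδ₁ : dir δ = 1 := dir_eq_one_of_apex_eq_apex_add hV hV' hlag
  refine support_eq_of_eqOn_apex (a := 0) fun t ht =>
    (hlag (Ico_subset_Icc_self (by rwa [zero_add] at ht))).trans (apex_congr ?_)
  rw [dir_add, hδ₁, mul_one]

end NeverResting

/-! ### Two apex curves that agree -/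

section Agreement

variable {V V' : Finset ℂ} {α a b θ θ' : ℝ} {x : ℂ}

lemma apex_eq_contact (hα : α ∈ Ioo 0 π) (hV : V.Nonempty) (hθ : ¬IsMoving V α θ) :
    apex V α θ = contact V θ := by
  refine apex_eq_of_height_eq hα (height_contact hV θ) ?_
  rw [not_not.1 hθ, height_contact hV]

lemma contact_eq_of_forall_height_eq (hV : V.Nonempty) (hab : a < b)
    (h : ∀ s ∈ Icc a b, height s x = support V s) : contact V a = x := by
  obtain ⟨t, ht, ht₀, htb⟩ := (((eventually_isExtremal_contact hV a).filter_mono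
    (nhdsWithin_mono _ Ioi_subset_Ici_self)).and
      (Ioo_mem_nhdsGT (lt_min (sub_pos.2 hab) Real.pi_pos))).exists
  obtain ⟨htb, htπ⟩ := lt_min_iff.1 htb
  refine eq_of_height_eq (a := a) (b := a + t) ?_ ((height_contact hV a).trans ?_) (ht.2.trans ?_)
  · rw [add_sub_cancel_left]
    exact (Real.sin_pos_of_pos_of_lt_pi ht₀ htπ).ne'
  · exact (h a ⟨le_rfl, hab.le⟩).symm
  · exact (h (a + t) ⟨by linarith, by linarith⟩).symm

lemma SameSweep.dir_mul_eq {k l k' l' : ℝ} (hα : α ∈ Ioo 0 π) (h : SameSweep V V' α θ θ')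
    (hk : contact V θ = apex V α θ - k * I * dir θ)
    (hl : contact V (θ + α) = apex V α θ + l * I * dir (θ + α))
    (hk' : contact V' θ' = apex V' α θ' - k' * I * dir θ')
    (hl' : contact V' (θ' + α) = apex V' α θ' + l' * I * dir (θ' + α)) :
    dir θ' * (l' + k' * dir α) = dir θ * (l + k * dir α) := by
  have hcenter := h.center_eq
  rw [center_eq_apex_sub hα hk hl, center_eq_apex_sub hα hk' hl', h.apex_eq] at hcenter
  exact (div_left_inj' (mul_ne_zero two_ne_zero (ofReal_sin_ne_zero hα))).1
    (sub_right_inj.1 hcenter)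

lemma dir_eq_of_ofReal_mul_dir_eq {r r' : ℝ} (hr : 0 < r) (hr' : 0 < r')
    (h : r * dir a = r' * dir b) : dir a = dir b := by
  have hnorm := congrArg norm h
  rw [norm_mul, norm_mul, norm_dir, norm_dir, mul_one, mul_one, Complex.norm_real,
    Complex.norm_real, Real.norm_of_nonneg hr.le, Real.norm_of_nonneg hr'.le] at hnorm
  rw [hnorm] at h
  exact mul_left_cancel₀ (Complex.ofReal_ne_zero.2 hr'.ne') h

lemma IsDeparture.dir_eq (hα : α ∈ Ioo 0 π) (hV : V.Nonempty) (hV' : V'.Nonempty)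
    (hθ : IsDeparture V α θ) (hθ' : IsDeparture V' α θ') (h : SameSweep V V' α θ θ') :
    dir θ' = dir θ := by
  obtain ⟨l, hl₀, hl⟩ := hθ.isMoving.exists_contact_add_eq_apex_add hα hV
  obtain ⟨l', hl'₀, hl'⟩ := hθ'.isMoving.exists_contact_add_eq_apex_add hα hV'
  have heq := h.dir_mul_eq (k := 0) (k' := 0) hα (by simpa using hθ.contact_eq_apex) hl
    (by simpa using hθ'.contact_eq_apex) hl'
  simp only [Complex.ofReal_zero, zero_mul, add_zero] at heq
  rw [mul_comm, mul_comm (dir θ)] at heq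
  exact dir_eq_of_ofReal_mul_dir_eq hl'₀ hl₀ heq

-- If `V` rested at `b`, its resting point `x` would be a vertex of `V'` too, and `V'` would leave
-- `x` at `b` along the arc on which `V` leaves `x` only later.
lemma isMoving_of_eqOn_apex (hα : α ∈ Ioo 0 π) (hV : V.Nontrivial) (hV' : V'.Nonempty)
    (hr : range (apex V α) ⊆ range (apex V' α)) (hab : a < b)
    (h : EqOn (apex V α) (apex V' α) (Icc a b)) (hb : IsMoving V' α b) : IsMoving V α b := by
  by_contra hrest
  obtain ⟨θ, ⟨hbθ, hθb⟩, hdep, hapex⟩ := exists_isDeparture hα hV hrest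
  have hθapex : apex V α θ = contact V b := hapex θ (right_mem_Icc.2 hbθ.le)
  have hapex_b : apex V α b = contact V b := hapex b (left_mem_Icc.2 hbθ.le)
  set x := contact V b
  have hext : IsExtremal V b x := isExtremal_contact hV.nonempty b
  have hext_add : IsExtremal V (b + α) x :=
    ⟨hext.1, by rw [← hapex_b, height_add_apex hα]⟩
  have hlt : max a (b - α) + α < b + α := add_lt_add_left (max_lt hab (by linarith [hα.1])) α
  have hx : x ∈ V' := by
    have hcontact : contact V' (max a (b - α) + α) = x := by
      refine contact_eq_of_forall_height_eq hV' hlt fun s hs => ?_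
      have hsa : a ≤ s - α := by linarith [le_max_left a (b - α), hs.1]
      have hsb : b ≤ s := by linarith [le_max_right a (b - α), hs.1]
      rw [(hext.of_mem_Icc hext_add (by linarith [hα.2]) ⟨hsb, hs.2⟩).2, ← sub_add_cancel s α,
        ← height_add_apex hα V, ← height_add_apex hα V', h ⟨hsa, by linarith [hs.2]⟩]
    exact hcontact ▸ contact_mem hV' _
  have hapex'_b : apex V' α b = x := (h (right_mem_Icc.2 hab.le)).symm.trans hapex_b
  have hdep' : IsDeparture V' α b :=
    ⟨(contact_eq_of_apex_eq hα hx hapex'_b).trans hapex'_b.symm, hb⟩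
  have hdir : dir b = dir θ := hdep.dir_eq hα hV.nonempty hV' hdep'
    (.of_apex_eq hα hV.nonempty hV' hr hdep.isMoving hb (hapex'_b.trans hθapex.symm))
  exact hbθ.ne (eq_of_dir_eq hdir (abs_lt.2 ⟨by linarith, by linarith [Real.pi_pos]⟩))

lemma eventually_apex_add_eq_of_not_isMoving (hα : α ∈ Ioo 0 π) (hV : V.Nontrivial)
    (hθ : ¬IsMoving V α θ) : ∀ᶠ t in 𝓝[≥] (0 : ℝ), apex V α (θ + t) = apex V α θ := by
  obtain ⟨θ₂, hθ₂, -, hapex⟩ := exists_isDeparture hα hV hθ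
  filter_upwards [Icc_mem_nhdsGE (sub_pos.2 hθ₂.1)] with t ht
  rw [hapex (θ + t) ⟨by linarith [ht.1], by linarith [ht.2]⟩, apex_eq_contact hα hV.nonempty hθ]

theorem support_eq_of_sameSweep (hα : α ∈ Ioo 0 π) (hV : V.Nontrivial) (hV' : V'.Nontrivial)
    (hr : range (apex V α) = range (apex V' α)) (hθ : SameSweep V V' α θ θ) :
    support V = support V' := by
  have heq : EqOn (apex V α) (apex V' α) (Icc θ (θ + 2 * π)) := by
    refine eqOn_Icc_of_forall_eventually_eq (continuous_apex hV.nonempty α)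
      (continuous_apex hV'.nonempty α) hθ.apex_eq.symm fun m hm hle => ?_
    have hm_eq : apex V α m = apex V' α m := hle (right_mem_Icc.2 hm.1)
    have hiff : IsMoving V α m ↔ IsMoving V' α m := by
      rcases hm.1.eq_or_lt with rfl | hlt
      · exact iff_of_true hθ.isMoving_left hθ.isMoving_right
      · exact ⟨isMoving_of_eqOn_apex hα hV' hV.nonempty hr.ge hlt hle.symm,
          isMoving_of_eqOn_apex hα hV hV'.nonempty hr.le hlt hle⟩
    by_cases hmov : IsMoving V α m
    · have hsame : SameSweep V V' α m m :=
        .of_apex_eq hα hV.nonempty hV'.nonempty hr.le hmov (hiff.1 hmov) hm_eq.symm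
      filter_upwards [eventually_apex_add_eq_sweep hα hV.nonempty m,
        eventually_apex_add_eq_sweep hα hV'.nonempty m] with t ht ht'
      rw [ht, ht', hsame.sweep_eq]
    · filter_upwards [eventually_apex_add_eq_of_not_isMoving hα hV hmov,
        eventually_apex_add_eq_of_not_isMoving hα hV' (hiff.not.1 hmov)] with t ht ht'
      rw [ht, ht', hm_eq]
  exact support_eq_of_eqOn_apex (heq.mono Ico_subset_Icc_self)

end Agreement

/-! ### The phase between two apex curves on a common arc -/

section Phase

variable {V V' : Finset ℂ} {α ε t θ : ℝ}

lemma exists_add_mul_dir_eq {k l : ℝ} (hα : α ∈ Ioo 0 π) (hk : 0 ≤ k) (hl : 0 < l) :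
    ∃ ε ∈ Ico 0 α, ∃ r : ℝ, 0 < r ∧ (l + k * dir α : ℂ) = r * dir ε := by
  set z : ℂ := l + k * dir α with hz_def
  have hpolar : z = ‖z‖ * dir z.arg := (Complex.norm_mul_exp_arg_mul_I z).symm
  have hsin := Real.sin_pos_of_mem_Ioo hα
  have him : z.im = k * Real.sin α := by
    rw [hz_def, Complex.add_im, Complex.ofReal_im, Complex.im_ofReal_mul, dir_im, zero_add]
  have harg : 0 ≤ z.arg := Complex.arg_nonneg_iff.2 (by rw [him]; positivity)
  have hturn : ‖z‖ * Real.sin (z.arg - α) = -(l * Real.sin α) := by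
    have h : l * dir (-α) + k = ‖z‖ * dir (z.arg - α) := by
      rw [sub_eq_add_neg, dir_add, ← mul_assoc, ← hpolar, hz_def]
      linear_combination -k * dir_neg_mul_dir α
    simpa [dir_im] using (congrArg Complex.im h).symm
  have hneg : ‖z‖ * Real.sin (z.arg - α) < 0 := by rw [hturn]; exact neg_neg_of_pos (by positivity)
  refine ⟨z.arg, ⟨harg, ?_⟩, ‖z‖, norm_pos_iff.2 fun hz => ?_, hpolar⟩
  · by_contra! hle
    exact hneg.not_ge (mul_nonneg (norm_nonneg z) (Real.sin_nonneg_of_nonneg_of_le_pi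
      (sub_nonneg.2 hle) (by linarith [Complex.arg_le_pi z, hα.1])))
  · rw [hz, norm_zero, zero_mul] at hneg
    exact hneg.false

lemma IsDeparture.exists_sameSweep_sub (hα : α ∈ Ioo 0 π) (hV : V.Nonempty) (hV' : V'.Nonempty)
    (hr : range (apex V α) ⊆ range (apex V' α)) (hθ : IsDeparture V α θ) :
    ∃ ε ∈ Ico 0 α, SameSweep V V' α θ (θ - ε) := by
  obtain ⟨θ', hθ'⟩ := exists_sameSweep hα hV hV' hr hθ.isMoving
  obtain ⟨l, hl₀, hl⟩ := hθ.isMoving.exists_contact_add_eq_apex_add hα hV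
  obtain ⟨l', hl'₀, hl'⟩ := hθ'.isMoving_right.exists_contact_add_eq_apex_add hα hV'
  obtain ⟨k', hk'₀, hk'⟩ := exists_contact_eq_apex_sub hα hV' θ'
  obtain ⟨ε, hε, r, hr₀, hrε⟩ := exists_add_mul_dir_eq hα hk'₀ hl'₀
  have heq := hθ'.dir_mul_eq (k := 0) hα (by simpa using hθ.contact_eq_apex) hl hk' hl'
  rw [hrε, Complex.ofReal_zero, zero_mul, add_zero, mul_left_comm, ← dir_add, mul_comm (dir θ)]
    at heq
  have hdir : dir θ' = dir (θ - ε) := by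
    rw [sub_eq_add_neg, ← dir_add_congr (dir_eq_of_ofReal_mul_dir_eq hr₀ hl₀ heq),
      add_neg_cancel_right]
  exact ⟨ε, hε, (hθ'.symm.congr_left hdir).symm⟩

lemma IsDeparture.sweep_eq_contact (hα : α ∈ Ioo 0 π) (hV : V.Nonempty) (hV' : V'.Nonempty)
    (hθ : IsDeparture V α θ) (h : SameSweep V V' α θ (θ - ε)) :
    sweep V α θ (α - ε) = contact V' (θ - ε + α) := by
  obtain ⟨l, -, hl⟩ := exists_contact_add_eq_apex_add hα hV θ
  obtain ⟨l', -, hl'⟩ := exists_contact_add_eq_apex_add hα hV' (θ - ε)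
  obtain ⟨k', -, hk'⟩ := exists_contact_eq_apex_sub hα hV' (θ - ε)
  have heq := h.dir_mul_eq (k := 0) hα (by simpa using hθ.contact_eq_apex) hl hk' hl'
  have hreal : l' * dir (-ε) + k' * dir (α - ε) = l := by
    refine mul_left_cancel₀ (dir_ne_zero θ) ?_
    rw [Complex.ofReal_zero, zero_mul, add_zero, sub_eq_add_neg, dir_add] at heq
    rw [← heq, sub_eq_add_neg, dir_add]
    ring
  have him := congrArg Complex.im hreal
  rw [Complex.add_im, Complex.im_ofReal_mul, Complex.im_ofReal_mul, dir_im, dir_im,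
    Complex.ofReal_im, Real.sin_neg] at him
  rw [← h.sweep_eq]
  refine eq_of_height_eq_of_height_add_eq (θ := θ - ε + (α - ε)) hα ?_
    (height_add_sweep hα hV' _ _)
  rw [height_sweep hα hV', hk', hl', map_sub, map_add, height_mul_I_mul_dir,
    height_mul_I_mul_dir, add_sub_cancel_left, add_sub_add_left_eq_sub, sub_sub_cancel_left,
    Real.sin_neg]
  linarith

lemma isExtremal_of_apex_eq_sweep (hα : α ∈ Ioo 0 π) (hV : V.Nonempty)
    (h : apex V α (θ + t) = sweep V α θ t) :
    IsExtremal V (θ + t) (contact V θ) ∧ IsExtremal V (θ + t + α) (contact V (θ + α)) := by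
  refine ⟨⟨contact_mem hV _, ?_⟩, ⟨contact_mem hV _, ?_⟩⟩
  · rw [← height_sweep hα hV, ← h, height_apex]
  · rw [← height_add_sweep hα hV, ← h, height_add_apex hα]

-- Equality of the centers at the later time reads `l * dir ε = l' - k' * dir α`, where `l`, `k'`,
-- `l'` are the distances by which the contacts have moved. Since `l` and `k'` are nonnegative, the
-- imaginary parts show that they vanish.
lemma contact_eq_of_sameSweep_add (hα : α ∈ Ioo 0 π) (hV : V.Nonempty) (hV' : V'.Nonempty)
    (hε : ε ∈ Ioo 0 π) (h : SameSweep V V' α θ (θ - ε))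
    (ht : SameSweep V V' α (θ + t) (θ - ε + t)) (hp : contact V (θ + t) = contact V θ)
    (hsweep : apex V α (θ + t) = sweep V α θ t) :
    contact V (θ + t + α) = contact V (θ + α) ∧ contact V' (θ - ε + t) = contact V' (θ - ε) ∧
      contact V' (θ - ε + t + α) = contact V' (θ - ε + α) := by
  have hsweep' : apex V' α (θ - ε + t) = sweep V' α (θ - ε) t := by
    rw [ht.apex_eq, hsweep, h.sweep_eq]
  have hext := isExtremal_of_apex_eq_sweep hα hV hsweep
  have hext' := isExtremal_of_apex_eq_sweep hα hV' hsweep'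
  obtain ⟨l, hl₀, hl⟩ := hext.2.exists_contact_eq_add
  obtain ⟨k', hk'₀, hk'⟩ := hext'.1.exists_contact_eq_add
  obtain ⟨l', -, hl'⟩ := hext'.2.exists_contact_eq_add
  have hcenter := arcCenter_add_mul_I_mul_dir hα (contact V θ) (contact V (θ + α)) 0 l (θ + t)
  have hcenter' := arcCenter_add_mul_I_mul_dir hα (contact V' (θ - ε)) (contact V' (θ - ε + α))
    k' l' (θ - ε + t)
  rw [Complex.ofReal_zero, zero_mul, zero_mul, add_zero, zero_mul, sub_zero, ← hl, ← hp, ← center,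
    hp, ← center] at hcenter
  rw [← hl', ← hk', ← center, ← center, ht.center_eq, h.center_eq, hcenter] at hcenter'
  have heq := (div_left_inj' (mul_ne_zero two_ne_zero (ofReal_sin_ne_zero hα))).1
    (sub_right_inj.1 hcenter')
  rw [← sub_add_cancel θ ε, add_right_comm, dir_add _ ε, mul_assoc, sub_add_cancel] at heq
  have heq' : dir ε * l = l' - k' * dir α := mul_left_cancel₀ (dir_ne_zero _) heq
  have hre : Real.cos ε * l = l' - k' * Real.cos α := by
    simpa [dir_re] using congrArg Complex.re heq'
  have him : Real.sin ε * l = -(k' * Real.sin α) := by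
    simpa [dir_im] using congrArg Complex.im heq'
  have hsinε := Real.sin_pos_of_mem_Ioo hε
  have hsinα := Real.sin_pos_of_mem_Ioo hα
  obtain rfl : k' = 0 := by nlinarith [mul_nonneg hsinε.le hl₀, mul_nonneg hk'₀ hsinα.le]
  obtain rfl : l = 0 := by simpa [hsinε.ne'] using him
  obtain rfl : l' = 0 := by linarith
  exact ⟨by simpa using hl, by simpa using hk', by simpa using hl'⟩

end Phase

/-! ### Legs -/

section Leg

variable {V V' : Finset ℂ} {α ε s t τ θ : ℝ}

/-- For a turn by `τ` from `θ` on, the wedge keeps touching `V` at the same two points. -/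
structure IsSliding (V : Finset ℂ) (α θ τ : ℝ) : Prop where
  contact_eq : ∀ t ∈ Ico 0 τ, contact V (θ + t) = contact V θ
  contact_add_eq : ∀ t ∈ Ico 0 τ, contact V (θ + t + α) = contact V (θ + α)

lemma IsSliding.apex_eq (hα : α ∈ Ioo 0 π) (hV : V.Nonempty) (h : IsSliding V α θ τ) (hτ : 0 < τ)
    (ht : t ∈ Icc 0 τ) : apex V α (θ + t) = sweep V α θ t := by
  have heq : EqOn (fun t => apex V α (θ + t)) (sweep V α θ) (Ico 0 τ) := fun t ht =>
    apex_add_eq_sweep hα hV (h.contact_eq t ht ▸ isExtremal_contact hV _)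
      (h.contact_add_eq t ht ▸ isExtremal_contact hV _)
  rw [← closure_Ico hτ.ne] at ht
  exact heq.closure ((continuous_apex hV α).comp (continuous_const_add θ))
    (continuous_sweep V α θ) ht

lemma contact_eq_of_contact_eq_apex (hα : α ∈ Ioo 0 π) (hV : V.Nonempty)
    (h : contact V θ = apex V α θ) (hs : s ∈ Ico θ (θ + α)) : contact V s = contact V θ := by
  have hext : IsExtremal V θ (contact V θ) := isExtremal_contact hV θ
  have hext_add : IsExtremal V (θ + α) (contact V θ) :=
    ⟨hext.1, by rw [h, height_add_apex hα]⟩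
  exact contact_eq_of_isExtremal (hext.of_mem_Icc hext_add (by linarith [hα.2])
    (Ico_subset_Icc_self hs)) hext_add hs.2 (by linarith [hs.1, hα.2])

lemma IsDeparture.isMoving_add (hα : α ∈ Ioo 0 π) (hV : V.Nonempty) (hθ : IsDeparture V α θ)
    (ht : t ∈ Ico 0 α) (h : apex V α (θ + t) = sweep V α θ t) : IsMoving V α (θ + t) := by
  by_contra hrest
  have hback : sweep V α θ t = sweep V α θ 0 := by
    rw [← h, apex_eq_contact hα hV hrest, contact_eq_of_contact_eq_apex hα hV hθ.contact_eq_apex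
      ⟨by linarith [ht.1], by linarith [ht.2]⟩, hθ.contact_eq_apex, sweep_zero]
  have ht₀ : t = 0 := hθ.isMoving.sweep_inj hα hV
    (by rw [sub_zero, abs_of_nonneg ht.1]; exact ht.2.trans hα.2) hback
  rw [ht₀, add_zero] at hrest
  exact hrest hθ.isMoving

lemma IsMoving.add_of_sweep_eq_contact (hα : α ∈ Ioo 0 π) (hV : V.Nonempty) (hθ : IsMoving V α θ)
    (hτα : τ ≤ α) (hτ : sweep V α θ τ = contact V (θ + α)) (ht : t ∈ Ico 0 τ)
    (h : apex V α (θ + t) = sweep V α θ t) : IsMoving V α (θ + t) := by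
  by_contra hrest
  have hapex : apex V α (θ + t) = contact V (θ + t) := apex_eq_contact hα hV hrest
  have hcontact : contact V (θ + α) = contact V (θ + t) := by
    rcases ht.1.eq_or_lt with rfl | ht₀
    · simpa [IsMoving, eq_comm] using hrest
    · exact contact_eq_of_contact_eq_apex hα hV hapex.symm
        ⟨by linarith [ht.2], by linarith⟩
  have hend : sweep V α θ t = sweep V α θ τ := by rw [← h, hapex, hτ, hcontact]
  have hlt : |t - τ| < π := abs_lt.2 ⟨by linarith [ht.1, hα.2], by linarith [ht.2, hα.1, hα.2]⟩
  exact ht.2.ne (hθ.sweep_inj hα hV hlt hend)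

lemma sweep_add (hV : contact V (θ + t) = contact V θ)
    (hVα : contact V (θ + t + α) = contact V (θ + α)) (h : apex V α (θ + t) = sweep V α θ t)
    (s : ℝ) : sweep V α (θ + t) s = sweep V α θ (t + s) := by
  rw [sweep, h, center, hV, hVα, ← center, sweep, add_sub_cancel_left, sweep, mul_add 2 t,
    dir_add]
  ring

/-- From the departure of `V` at `θ` until `θ + (α - ε)`, the apexes of `V` and of `V'` run
together along an arc, `V'` being behind by the phase `ε`. At the end `V'` comes to rest while `V`
is still moving. -/
structure IsLeg (V V' : Finset ℂ) (α θ ε : ℝ) : Prop where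
  mem_Ioo : ε ∈ Ioo 0 α
  sameSweep : SameSweep V V' α θ (θ - ε)
  isSliding_left : IsSliding V α θ (α - ε)
  isSliding_right : IsSliding V' α (θ - ε) (α - ε)
  isMoving_left : IsMoving V α (θ + (α - ε))
  not_isMoving_right : ¬IsMoving V' α (θ - ε + (α - ε))
  sweep_eq_contact : sweep V α θ (α - ε) = contact V' (θ - ε + α)

lemma eqOn_sweep_of_isDeparture (hα : α ∈ Ioo 0 π) (hV : V.Nonempty) (hV' : V'.Nonempty)
    (hr : range (apex V α) ⊆ range (apex V' α)) (hθ : IsDeparture V α θ) (hε : ε ∈ Ioo 0 α)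
    (h : SameSweep V V' α θ (θ - ε)) :
    ∀ t ∈ Icc 0 (α - ε), apex V α (θ + t) = sweep V α θ t ∧
      apex V' α (θ - ε + t) = sweep V' α (θ - ε) t := by
  have hτ := hθ.sweep_eq_contact hα hV hV' h
  rw [← h.sweep_eq] at hτ
  have hcont := continuous_apex hV α
  have hcont' := continuous_apex hV' α
  have heq : EqOn (fun t => (apex V α (θ + t), apex V' α (θ - ε + t)))
      (fun t => (sweep V α θ t, sweep V' α (θ - ε) t)) (Icc 0 (α - ε)) := by
    refine eqOn_Icc_of_forall_eventually_eq (by fun_prop)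
      ((continuous_sweep V α θ).prodMk (continuous_sweep V' α (θ - ε))) (by simp)
      fun m hm hle => ?_
    obtain ⟨hapex, hapex'⟩ := Prod.ext_iff.1 (hle (right_mem_Icc.2 hm.1))
    have hmα : m ∈ Ico 0 α := ⟨hm.1, by linarith [hm.2, hε.1]⟩
    have hsame : SameSweep V V' α (θ + m) (θ - ε + m) := .of_apex_eq hα hV hV' hr
      (hθ.isMoving_add hα hV hmα hapex)
      (h.isMoving_right.add_of_sweep_eq_contact hα hV' (by linarith [hε.1]) hτ hm hapex')
      (hapex'.trans ((congrFun h.sweep_eq m).trans hapex.symm))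
    have hp : contact V (θ + m) = contact V θ := contact_eq_of_contact_eq_apex hα hV
      hθ.contact_eq_apex ⟨by linarith [hm.1], by linarith [hmα.2]⟩
    obtain ⟨hq, hp', hq'⟩ := contact_eq_of_sameSweep_add hα hV hV' ⟨hε.1, hε.2.trans hα.2⟩ h
      hsame hp hapex
    filter_upwards [eventually_apex_add_eq_sweep hα hV (θ + m),
      eventually_apex_add_eq_sweep hα hV' (θ - ε + m)] with t ht ht'
    rw [← add_assoc, ht, sweep_add hp hq hapex, ← add_assoc, ht', sweep_add hp' hq' hapex']
  exact fun t ht => Prod.ext_iff.1 (heq ht)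

theorem IsDeparture.exists_isLeg (hα : α ∈ Ioo 0 π) (hV : V.Nontrivial) (hV' : V'.Nontrivial)
    (hr : range (apex V α) = range (apex V' α)) (hne : support V ≠ support V')
    (hθ : IsDeparture V α θ) : ∃ ε, IsLeg V V' α θ ε := by
  have hV₀ := hV.nonempty
  have hV'₀ := hV'.nonempty
  obtain ⟨ε, hεα, h⟩ := hθ.exists_sameSweep_sub hα hV₀ hV'₀ hr.le
  have hε₀ : ε ≠ 0 := by
    rintro rfl
    rw [sub_zero] at h
    exact hne (support_eq_of_sameSweep hα hV hV' hr h)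
  have hε : ε ∈ Ioo 0 α := ⟨hεα.1.lt_of_ne' hε₀, hεα.2⟩
  have hτ := hθ.sweep_eq_contact hα hV₀ hV'₀ h
  have hlast : α - ε ∈ Icc 0 (α - ε) := ⟨by linarith [hε.2], le_rfl⟩
  have hsweep := eqOn_sweep_of_isDeparture hα hV₀ hV'₀ hr.le hθ hε h
  have hp (t : ℝ) (ht : t ∈ Icc 0 (α - ε)) : contact V (θ + t) = contact V θ :=
    contact_eq_of_contact_eq_apex hα hV₀ hθ.contact_eq_apex
      ⟨by linarith [ht.1], by linarith [ht.2, hε.1]⟩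
  have hmov (t : ℝ) (ht : t ∈ Icc 0 (α - ε)) : IsMoving V α (θ + t) :=
    hθ.isMoving_add hα hV₀ ⟨ht.1, by linarith [ht.2, hε.1]⟩ (hsweep t ht).1
  have hcontact (t : ℝ) (ht : t ∈ Icc 0 (α - ε)) (hmov' : IsMoving V' α (θ - ε + t)) :=
    contact_eq_of_sameSweep_add hα hV₀ hV'₀ ⟨hε.1, hε.2.trans hα.2⟩ h
      (.of_apex_eq hα hV₀ hV'₀ hr.le (hmov t ht) hmov'
        (by rw [(hsweep t ht).1, (hsweep t ht).2, h.sweep_eq])) (hp t ht) (hsweep t ht).1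
  have hmov' (t : ℝ) (ht : t ∈ Ico 0 (α - ε)) : IsMoving V' α (θ - ε + t) :=
    h.isMoving_right.add_of_sweep_eq_contact hα hV'₀ (by linarith [hε.1]) (by rw [h.sweep_eq, hτ])
      ht (hsweep t (Ico_subset_Icc_self ht)).2
  have hmem {t : ℝ} (ht : t ∈ Ico 0 (α - ε)) : t ∈ Icc 0 (α - ε) := Ico_subset_Icc_self ht
  refine ⟨ε, hε, h, ⟨fun t ht => hp t (hmem ht), fun t ht => ?_⟩, ⟨fun t ht => ?_, fun t ht => ?_⟩,
    hmov _ hlast, fun hend => ?_, hτ⟩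
  · exact (hcontact t (hmem ht) (hmov' t ht)).1
  · exact (hcontact t (hmem ht) (hmov' t ht)).2.1
  · exact (hcontact t (hmem ht) (hmov' t ht)).2.2
  · have hq' := (hcontact _ hlast hend).2.2
    have hapex' : apex V' α (θ - ε + (α - ε)) = contact V' (θ - ε + (α - ε) + α) := by
      rw [(hsweep _ hlast).2, h.sweep_eq, hτ, hq']
    exact hend (contact_eq_of_apex_eq hα (contact_mem hV'₀ _) hapex')

end Leg

/-! ### Full sweeps -/

section FullSweep

variable {V V' : Finset ℂ} {α ε ε' τ θ θ' : ℝ}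

lemma IsLeg.contact_add_eq_contact (hα : α ∈ Ioo 0 π) (hV : V.Nonempty) (h : IsLeg V' V α θ' ε) :
    contact V (θ' - ε + (α - ε)) = contact V (θ' - ε + α) := by
  refine contact_eq_of_apex_eq hα (contact_mem hV _) ?_
  have hlast : α - ε ∈ Icc 0 (α - ε) := right_mem_Icc.2 (by linarith [h.mem_Ioo.2])
  rw [h.isSliding_right.apex_eq hα hV (by linarith [h.mem_Ioo.2]) hlast, h.sameSweep.sweep_eq,
    h.sweep_eq_contact]

lemma IsLeg.add_sub_eq (hα : α ∈ Ioo 0 π) (hV : V.Nonempty) (hθ : IsDeparture V α θ)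
    (h : IsLeg V V' α θ ε) (h' : IsLeg V' V α θ' ε') (hdir : dir (θ' - ε') = dir (θ + (α - ε))) :
    α - ε + (α - ε') = α := by
  obtain ⟨hε, hεα⟩ := h.mem_Ioo
  obtain ⟨-, hεα'⟩ := h'.mem_Ioo
  have hshift (t : ℝ) : dir (θ' - ε' + t) = dir (θ + (α - ε + t)) := by
    rw [dir_add_congr hdir, add_assoc]
  have hp {t : ℝ} (ht : t ∈ Ico 0 α) : contact V (θ + t) = contact V θ :=
    contact_eq_of_contact_eq_apex hα hV hθ.contact_eq_apex
      ⟨by linarith [ht.1], by linarith [ht.2]⟩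
  have hpθ' : contact V (θ' - ε') = contact V θ := by
    rw [contact_congr hdir, hp ⟨by linarith, by linarith⟩]
  rcases lt_trichotomy (α - ε + (α - ε')) α with hlt | heq | hgt
  · refine absurd ?_ h'.sameSweep.isMoving_right
    rw [hpθ', ← h'.contact_add_eq_contact hα hV, contact_congr (hshift _),
      hp ⟨by linarith, hlt⟩]
  · exact heq
  · have hend := h'.isSliding_right.contact_eq ε ⟨hε.le, by linarith⟩
    rw [contact_congr (hshift _), hpθ', sub_add_cancel] at hend
    exact absurd hend.symm hθ.isMoving

/-- From the departure of `V` at `θ` on, `V` is in contact with the same two points during a whole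
turn by `α`, after which its apex rests. On the way, `V'` departs at `θ'` along the same circle, and
at `θ' + τ` it passes through the point where `V` comes to rest. -/
structure IsFullSweep (V V' : Finset ℂ) (α θ θ' τ : ℝ) : Prop where
  isSliding : IsSliding V α θ α
  not_isMoving_add : ¬IsMoving V α (θ + α)
  isDeparture_right : IsDeparture V' α θ'
  center_eq : center V' α θ' = center V α θ
  mem_Ioo : τ ∈ Ioo 0 α
  apex_eq : apex V' α (θ' + τ) = apex V α (θ + α)

lemma IsLeg.isFullSweep (hα : α ∈ Ioo 0 π) (hV : V.Nonempty) (hV' : V'.Nonempty)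
    (hθ : IsDeparture V α θ) (hθ' : IsDeparture V' α θ') (h : IsLeg V V' α θ ε)
    (h' : IsLeg V' V α θ' ε') (hdir : dir (θ' - ε') = dir (θ + (α - ε))) :
    IsFullSweep V V' α θ θ' (α - ε') := by
  have hsum := h.add_sub_eq hα hV hθ h' hdir
  have hε := h.mem_Ioo
  have hε' := h'.mem_Ioo
  have hend : dir (θ' - ε' + (α - ε')) = dir (θ + α) := by
    rw [dir_add_congr hdir, add_assoc, hsum]
  have hp {t : ℝ} (ht : t ∈ Ico 0 α) : contact V (θ + t) = contact V θ :=
    contact_eq_of_contact_eq_apex hα hV hθ.contact_eq_apex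
      ⟨by linarith [ht.1], by linarith [ht.2]⟩
  have hq : contact V (θ' - ε' + α) = contact V (θ + α) := by
    rw [← h'.contact_add_eq_contact hα hV, contact_congr hend]
  have hrest : ¬IsMoving V α (θ + α) := (isMoving_congr hend).not.1 h'.not_isMoving_right
  refine ⟨⟨fun t => hp, fun t ht => ?_⟩, hrest, hθ', ?_,
    ⟨by linarith [hε'.2], by linarith [hε'.1]⟩, ?_⟩
  · rcases lt_or_ge t (α - ε) with hlt | hge
    · exact h.isSliding_left.contact_add_eq t ⟨ht.1, hlt⟩
    · rw [← hq, ← h'.isSliding_right.contact_add_eq (t - (α - ε)) ⟨by linarith, by linarith [ht.2]⟩]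
      exact contact_congr (dir_add_congr (by rw [dir_add_congr hdir, add_assoc, add_sub_cancel]) α)
  · rw [← h'.sameSweep.center_eq, center, center, hq, contact_congr hdir,
      hp ⟨by linarith [hε.2], by linarith [hε.1]⟩]
  · rw [h'.isSliding_left.apex_eq hα hV' (by linarith [hε'.2])
      (right_mem_Icc.2 (by linarith [hε'.2])), h'.sweep_eq_contact, hq,
      apex_eq_contact hα hV hrest]

theorem IsDeparture.exists_isFullSweep (hα : α ∈ Ioo 0 π) (hV : V.Nontrivial)
    (hV' : V'.Nontrivial) (hr : range (apex V α) = range (apex V' α))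
    (hne : support V ≠ support V') (hθ : IsDeparture V α θ) :
    ∃ θ' τ, IsFullSweep V V' α θ θ' τ := by
  obtain ⟨ε, h⟩ := hθ.exists_isLeg hα hV hV' hr hne
  obtain ⟨θ', hθ', hdep, hrest⟩ := exists_isDeparture hα hV' h.not_isMoving_right
  obtain ⟨ε', h'⟩ := hdep.exists_isLeg hα hV' hV hr.symm hne.symm
  refine ⟨θ', α - ε', h.isFullSweep hα hV.nonempty hV'.nonempty hθ hdep h' ?_⟩
  refine h'.sameSweep.isMoving_right.dir_eq_of_apex_eq hα hV.nonempty h.isMoving_left ?_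
  have hlast : α - ε ∈ Icc 0 (α - ε) := right_mem_Icc.2 (by linarith [h.mem_Ioo.2])
  have hpos : 0 < α - ε := by linarith [h.mem_Ioo.2]
  calc apex V α (θ' - ε') = apex V' α θ' := h'.sameSweep.apex_eq
    _ = apex V' α (θ - ε + (α - ε)) := by
      rw [hrest θ' (right_mem_Icc.2 hθ'.1.le), ← hrest _ (left_mem_Icc.2 hθ'.1.le)]
    _ = apex V α (θ + (α - ε)) := by
      rw [h.isSliding_right.apex_eq hα hV'.nonempty hpos hlast, h.sameSweep.sweep_eq,
        h.isSliding_left.apex_eq hα hV.nonempty hpos hlast]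

/-- Between its departures at `θ` and at `θ₂`, the apex of `V` first sweeps an arc during a turn by
`α`, and then rests at the end of this arc. The next arc lies on the same circle. -/
structure IsSweepThenRest (V : Finset ℂ) (α θ θ₂ : ℝ) : Prop where
  add_lt : θ + α < θ₂
  isDeparture : IsDeparture V α θ₂
  center_eq : center V α θ₂ = center V α θ
  apex_eq : ∀ s ∈ Icc θ θ₂, apex V α s = sweep V α θ (min (s - θ) α)

theorem IsDeparture.exists_isSweepThenRest (hα : α ∈ Ioo 0 π) (hV : V.Nontrivial)
    (hV' : V'.Nontrivial) (hr : range (apex V α) = range (apex V' α))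
    (hne : support V ≠ support V') (hθ : IsDeparture V α θ) : ∃ θ₂, IsSweepThenRest V α θ θ₂ := by
  obtain ⟨θ', τ, h⟩ := hθ.exists_isFullSweep hα hV hV' hr hne
  obtain ⟨θ'', τ', h'⟩ := h.isDeparture_right.exists_isFullSweep hα hV' hV hr.symm hne.symm
  obtain ⟨θ₂, hθ₂, hdep, hrest⟩ := exists_isDeparture hα hV h.not_isMoving_add
  have hstay (s : ℝ) (hs : s ∈ Icc (θ + α) θ₂) : apex V α s = apex V α (θ + α) := by
    rw [hrest s hs, ← hrest _ (left_mem_Icc.2 hθ₂.1.le)]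
  have hτ := Ioo_subset_Ico_self h.mem_Ioo
  have hp := h'.isSliding.contact_eq τ hτ
  have hq := h'.isSliding.contact_add_eq τ hτ
  have hmov : IsMoving V' α (θ' + τ) := by
    rw [IsMoving, hp, hq]
    exact h.isDeparture_right.isMoving
  have hsame : SameSweep V V' α θ₂ (θ' + τ) :=
    .of_apex_eq hα hV.nonempty hV'.nonempty hr.le hdep.isMoving hmov
      (h.apex_eq.trans (hstay θ₂ (right_mem_Icc.2 hθ₂.1.le)).symm)
  refine ⟨θ₂, hθ₂.1, hdep, ?_, fun s hs => ?_⟩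
  · rw [← hsame.center_eq, center, hp, hq, ← center, h.center_eq]
  · rcases le_total (s - θ) α with hle | hle
    · rw [min_eq_left hle, ← h.isSliding.apex_eq hα hV.nonempty hα.1 ⟨by linarith [hs.1], hle⟩,
        add_sub_cancel]
    · rw [min_eq_right hle, hstay s ⟨by linarith, hs.2⟩,
        h.isSliding.apex_eq hα hV.nonempty hα.1 (right_mem_Icc.2 hα.1.le)]

lemma IsDeparture.exists_seq (hα : 0 < α) (hθ : IsDeparture V α θ)
    (hnext : ∀ a, IsDeparture V α a → ∃ b, IsSweepThenRest V α a b) :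
    ∃ a : ℕ → ℝ, a 0 = θ ∧ (∀ n, a n + α ≤ a (n + 1)) ∧
      ∀ n, ∀ s ∈ Icc (a n) (a (n + 1)),
        apex V α s = sweep V α θ (n * α + min (s - a n) α) := by
  choose! next hnext using hnext
  have hdep (n : ℕ) : IsDeparture V α (next^[n] θ) := by
    induction n with
    | zero => exact hθ
    | succ n ih => rw [Function.iterate_succ_apply']; exact (hnext _ ih).isDeparture
  have hsweep (n : ℕ) (t : ℝ) : sweep V α (next^[n] θ) t = sweep V α θ (n * α + t) := by
    induction n generalizing t with
    | zero => simp
    | succ n ih =>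
      have hn := hnext _ (hdep n)
      have hlast := hn.apex_eq _ (right_mem_Icc.2 (by linarith [hn.add_lt]))
      rw [min_eq_right (by linarith [hn.add_lt])] at hlast
      rw [Function.iterate_succ_apply', sweep, hn.center_eq, hlast, sweep, add_sub_cancel_left,
        ← mul_assoc, ← dir_add, ← mul_add, ← sweep, ih]
      push_cast
      ring_nf
  refine ⟨fun n => next^[n] θ, rfl, fun n => ?_, fun n s hs => ?_⟩
  · simpa only [Function.iterate_succ_apply'] using (hnext _ (hdep n)).add_lt.le
  · simp only [Function.iterate_succ_apply'] at hs
    rw [(hnext _ (hdep n)).apex_eq s hs, hsweep]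

lemma IsMoving.exists_sweep_eq_of_mem_sphere (hα : α ∈ Ioo 0 π) (hV : V.Nonempty)
    (hθ : IsMoving V α θ) {y : ℂ}
    (hy : y ∈ Metric.sphere (center V α θ) ‖apex V α θ - center V α θ‖) :
    ∃ t, 0 ≤ t ∧ sweep V α θ t = y := by
  have hz := hθ.apex_sub_center_ne_zero hα hV
  set z := apex V α θ - center V α θ with hz_def
  obtain ⟨ψ', hψ'⟩ := exists_dir_eq (z := (y - center V α θ) / z)
    (by rw [norm_div, mem_sphere_iff_norm.1 hy, div_self (norm_ne_zero_iff.2 hz)])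
  obtain ⟨ψ, hψ, hdir⟩ := exists_mem_Ico_dir_eq 0 ψ'
  refine ⟨ψ / 2, by linarith [hψ.1], ?_⟩
  rw [sweep, ← hz_def, mul_div_cancel₀ ψ two_ne_zero, hdir, hψ', div_mul_cancel₀ _ hz,
    add_sub_cancel]

theorem IsDeparture.range_apex_eq_sphere (hα : α ∈ Ioo 0 π) (hV : V.Nonempty)
    (hθ : IsDeparture V α θ)
    (hnext : ∀ a, IsDeparture V α a → ∃ b, IsSweepThenRest V α a b) :
    range (apex V α) = Metric.sphere (center V α θ) ‖apex V α θ - center V α θ‖ := by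
  obtain ⟨a, ha₀, ha, hapex⟩ := hθ.exists_seq hα.1 hnext
  refine Subset.antisymm ?_ fun y hy => ?_
  · have hge (n : ℕ) : θ + n * α ≤ a n := by
      induction n with
      | zero => simp [ha₀]
      | succ n ih => push_cast; linarith [ha n]
    have hmem (n : ℕ) : ∀ s ∈ Icc θ (a n), ∃ t, apex V α s = sweep V α θ t := by
      induction n with
      | zero => exact fun s hs => ⟨0, by rw [sweep_zero, le_antisymm (ha₀ ▸ hs.2) hs.1]⟩
      | succ n ih =>
        intro s hs
        rcases le_total s (a n) with hle | hle
        · exact ih s ⟨hs.1, hle⟩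
        · exact ⟨_, hapex n s ⟨hle, hs.2⟩⟩
    rintro _ ⟨s, rfl⟩
    obtain ⟨s', hs', hdir⟩ := exists_mem_Ico_dir_eq θ s
    obtain ⟨n, hn⟩ := exists_nat_gt (2 * π / α)
    rw [div_lt_iff₀ hα.1] at hn
    obtain ⟨t, ht⟩ := hmem n s' ⟨hs'.1, by linarith [hs'.2, hge n]⟩
    rw [← apex_congr hdir, ht, sweep, mem_sphere_iff_norm, add_sub_cancel_left, norm_mul,
      norm_dir, one_mul]
  · obtain ⟨t, ht₀, rfl⟩ := hθ.isMoving.exists_sweep_eq_of_mem_sphere hα hV hy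
    set n := ⌊t / α⌋₊
    have hle : n * α ≤ t := (le_div_iff₀ hα.1).1 (Nat.floor_le (div_nonneg ht₀ hα.1.le))
    have hlt : t < (n + 1) * α := (div_lt_iff₀ hα.1).1 (Nat.lt_floor_add_one _)
    refine ⟨a n + (t - n * α), ?_⟩
    rw [hapex n _ ⟨by linarith, by linarith [ha n]⟩, add_sub_cancel_left,
      min_eq_left (by linarith), add_sub_cancel]

theorem support_eq_of_range_apex_eq (hα : α ∈ Ioo 0 π) (hV : V.Nontrivial) (hV' : V'.Nontrivial)
    (hr : range (apex V α) = range (apex V' α))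
    (hsphere : ¬∃ c r, range (apex V α) = Metric.sphere c r) : support V = support V' := by
  by_contra hne
  have hmov {W W' : Finset ℂ} (hW : W.Nontrivial) (hW' : W'.Nontrivial)
      (hr : range (apex W α) = range (apex W' α)) (hne : support W ≠ support W')
      (hsphere : ¬∃ c r, range (apex W α) = Metric.sphere c r) (θ : ℝ) : IsMoving W α θ := by
    by_contra hrest
    obtain ⟨θ₂, -, hdep, -⟩ := exists_isDeparture hα hW hrest
    exact hsphere ⟨_, _, hdep.range_apex_eq_sphere hα hW.nonempty fun _ ha =>
      ha.exists_isSweepThenRest hα hW hW' hr hne⟩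
  exact hne (support_eq_of_forall_isMoving hα hV hV' hr.le (hmov hV hV' hr hne hsphere)
    (hmov hV' hV hr.symm (Ne.symm hne) (hr ▸ hsphere)))

end FullSweep

/-! ### Minimal wedges in terms of heights -/

section Wedge

variable {P : Set Plane} {x y d₁ d₂ : Plane} {α ω θ : ℝ}

/-- The identification of the plane with `ℂ`. -/
def toComplex : Plane ≃ₗᵢ[ℝ] ℂ := Complex.orthonormalBasisOneI.repr.symm

/-- The unit vector in direction `θ + π / 2`. A minimal wedge whose outward normals have directions
`θ` and `θ + α` has arms `-tangent θ` and `tangent (θ + α)`. -/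
def tangent (θ : ℝ) : Plane := toComplex.symm (I * dir θ)

lemma height_tangent (φ ψ : ℝ) : height ψ (toComplex (tangent φ)) = Real.sin (ψ - φ) := by
  rw [tangent, toComplex.apply_symm_apply]
  simpa using height_mul_I_mul_dir 1 φ ψ

lemma height_add_smul_tangent (ψ s t a b : ℝ) (x : Plane) :
    height ψ (toComplex (x + s • -tangent a + t • tangent b)) =
      height ψ (toComplex x) - s * Real.sin (ψ - a) + t * Real.sin (ψ - b) := by
  simp only [map_add, map_smul, map_neg, height_tangent, smul_eq_mul]
  ring

lemma periodic_tangent : Function.Periodic tangent (2 * π) := fun θ => by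
  rw [tangent, periodic_dir, tangent]

lemma tangent_add_pi (θ : ℝ) : tangent (θ + π) = -tangent θ := by
  rw [tangent, tangent, dir_add, dir_pi, mul_neg_one, mul_neg, map_neg]

lemma norm_tangent (θ : ℝ) : ‖tangent θ‖ = 1 := by
  rw [tangent, LinearIsometryEquiv.norm_map, norm_mul, Complex.norm_I, norm_dir, one_mul]

lemma cos_angle_tangent (a b : ℝ) :
    Real.cos (InnerProductGeometry.angle (tangent a) (tangent b)) = Real.cos (b - a) := by
  rw [InnerProductGeometry.cos_angle, norm_tangent, norm_tangent, mul_one, div_one, tangent,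
    tangent, LinearIsometryEquiv.inner_map_map, Complex.inner, map_mul, conj_dir, Complex.conj_I,
    ← dir_re, sub_eq_add_neg, dir_add]
  congr 1
  linear_combination -(dir b * dir (-a)) * Complex.I_sq

lemma exists_tangent_eq (hd : ‖d₁‖ = 1) : ∃ θ, tangent θ = d₁ := by
  obtain ⟨θ, hθ⟩ := exists_dir_eq (z := -I * toComplex d₁) (by simpa using hd)
  refine ⟨θ, toComplex.injective ?_⟩
  rw [tangent, toComplex.apply_symm_apply, hθ]
  linear_combination -toComplex d₁ * Complex.I_sq

lemma angle_neg_tangent_tangent (hω : ω ∈ Icc 0 π) (θ : ℝ) :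
    InnerProductGeometry.angle (-tangent θ) (tangent (θ + (π - ω))) = ω := by
  refine Real.injOn_cos
    ⟨InnerProductGeometry.angle_nonneg _ _, InnerProductGeometry.angle_le_pi _ _⟩ hω ?_
  rw [InnerProductGeometry.angle_neg_left, Real.cos_pi_sub, cos_angle_tangent, add_sub_cancel_left,
    Real.cos_pi_sub, neg_neg]

lemma exists_eq_neg_tangent_and_eq_tangent (h₁ : ‖d₁‖ = 1) (h₂ : ‖d₂‖ = 1) :
    ∃ θ, (d₁ = -tangent θ ∧ d₂ = tangent (θ + (π - InnerProductGeometry.angle d₁ d₂))) ∨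
      (d₂ = -tangent θ ∧ d₁ = tangent (θ + (π - InnerProductGeometry.angle d₁ d₂))) := by
  obtain ⟨a, ha⟩ := exists_tangent_eq (norm_neg d₁ ▸ h₁)
  obtain ⟨b, rfl⟩ := exists_tangent_eq h₂
  obtain rfl : d₁ = -tangent a := by rw [ha, neg_neg]
  set α := π - InnerProductGeometry.angle (-tangent a) (tangent b) with hα
  have hcos : Real.cos (b - a) = Real.cos α := by
    rw [hα, InnerProductGeometry.angle_neg_left, sub_sub_cancel, cos_angle_tangent]
  obtain ⟨k, hk | hk⟩ := Real.cos_eq_cos_iff.1 hcos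
  · refine ⟨a, .inl ⟨rfl, ?_⟩⟩
    rw [show a + α = b + k * (2 * π) by rw [hk]; ring, periodic_tangent.int_mul k b]
  · refine ⟨b + π, .inr ⟨by rw [tangent_add_pi, neg_neg], ?_⟩⟩
    rw [show b + π + α = a + π + k * (2 * π) by rw [hk]; ring, periodic_tangent.int_mul k (a + π),
      tangent_add_pi]

lemma mem_wedgeSet_iff (hα : α ∈ Ioo 0 π) :
    y ∈ wedgeSet x (-tangent θ) (tangent (θ + α)) ↔
      height θ (toComplex y) ≤ height θ (toComplex x) ∧
        height (θ + α) (toComplex y) ≤ height (θ + α) (toComplex x) := by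
  have hsin := Real.sin_pos_of_mem_Ioo hα
  constructor
  · rintro ⟨s, t, hs, ht, rfl⟩
    rw [height_add_smul_tangent, height_add_smul_tangent, sub_self, sub_self, sub_add_cancel_left,
      add_sub_cancel_left, Real.sin_neg, Real.sin_zero]
    constructor <;> nlinarith
  · rintro ⟨h₁, h₂⟩
    refine ⟨(height (θ + α) (toComplex x) - height (θ + α) (toComplex y)) / Real.sin α,
      (height θ (toComplex x) - height θ (toComplex y)) / Real.sin α,
      div_nonneg (sub_nonneg.2 h₂) hsin.le, div_nonneg (sub_nonneg.2 h₁) hsin.le,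
      toComplex.injective (eq_of_height_eq (a := θ) (b := θ + α)
        (by rw [add_sub_cancel_left]; exact hsin.ne') ?_ ?_)⟩
    · rw [height_add_smul_tangent, sub_self, sub_add_cancel_left, Real.sin_neg, Real.sin_zero]
      field_simp
      ring
    · rw [height_add_smul_tangent, sub_self, add_sub_cancel_left, Real.sin_zero]
      field_simp
      ring

lemma mem_ray_neg_tangent_iff (hα : α ∈ Ioo 0 π)
    (hy : y ∈ wedgeSet x (-tangent θ) (tangent (θ + α))) :
    y ∈ ray x (-tangent θ) ↔ height θ (toComplex y) = height θ (toComplex x) := by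
  have hsin := Real.sin_pos_of_mem_Ioo hα
  constructor
  · rintro ⟨s, -, rfl⟩
    simpa using height_add_smul_tangent θ s 0 θ θ x
  · obtain ⟨s, t, hs, ht, rfl⟩ := hy
    intro h
    rw [height_add_smul_tangent, sub_self, sub_add_cancel_left, Real.sin_neg, Real.sin_zero] at h
    obtain rfl : t = 0 := by nlinarith
    exact ⟨s, hs, by rw [zero_smul, add_zero]⟩

lemma mem_ray_tangent_iff (hα : α ∈ Ioo 0 π)
    (hy : y ∈ wedgeSet x (-tangent θ) (tangent (θ + α))) :
    y ∈ ray x (tangent (θ + α)) ↔ height (θ + α) (toComplex y) = height (θ + α) (toComplex x) := by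
  have hsin := Real.sin_pos_of_mem_Ioo hα
  constructor
  · rintro ⟨t, -, rfl⟩
    simpa using height_add_smul_tangent (θ + α) 0 t θ (θ + α) x
  · obtain ⟨s, t, hs, ht, rfl⟩ := hy
    intro h
    rw [height_add_smul_tangent, sub_self, add_sub_cancel_left, Real.sin_zero] at h
    obtain rfl : s = 0 := by nlinarith
    exact ⟨t, ht, by rw [zero_smul, add_zero]⟩

lemma isMinWedge_neg_tangent_tangent_iff (hω : ω ∈ Ioo 0 π) :
    IsMinWedge P ω x (-tangent θ) (tangent (θ + (π - ω))) ↔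
      IsGreatest (height θ '' (toComplex '' P)) (height θ (toComplex x)) ∧
        IsGreatest (height (θ + (π - ω)) '' (toComplex '' P))
          (height (θ + (π - ω)) (toComplex x)) := by
  have hα : π - ω ∈ Ioo 0 π := ⟨by linarith [hω.2], by linarith [hω.1]⟩
  simp only [image_image]
  constructor
  · rintro ⟨-, -, -, hP, ⟨p, hpP, hp⟩, q, hqP, hq⟩
    exact ⟨⟨⟨p, hpP, (mem_ray_neg_tangent_iff hα (hP hpP)).1 hp⟩,
        forall_mem_image.2 fun y hy => ((mem_wedgeSet_iff hα).1 (hP hy)).1⟩,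
      ⟨q, hqP, (mem_ray_tangent_iff hα (hP hqP)).1 hq⟩,
        forall_mem_image.2 fun y hy => ((mem_wedgeSet_iff hα).1 (hP hy)).2⟩
  · rintro ⟨⟨⟨p, hpP, hp⟩, hP₁⟩, ⟨q, hqP, hq⟩, hP₂⟩
    have hP : P ⊆ wedgeSet x (-tangent θ) (tangent (θ + (π - ω))) := fun y hy =>
      (mem_wedgeSet_iff hα).2 ⟨hP₁ (mem_image_of_mem _ hy), hP₂ (mem_image_of_mem _ hy)⟩
    exact ⟨by rw [norm_neg, norm_tangent], norm_tangent _,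
      angle_neg_tangent_tangent (Ioo_subset_Icc_self hω) θ, hP,
      ⟨p, hpP, (mem_ray_neg_tangent_iff hα (hP hpP)).2 hp⟩,
      ⟨q, hqP, (mem_ray_tangent_iff hα (hP hqP)).2 hq⟩⟩

lemma wedgeSet_comm (x d₁ d₂ : Plane) : wedgeSet x d₁ d₂ = wedgeSet x d₂ d₁ := by
  ext y
  exact ⟨fun ⟨s, t, hs, ht, h⟩ => ⟨t, s, ht, hs, by rw [h, add_right_comm]⟩,
    fun ⟨s, t, hs, ht, h⟩ => ⟨t, s, ht, hs, by rw [h, add_right_comm]⟩⟩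

lemma isMinWedge_swap (h : IsMinWedge P ω x d₁ d₂) : IsMinWedge P ω x d₂ d₁ := by
  obtain ⟨h₁, h₂, hangle, hP, hd₁, hd₂⟩ := h
  exact ⟨h₂, h₁, InnerProductGeometry.angle_comm d₁ d₂ ▸ hangle, wedgeSet_comm x d₁ d₂ ▸ hP, hd₂,
    hd₁⟩

lemma mem_omegaCloud_iff :
    x ∈ omegaCloud P ω ↔ ∃ θ, IsMinWedge P ω x (-tangent θ) (tangent (θ + (π - ω))) := by
  refine ⟨fun ⟨d₁, d₂, h⟩ => ?_, fun ⟨θ, h⟩ => ⟨_, _, h⟩⟩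
  obtain ⟨θ, ⟨h₁, h₂⟩ | ⟨h₁, h₂⟩⟩ := exists_eq_neg_tangent_and_eq_tangent h.1 h.2.1
  · rw [h.2.2.1] at h₂
    exact ⟨θ, h₁ ▸ h₂ ▸ h⟩
  · rw [h.2.2.1] at h₂
    exact ⟨θ, h₁ ▸ h₂ ▸ isMinWedge_swap h⟩

end Wedge

/-! ### Convex hulls and clouds -/

section Cloud

variable {V V' : Finset Plane} {W : Finset ℂ} {ω : ℝ}

lemma isGreatest_height_convexHull (hW : W.Nonempty) (θ : ℝ) :
    IsGreatest (height θ '' convexHull ℝ (W : Set ℂ)) (support W θ) := by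
  refine ⟨⟨contact W θ, subset_convexHull ℝ _ (contact_mem hW θ), height_contact hW θ⟩,
    forall_mem_image.2 ?_⟩
  exact convexHull_min (fun v hv => height_le_support hv θ)
    (convex_halfSpace_le (height θ).toLinearMap.isLinear _)

lemma exists_eq_norm_mul_height (l : StrongDual ℝ ℂ) : ∃ θ, ∀ z, l z = ‖l‖ * height θ z := by
  set w := (InnerProductSpace.toDual ℝ ℂ).symm l with hw
  have hpolar : w = ‖l‖ • dir w.arg := by
    rw [← LinearIsometryEquiv.norm_map (InnerProductSpace.toDual ℝ ℂ).symm l, Complex.real_smul]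
    exact (Complex.norm_mul_exp_arg_mul_I w).symm
  refine ⟨w.arg, fun z => ?_⟩
  rw [← InnerProductSpace.toDual_symm_apply, ← hw, hpolar, real_inner_smul_left, ← hpolar]
  rfl

lemma mem_convexHull_iff_height_le (hW : W.Nonempty) {z : ℂ} :
    z ∈ convexHull ℝ (W : Set ℂ) ↔ ∀ θ, height θ z ≤ support W θ := by
  refine ⟨fun hz θ => (isGreatest_height_convexHull hW θ).2 (mem_image_of_mem _ hz), fun hz => ?_⟩
  rw [← iInter_halfSpaces_eq (convex_convexHull ℝ (W : Set ℂ))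
    (W.finite_toSet.isClosed_convexHull ℝ), mem_iInter]
  intro l
  obtain ⟨θ, hl⟩ := exists_eq_norm_mul_height l
  obtain ⟨y, hy, hyθ⟩ := (isGreatest_height_convexHull hW θ).1
  refine ⟨y, hy, ?_⟩
  rw [hl, hl, hyθ]
  exact mul_le_mul_of_nonneg_left (hz θ) (norm_nonneg l)

lemma image_toComplex_convexHull (V : Finset Plane) :
    toComplex '' convexHull ℝ (V : Set Plane) =
      convexHull ℝ ((V.image toComplex : Finset ℂ) : Set ℂ) := by
  rw [Finset.coe_image]
  exact toComplex.toLinearEquiv.toLinearMap.image_convexHull _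

lemma convexHull_eq_of_support_eq (hV : V.Nonempty) (hV' : V'.Nonempty)
    (h : support (V.image toComplex) = support (V'.image toComplex)) :
    convexHull ℝ (V : Set Plane) = convexHull ℝ (V' : Set Plane) := by
  apply toComplex.injective.image_injective
  ext z
  rw [image_toComplex_convexHull, image_toComplex_convexHull,
    mem_convexHull_iff_height_le (hV.image _), mem_convexHull_iff_height_le (hV'.image _), h]

theorem image_omegaCloud_convexHull (hV : V.Nonempty) (hω : ω ∈ Ioo 0 π) :
    toComplex '' omegaCloud (convexHull ℝ (V : Set Plane)) ω =
      range (apex (V.image toComplex) (π - ω)) := by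
  have hα : π - ω ∈ Ioo 0 π := ⟨by linarith [hω.2], by linarith [hω.1]⟩
  have hgreatest := isGreatest_height_convexHull (hV.image toComplex)
  have hwedge (x : Plane) (θ : ℝ) : IsMinWedge (convexHull ℝ (V : Set Plane)) ω x (-tangent θ)
      (tangent (θ + (π - ω))) ↔ apex (V.image toComplex) (π - ω) θ = toComplex x := by
    rw [isMinWedge_neg_tangent_tangent_iff hω, image_toComplex_convexHull]
    refine ⟨fun ⟨h₁, h₂⟩ => apex_eq_of_height_eq hα (h₁.unique (hgreatest _))
      (h₂.unique (hgreatest _)), fun h => ?_⟩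
    rw [← h, height_apex, height_add_apex hα]
    exact ⟨hgreatest _, hgreatest _⟩
  ext z
  obtain ⟨x, rfl⟩ := toComplex.surjective z
  rw [toComplex.injective.mem_set_image, mem_omegaCloud_iff, mem_range]
  exact exists_congr (hwedge x)

lemma omegaCloud_empty (ω : ℝ) : omegaCloud ∅ ω = ∅ :=
  eq_empty_of_forall_notMem fun _ ⟨_, _, h⟩ => h.2.2.2.2.1.ne_empty (empty_inter _)

lemma omegaCloud_singleton (hω : ω ∈ Ioo 0 π) (v : Plane) : omegaCloud {v} ω = {v} := by
  have hα : π - ω ∈ Ioo 0 π := ⟨by linarith [hω.2], by linarith [hω.1]⟩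
  have hsupport (θ : ℝ) : height θ (toComplex v) = support {toComplex v} θ := by
    have hW := Finset.singleton_nonempty (toComplex v)
    rw [← height_contact hW, Finset.mem_singleton.1 (contact_mem hW θ)]
  have happly (θ : ℝ) : apex {toComplex v} (π - ω) θ = toComplex v :=
    apex_eq_of_height_eq hα (hsupport θ) (hsupport _)
  have himage := image_omegaCloud_convexHull (Finset.singleton_nonempty v) hω
  rw [Finset.coe_singleton, convexHull_singleton, Finset.image_singleton, funext happly,
    range_const, ← image_singleton] at himage
  exact toComplex.injective.image_injective himage

lemma nontrivial_of_omegaCloud_ne_sphere (hω : ω ∈ Ioo 0 π)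
    (h : ¬∃ c r, omegaCloud (convexHull ℝ (V : Set Plane)) ω = Metric.sphere c r) :
    V.Nontrivial := by
  by_contra hV
  rcases (not_nontrivial_iff.1 hV).eq_empty_or_singleton with hV | ⟨v, hV⟩ <;> rw [hV] at h
  · exact h ⟨0, -1, by
      rw [convexHull_empty, omegaCloud_empty, Metric.sphere_eq_empty_of_neg neg_one_lt_zero]⟩
  · exact h ⟨v, 0, by rw [convexHull_singleton, omegaCloud_singleton hω, Metric.sphere_zero]⟩

end Cloud

end OmegaCloud

open OmegaCloud in
theorem stmt_15_general (V V' : Finset Plane) {ω : ℝ} (hω : ω ∈ Set.Ioo 0 π)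
    (heq : omegaCloud (convexHull ℝ (V : Set Plane)) ω =
      omegaCloud (convexHull ℝ (V' : Set Plane)) ω)
    (hnotcircle : ¬∃ (c : Plane) (r : ℝ),
      omegaCloud (convexHull ℝ (V : Set Plane)) ω = Metric.sphere c r) :
    convexHull ℝ (V : Set Plane) = convexHull ℝ (V' : Set Plane) := by
  have hV : V.Nontrivial := nontrivial_of_omegaCloud_ne_sphere hω hnotcircle
  have hV' : V'.Nontrivial := nontrivial_of_omegaCloud_ne_sphere hω (heq ▸ hnotcircle)
  have himage := image_omegaCloud_convexHull hV.nonempty hω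
  have hα : π - ω ∈ Ioo 0 π := ⟨by linarith [hω.2], by linarith [hω.1]⟩
  have hsphere : ¬∃ c r, range (apex (V.image toComplex) (π - ω)) = Metric.sphere c r := by
    rintro ⟨c, r, h⟩
    refine hnotcircle ⟨toComplex.symm c, r, toComplex.injective.image_injective ?_⟩
    rw [himage, h, toComplex.image_sphere, toComplex.apply_symm_apply]
  refine convexHull_eq_of_support_eq hV.nonempty hV'.nonempty
    (support_eq_of_range_apex_eq hα (hV.image_of_injOn toComplex.injective.injOn)
      (hV'.image_of_injOn toComplex.injective.injOn) ?_ hsphere)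
  rw [← himage, heq, image_omegaCloud_convexHull hV'.nonempty hω]

/-- For a fixed angle `ω` and a maximal `ω`-cloud consisting of at least two arcs (i.e. not a
full circle), the convex polygon is uniquely determined: two convex polygons with the same
(maximal) `ω`-cloud coincide. -/
theorem stmt_15 (V V' : Finset Plane) (hV : IsConvexPolygon V) (hV' : IsConvexPolygon V')
    (ω : ℝ) (hω : ω ∈ Set.Ioo 0 π)
    (heq : omegaCloud (convexHull ℝ (V : Set Plane)) ω =
      omegaCloud (convexHull ℝ (V' : Set Plane)) ω)
    (hnotcircle : ¬∃ (c : Plane) (r : ℝ),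
      omegaCloud (convexHull ℝ (V : Set Plane)) ω = Metric.sphere c r) :
    convexHull ℝ (V : Set Plane) = convexHull ℝ (V' : Set Plane) :=
  stmt_15_general V V' hω heq hnotcircle

end
end

section
/- There exists a circular arc sequence Ω, two distinct angles ω, ω' ∈ (0, π), and two distinct convex polygons P, P' such that Ω is simultaneously the maximal ω-cloud of P and the maximal ω'-cloud of P'. Concretely: let P be the triangle ace with angles π/3 at c, 16π/45 at e, 14π/45 at a, and ω = 2π/3; its ω-cloud Ω consists of three arcs. Letting b, d, f be the midpoints of these arcs, the hexagon P' = abcdef has all interior angles less than ω' = 5π/6, and Ω is the maximal ω'-cloud of P'. -/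
open EuclideanGeometry Real Set
open scoped Classical

noncomputable section

/-!
The `ω`-cloud of a polygon whose angles are all less than `ω` is the union of the inscribed-angle
arcs over its edges. From each point of either half of such an arc, the chord of that half is seen
under the angle `(π + ω) / 2`. Hence each arc is the union of two arcs for the angle `(π + ω) / 2`,
over the two chords that join its midpoint to its endpoints, and inserting all arc midpoints as new
vertices yields a polygon with the same cloud for the larger angle. The angles
at the old vertices grow by at most `π - ω` and those at the new vertices are `ω`, so this applies
as soon as the original angles are less than `(3 * ω - π) / 2`, which is `π / 2` for
`ω = 2 * π / 3`.
-/

open scoped RealInnerProductSpace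

section Oriented

variable {E : Type*} [NormedAddCommGroup E] [InnerProductSpace ℝ E]
  [Fact (Module.finrank ℝ E = 2)] (o : Orientation ℝ E (Fin 2)) {u w : E}

theorem areaForm_eq_norm_mul_norm_mul_sin_angle (h : 0 ≤ o.areaForm u w) :
    o.areaForm u w = ‖u‖ * ‖w‖ * sin (InnerProductGeometry.angle u w) := by
  rw [mul_comm, InnerProductGeometry.sin_angle_mul_norm_mul_norm, eq_comm, ← sqrt_sq h,
    real_inner_self_eq_norm_sq, real_inner_self_eq_norm_sq]
  congr 1
  linear_combination -o.inner_sq_add_areaForm_sq u w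

end Oriented

instance : Fact (Module.finrank ℝ Plane = 2) := ⟨finrank_euclideanSpace_fin⟩

/-- The standard orientation of the plane, for which `unitVec` turns counterclockwise. -/
def planeOrientation : Orientation ℝ Plane (Fin 2) :=
  (EuclideanSpace.basisFun (Fin 2) ℝ).toBasis.orientation

local notation "area" => Orientation.areaForm planeOrientation
local notation "J" => Orientation.rightAngleRotation planeOrientation

/-- The signed area spanned by `w` and the vector obtained from `u` by the counterclockwise rotation
through `ω`; when `w` makes an angle `θ` with `u`, measured counterclockwise, this is
`‖u‖ * ‖w‖ * sin (ω - θ)`. -/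
def rotatedArea (ω : ℝ) (u w : Plane) : ℝ := sin ω * ⟪u, w⟫ - cos ω * area u w

theorem rotatedArea_pos {ω : ℝ} {u w : Plane} (hω : ω < π) (hu : u ≠ 0) (hw : w ≠ 0)
    (harea : 0 ≤ area u w) (hangle : InnerProductGeometry.angle u w < ω) :
    0 < rotatedArea ω u w := by
  have hsin : 0 < sin (ω - InnerProductGeometry.angle u w) :=
    sin_pos_of_pos_of_lt_pi (sub_pos.2 hangle)
      (by linarith [InnerProductGeometry.angle_nonneg u w])
  calc 0 < ‖u‖ * ‖w‖ * sin (ω - InnerProductGeometry.angle u w) := by positivity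
    _ = rotatedArea ω u w := by
      rw [rotatedArea, areaForm_eq_norm_mul_norm_mul_sin_angle _ harea,
        ← InnerProductGeometry.cos_angle_mul_norm_mul_norm, sin_sub]
      ring

theorem rotatedArea_nonneg {ω : ℝ} {u w : Plane} (hω : ω < π) (harea : 0 ≤ area u w)
    (hangle : u ≠ 0 → w ≠ 0 → InnerProductGeometry.angle u w < ω) : 0 ≤ rotatedArea ω u w := by
  rcases eq_or_ne u 0 with rfl | hu
  · simp [rotatedArea]
  rcases eq_or_ne w 0 with rfl | hw
  · simp [rotatedArea]
  exact (rotatedArea_pos hω hu hw harea (hangle hu hw)).le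

theorem areaForm_plane (u w : Plane) : area u w = u 0 * w 1 - u 1 * w 0 := by
  rw [Orientation.areaForm_to_volumeForm,
    planeOrientation.volumeForm_robust (EuclideanSpace.basisFun (Fin 2) ℝ) rfl,
    Module.Basis.det_apply, Matrix.det_fin_two]
  simp only [Module.Basis.toMatrix_apply, OrthonormalBasis.coe_toBasis_repr_apply,
    EuclideanSpace.basisFun_repr, Matrix.cons_val_zero, Matrix.cons_val_one,
    Matrix.cons_val_fin_one]
  ring

theorem areaForm_smul_eq (u w z : Plane) : area u w • z = area z w • u + area u z • w := by
  ext i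
  fin_cases i
  all_goals
    simp only [areaForm_plane, Fin.zero_eta, Fin.mk_one, PiLp.add_apply, PiLp.smul_apply,
      smul_eq_mul]
    ring

theorem areaForm_sub_sub_cyclic (p q v : Plane) :
    area (p - q) (v - q) = area (v - p) (q - p) := by
  simp only [areaForm_plane, PiLp.sub_apply]
  ring

@[simp]
theorem unitVec_apply_zero (θ : ℝ) : unitVec θ 0 = cos θ := rfl

@[simp]
theorem unitVec_apply_one (θ : ℝ) : unitVec θ 1 = sin θ := rfl

@[simp]
theorem norm_unitVec (θ : ℝ) : ‖unitVec θ‖ = 1 := by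
  simp [EuclideanSpace.norm_eq, Fin.sum_univ_two]

@[simp]
theorem inner_unitVec (α β : ℝ) : ⟪unitVec α, unitVec β⟫ = cos (β - α) := by
  simp [PiLp.inner_apply, Fin.sum_univ_two, cos_sub]

@[simp]
theorem areaForm_unitVec (α β : ℝ) : area (unitVec α) (unitVec β) = sin (β - α) := by
  simp only [areaForm_plane, unitVec_apply_zero, unitVec_apply_one, sin_sub]
  ring

theorem rightAngleRotation_unitVec (θ : ℝ) : J (unitVec θ) = unitVec (θ + π / 2) := by
  refine ext_inner_right ℝ fun y => ?_
  rw [Orientation.inner_rightAngleRotation_left, areaForm_plane]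
  simp only [PiLp.inner_apply, Fin.sum_univ_two, Real.inner_apply, unitVec_apply_zero,
    unitVec_apply_one, cos_add_pi_div_two, sin_add_pi_div_two]
  ring

theorem unitVec_add (α β : ℝ) :
    unitVec (α + β) = cos β • unitVec α + sin β • J (unitVec α) := by
  rw [rightAngleRotation_unitVec]
  ext i
  fin_cases i
  · simp [cos_add, mul_comm, sub_eq_add_neg]
  · simp [sin_add, mul_comm]

theorem unitVec_sub_pi (θ : ℝ) : unitVec (θ - π) = -unitVec θ := by
  simp [sub_eq_add_neg, unitVec_add]

theorem exists_eq_norm_smul_unitVec (u : Plane) : ∃ φ, u = ‖u‖ • unitVec φ := by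
  have hnorm : ‖(⟨u 0, u 1⟩ : ℂ)‖ = ‖u‖ := by
    simp [Complex.norm_eq_sqrt_sq_add_sq, EuclideanSpace.norm_eq, Fin.sum_univ_two]
  refine ⟨Complex.arg ⟨u 0, u 1⟩, ?_⟩
  rw [← hnorm]
  ext i
  fin_cases i
  · simp [Complex.norm_mul_cos_arg]
  · simp [Complex.norm_mul_sin_arg]

theorem eq_norm_smul_unitVec_add_angle {φ : ℝ} {w : Plane} (h : 0 ≤ area (unitVec φ) w) :
    w = ‖w‖ • unitVec (φ + InnerProductGeometry.angle (unitVec φ) w) := by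
  have hinner := InnerProductGeometry.cos_angle_mul_norm_mul_norm (unitVec φ) w
  have harea := areaForm_eq_norm_mul_norm_mul_sin_angle planeOrientation h
  rw [norm_unitVec, one_mul] at hinner harea
  rw [unitVec_add, smul_add, smul_smul, smul_smul, ← harea, mul_comm, hinner]
  refine ext_inner_right ℝ fun y => ?_
  have := planeOrientation.inner_mul_inner_add_areaForm_mul_areaForm (unitVec φ) w y
  simp only [norm_unitVec] at this
  simp only [inner_add_left, real_inner_smul_left, Orientation.inner_rightAngleRotation_left]
  linear_combination -this

theorem angle_smul_unitVec {r s α β : ℝ} (hr : 0 < r) (hs : 0 < s) (h : |β - α| ≤ π) :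
    InnerProductGeometry.angle (r • unitVec α) (s • unitVec β) = |β - α| := by
  rw [InnerProductGeometry.angle_smul_left_of_pos _ _ hr,
    InnerProductGeometry.angle_smul_right_of_pos _ _ hs, InnerProductGeometry.angle,
    inner_unitVec, norm_unitVec, norm_unitVec, mul_one, div_one, ← cos_abs,
    arccos_cos (abs_nonneg _) h]

theorem exists_mem_eq_of_mem_convexHull {E : Type*} [AddCommGroup E] [Module ℝ E]
    (g : E →ₗ[ℝ] ℝ) {V : Set E} {m : ℝ} (hV : ∀ v ∈ V, m ≤ g v) {y : E}
    (hy : y ∈ convexHull ℝ V) (hgy : g y = m) : ∃ v ∈ V, g v = m := by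
  by_contra! hne
  have hlt : V ⊆ {v | m < g v} := fun v hv => lt_of_le_of_ne (hV v hv) (hne v hv).symm
  exact (convexHull_min hlt (convex_halfSpace_gt g.isLinear m) hy).ne' hgy

section Wedge

variable {P V : Set Plane} {ω : ℝ} {x y d₁ d₂ : Plane}

theorem wedgeSet_comm (x d₁ d₂ : Plane) : wedgeSet x d₁ d₂ = wedgeSet x d₂ d₁ := by
  ext y
  exact ⟨fun ⟨s, t, hs, ht, h⟩ => ⟨t, s, ht, hs, by rw [h, add_right_comm]⟩,
    fun ⟨s, t, hs, ht, h⟩ => ⟨t, s, ht, hs, by rw [h, add_right_comm]⟩⟩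

theorem convex_wedgeSet (x d₁ d₂ : Plane) : Convex ℝ (wedgeSet x d₁ d₂) := by
  rintro _ ⟨s, t, hs, ht, rfl⟩ _ ⟨s', t', hs', ht', rfl⟩ a b ha hb hab
  refine ⟨a * s + b * s', a * t + b * t', by positivity, by positivity, ?_⟩
  obtain rfl : b = 1 - a := by linarith
  module

theorem ray_subset_wedgeSet_left (x d₁ d₂ : Plane) : ray x d₁ ⊆ wedgeSet x d₁ d₂ := by
  rintro _ ⟨s, hs, rfl⟩
  exact ⟨s, 0, hs, le_rfl, by simp⟩

theorem mem_wedgeSet_iff (h : 0 < area d₁ d₂) :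
    y ∈ wedgeSet x d₁ d₂ ↔ 0 ≤ area d₁ (y - x) ∧ 0 ≤ area (y - x) d₂ := by
  constructor
  · rintro ⟨s, t, hs, ht, rfl⟩
    have hy : x + s • d₁ + t • d₂ - x = s • d₁ + t • d₂ := by abel
    simp only [hy, map_add, map_smul, LinearMap.add_apply, LinearMap.smul_apply, smul_eq_mul,
      Orientation.areaForm_apply_self, mul_zero, zero_add, add_zero]
    exact ⟨by positivity, by positivity⟩
  · rintro ⟨h₁, h₂⟩
    refine ⟨area (y - x) d₂ / area d₁ d₂, area d₁ (y - x) / area d₁ d₂, by positivity,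
      by positivity, ?_⟩
    have := areaForm_smul_eq d₁ d₂ (y - x)
    rw [add_assoc, div_eq_inv_mul, div_eq_inv_mul, mul_smul, mul_smul, ← smul_add, ← this,
      inv_smul_smul₀ h.ne', add_sub_cancel]

theorem mem_ray_left_iff (h : area d₁ d₂ ≠ 0) (hy : y ∈ wedgeSet x d₁ d₂) :
    y ∈ ray x d₁ ↔ area d₁ y = area d₁ x := by
  obtain ⟨s, t, hs, -, rfl⟩ := hy
  constructor
  · rintro ⟨r, -, hr⟩
    simp [hr]
  · intro h0
    have ht0 : t = 0 := by simpa [h] using h0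
    exact ⟨s, hs, by simp [ht0]⟩

theorem eq_of_mem_ray_of_mem_ray (h : area d₁ d₂ ≠ 0) (h₁ : y ∈ ray x d₁) (h₂ : y ∈ ray x d₂) :
    y = x := by
  obtain ⟨s, -, rfl⟩ := h₁
  obtain ⟨t, -, hst⟩ := h₂
  have hs : s = 0 := by simpa [h] using congrArg (area · d₂) (add_left_cancel hst)
  simp [hs]

theorem inter_ray_nonempty_of_convexHull (h : area d₁ d₂ ≠ 0) (hV : V ⊆ wedgeSet x d₁ d₂)
    (hne : (convexHull ℝ V ∩ ray x d₁).Nonempty) : (V ∩ ray x d₁).Nonempty := by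
  obtain ⟨y, hy, hray⟩ := hne
  have hle : ∀ v ∈ V, (area d₁ d₂ • area d₁) x ≤ (area d₁ d₂ • area d₁) v := fun v hv => by
    obtain ⟨s, t, -, ht, rfl⟩ := hV hv
    have : 0 ≤ area d₁ d₂ * (t * area d₁ d₂) := by
      linarith [mul_nonneg ht (mul_self_nonneg (area d₁ d₂))]
    simpa [mul_add] using this
  have hyx : (area d₁ d₂ • area d₁) y = (area d₁ d₂ • area d₁) x := by
    simpa [h] using (mem_ray_left_iff h (ray_subset_wedgeSet_left _ _ _ hray)).1 hray
  obtain ⟨v, hv, hvx⟩ := exists_mem_eq_of_mem_convexHull _ hle hy hyx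
  exact ⟨v, hv, (mem_ray_left_iff h (hV hv)).2 (by simpa [h] using hvx)⟩

theorem IsMinWedge.symm (h : IsMinWedge P ω x d₁ d₂) : IsMinWedge P ω x d₂ d₁ := by
  obtain ⟨h₁, h₂, hangle, hsub, hne₁, hne₂⟩ := h
  exact ⟨h₂, h₁, by rwa [InnerProductGeometry.angle_comm], by rwa [wedgeSet_comm], hne₂, hne₁⟩

theorem isMinWedge_convexHull_iff (h : area d₁ d₂ ≠ 0) :
    IsMinWedge (convexHull ℝ V) ω x d₁ d₂ ↔ IsMinWedge V ω x d₁ d₂ := by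
  have h' : area d₂ d₁ ≠ 0 := by rwa [Orientation.areaForm_swap, neg_ne_zero]
  rw [IsMinWedge, IsMinWedge, (convex_wedgeSet x d₁ d₂).convexHull_subset_iff]
  refine and_congr_right' (and_congr_right' (and_congr_right' (and_congr_right fun hV => ?_)))
  have hmono : ∀ d, V ∩ ray x d ⊆ convexHull ℝ V ∩ ray x d := fun d =>
    inter_subset_inter_left _ (subset_convexHull ℝ V)
  exact ⟨fun ⟨h₁, h₂⟩ => ⟨inter_ray_nonempty_of_convexHull h hV h₁,
      inter_ray_nonempty_of_convexHull h' (wedgeSet_comm x d₁ d₂ ▸ hV) h₂⟩,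
    fun ⟨h₁, h₂⟩ => ⟨h₁.mono (hmono d₁), h₂.mono (hmono d₂)⟩⟩

theorem mem_omegaCloud_iff :
    x ∈ omegaCloud P ω ↔ ∃ φ, IsMinWedge P ω x (unitVec φ) (unitVec (φ + ω)) := by
  refine ⟨fun ⟨d₁, d₂, h⟩ => ?_, fun ⟨φ, h⟩ => ⟨_, _, h⟩⟩
  wlog harea : 0 ≤ area d₁ d₂ generalizing d₁ d₂
  · refine this d₂ d₁ h.symm ?_
    rw [Orientation.areaForm_swap]
    linarith
  obtain ⟨φ, hφ⟩ := exists_eq_norm_smul_unitVec d₁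
  rw [h.1, one_smul] at hφ
  subst hφ
  have hd₂ := eq_norm_smul_unitVec_add_angle harea
  rw [h.2.1, h.2.2.1, one_smul] at hd₂
  exact ⟨φ, hd₂ ▸ h⟩

theorem omegaCloud_convexHull (hω₀ : 0 < ω) (hω : ω < π) :
    omegaCloud (convexHull ℝ V) ω = omegaCloud V ω := by
  ext x
  have harea : ∀ φ, area (unitVec φ) (unitVec (φ + ω)) ≠ 0 := fun φ => by
    simpa using (sin_pos_of_pos_of_lt_pi hω₀ hω).ne'
  simp_rw [mem_omegaCloud_iff, isMinWedge_convexHull_iff (harea _)]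

end Wedge

section Angle

variable {v a b d₁ d₂ : Plane} {φ θ : ℝ}

theorem exists_angle_le_of_mem_wedgeSet (hθ₀ : 0 < θ) (hθ : θ < π)
    (ha : a ∈ wedgeSet v (unitVec φ) (unitVec (φ + θ))) (hav : a ≠ v) :
    ∃ α ∈ Icc 0 θ, a - v = ‖a - v‖ • unitVec (φ + α) := by
  have hpos : 0 < area (unitVec φ) (unitVec (φ + θ)) := by
    simpa using sin_pos_of_pos_of_lt_pi hθ₀ hθ
  obtain ⟨hright, hleft⟩ := (mem_wedgeSet_iff hpos).1 ha
  set α := InnerProductGeometry.angle (unitVec φ) (a - v)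
  have hα : a - v = ‖a - v‖ • unitVec (φ + α) := eq_norm_smul_unitVec_add_angle hright
  refine ⟨α, ⟨InnerProductGeometry.angle_nonneg _ _, ?_⟩, hα⟩
  by_contra! hlt
  have hsin : sin (θ - α) < 0 := sin_neg_of_neg_of_neg_pi_lt (by linarith)
    (by linarith [InnerProductGeometry.angle_le_pi (unitVec φ) (a - v)])
  have hnorm : 0 < ‖a - v‖ := norm_sub_pos_iff.2 hav
  rw [hα] at hleft
  simp only [map_smul, LinearMap.smul_apply, areaForm_unitVec, add_sub_add_left_eq_sub,
    smul_eq_mul] at hleft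
  exact (mul_neg_of_pos_of_neg hnorm hsin).not_ge hleft

theorem wedgeSet_smul {r s : ℝ} (hr : 0 < r) (hs : 0 < s) :
    wedgeSet v (r • d₁) (s • d₂) = wedgeSet v d₁ d₂ := by
  ext y
  constructor
  · rintro ⟨m, n, hm, hn, rfl⟩
    exact ⟨m * r, n * s, by positivity, by positivity, by simp [mul_smul]⟩
  · rintro ⟨m, n, hm, hn, rfl⟩
    exact ⟨m / r, n / s, by positivity, by positivity, by simp [smul_smul, hr.ne', hs.ne']⟩

theorem angle_le_of_mem_wedgeSet (hd : 0 < area d₁ d₂) (ha : a ∈ wedgeSet v d₁ d₂)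
    (hb : b ∈ wedgeSet v d₁ d₂) (hav : a ≠ v) (hbv : b ≠ v) :
    ∠ a v b ≤ InnerProductGeometry.angle d₁ d₂ := by
  have hd₁ : 0 < ‖d₁‖ := norm_pos_iff.2 fun h => by simp [h] at hd
  have hd₂ : 0 < ‖d₂‖ := norm_pos_iff.2 fun h => by simp [h] at hd
  obtain ⟨φ, hφ⟩ := exists_eq_norm_smul_unitVec d₁
  set θ := InnerProductGeometry.angle d₁ d₂ with hθ
  have hθ' : θ = InnerProductGeometry.angle (unitVec φ) d₂ := by
    rw [hθ, hφ, InnerProductGeometry.angle_smul_left_of_pos _ _ hd₁]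
  have hsin : 0 < sin θ := by
    rw [areaForm_eq_norm_mul_norm_mul_sin_angle _ hd.le] at hd
    exact pos_of_mul_pos_right hd (by positivity)
  have hd₂φ : d₂ = ‖d₂‖ • unitVec (φ + θ) := by
    refine hθ' ▸ eq_norm_smul_unitVec_add_angle ?_
    rw [hφ] at hd
    simp only [map_smul, LinearMap.smul_apply, smul_eq_mul] at hd
    exact (pos_of_mul_pos_right hd hd₁.le).le
  have hθ₀ : 0 < θ := (InnerProductGeometry.angle_nonneg _ _).lt_of_ne fun h => by
    simp [θ, ← h] at hsin
  have hθπ : θ < π := (InnerProductGeometry.angle_le_pi _ _).lt_of_ne fun h => by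
    simp [θ, h] at hsin
  rw [hφ, hd₂φ, wedgeSet_smul hd₁ hd₂] at ha hb
  obtain ⟨α, ⟨hα₀, hα⟩, haα⟩ := exists_angle_le_of_mem_wedgeSet hθ₀ hθπ ha hav
  obtain ⟨β, ⟨hβ₀, hβ⟩, hbβ⟩ := exists_angle_le_of_mem_wedgeSet hθ₀ hθπ hb hbv
  have habs : |φ + β - (φ + α)| ≤ θ := by
    rw [abs_le]
    constructor <;> linarith
  rw [EuclideanGeometry.angle, vsub_eq_sub, vsub_eq_sub, haα, hbβ,
    angle_smul_unitVec (norm_sub_pos_iff.2 hav) (norm_sub_pos_iff.2 hbv) (habs.trans hθπ.le)]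
  exact habs

theorem interiorAngle_le_of_subset_wedgeSet {P : Set Plane} (hd : 0 < area d₁ d₂)
    (hP : P ⊆ wedgeSet v d₁ d₂) : interiorAngle P v ≤ InnerProductGeometry.angle d₁ d₂ := by
  refine Real.sSup_le ?_ (InnerProductGeometry.angle_nonneg _ _)
  rintro _ ⟨a, ha, b, hb, hav, hbv, rfl⟩
  exact angle_le_of_mem_wedgeSet hd (hP ha) (hP hb) hav hbv

end Angle

/-- The points from which `q` lies on the left arm and `p` on the right arm of an `ω`-wedge. For
`0 < ω < π` and `p ≠ q` this is the inscribed-angle arc over the chord from `q` to `p`, on the right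
of that chord, with its endpoints. -/
def wedgeArc (ω : ℝ) (q p : Plane) : Set Plane :=
  {x | ∃ φ, p ∈ ray x (unitVec φ) ∧ q ∈ ray x (unitVec (φ + ω))}

theorem left_mem_wedgeArc (ω : ℝ) (q p : Plane) : q ∈ wedgeArc ω q p := by
  obtain ⟨φ, hφ⟩ := exists_eq_norm_smul_unitVec (p - q)
  exact ⟨φ, ⟨‖p - q‖, norm_nonneg _, by rw [← hφ, add_sub_cancel]⟩, ⟨0, le_rfl, by simp⟩⟩

section ArmCoordinates

variable {ω φ : ℝ} {x p q v : Plane}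

theorem exists_eq_add_armCoordinates (h : sin ω ≠ 0) (φ : ℝ) (x v : Plane) :
    ∃ α β : ℝ, v = x + α • unitVec φ + β • unitVec (φ + ω) := by
  have harea : area (unitVec φ) (unitVec (φ + ω)) = sin ω := by simp
  have hsmul := areaForm_smul_eq (unitVec φ) (unitVec (φ + ω)) (v - x)
  rw [harea] at hsmul
  refine ⟨(sin ω)⁻¹ * area (v - x) (unitVec (φ + ω)), (sin ω)⁻¹ * area (unitVec φ) (v - x), ?_⟩
  rw [add_assoc, mul_smul, mul_smul, ← smul_add, ← hsmul, inv_smul_smul₀ h, add_sub_cancel]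

theorem areaForm_armCoordinates (φ ω a b a' b' : ℝ) :
    area (a • unitVec φ + b • unitVec (φ + ω)) (a' • unitVec φ + b' • unitVec (φ + ω)) =
      (a * b' - b * a') * sin ω := by
  simp only [map_add, map_smul, LinearMap.add_apply, LinearMap.smul_apply, smul_eq_mul,
    areaForm_unitVec, sub_self, sin_zero, add_sub_cancel_left, sub_add_cancel_left, sin_neg]
  ring

theorem inner_armCoordinates (φ ω a b a' b' : ℝ) :
    ⟪a • unitVec φ + b • unitVec (φ + ω), a' • unitVec φ + b' • unitVec (φ + ω)⟫ =
      a * a' + b * b' + (a * b' + b * a') * cos ω := by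
  simp only [inner_add_left, inner_add_right, real_inner_smul_left, real_inner_smul_right,
    inner_unitVec, sub_self, cos_zero, add_sub_cancel_left, sub_add_cancel_left, cos_neg]
  ring

theorem norm_sq_armCoordinates (φ ω a b : ℝ) :
    ‖a • unitVec φ + b • unitVec (φ + ω)‖ ^ 2 = a ^ 2 + b ^ 2 + 2 * (a * b) * cos ω := by
  rw [← real_inner_self_eq_norm_sq, inner_armCoordinates]
  ring

theorem rotatedArea_armCoordinates (φ ω a b a' b' : ℝ) :
    rotatedArea ω (a • unitVec φ + b • unitVec (φ + ω)) (a' • unitVec φ + b' • unitVec (φ + ω)) =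
      (a * a' + b * b' + 2 * (b * a') * cos ω) * sin ω := by
  rw [rotatedArea, areaForm_armCoordinates, inner_armCoordinates]
  ring

/-- In arm coordinates: a point inside the triangle `x p q` sees `p` and `q` under an angle at least
that at the apex `x`. Here `s` and `t` are the distances of `p` and `q` from `x`, `(α, β)` are the
coordinates of the point, and `c` is the cosine of the angle at `x`. -/
theorem quadratic_nonneg_of_mem_triangle {s t α β c : ℝ} (hα : 0 ≤ α) (hβ : 0 ≤ β) (hs : 0 ≤ s)
    (ht : 0 ≤ t) (hc : c ≤ 1) (h : 0 < s * t - α * t - β * s) :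
    0 ≤ (s - α) * α + β * (t - β) - 2 * (α * β) * c := by
  have hst : 0 < s * t := by linarith [mul_nonneg hα ht, mul_nonneg hβ hs]
  have hchord : 0 ≤ s ^ 2 + t ^ 2 - 2 * c * (s * t) := by
    linarith [sq_nonneg (s - t), mul_nonneg hst.le (sub_nonneg.2 hc)]
  refine nonneg_of_mul_nonneg_right ?_ hst
  calc 0 ≤ (s * t - α * t - β * s) * (α * s + β * t) +
        α * β * (s ^ 2 + t ^ 2 - 2 * c * (s * t)) := by positivity
    _ = s * t * ((s - α) * α + β * (t - β) - 2 * (α * β) * c) := by ring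

theorem areaForm_sub_sub_nonneg_of_mem_wedgeSet (hω₀ : 0 < ω) (hω : ω < π)
    (hp : p ∈ ray x (unitVec φ)) (hq : q ∈ ray x (unitVec (φ + ω)))
    (hv : v ∈ wedgeSet x (unitVec φ) (unitVec (φ + ω)))
    (hthin : p ≠ v → q ≠ v → ∠ p v q < ω) : 0 ≤ area (p - q) (v - q) := by
  obtain ⟨s, hs, hp⟩ := hp
  obtain ⟨t, ht, hq⟩ := hq
  obtain ⟨α, β, hα, hβ, hv⟩ := hv
  have hsin := sin_pos_of_pos_of_lt_pi hω₀ hω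
  have hpv : p - v = (s - α) • unitVec φ + (-β) • unitVec (φ + ω) := by rw [hp, hv]; module
  have hqv : q - v = (-α) • unitVec φ + (t - β) • unitVec (φ + ω) := by rw [hq, hv]; module
  have harea : area (p - v) (q - v) = (s * t - α * t - β * s) * sin ω := by
    rw [hpv, hqv, areaForm_armCoordinates]
    ring
  have hedge : area (p - q) (v - q) = -area (p - v) (q - v) := by
    rw [areaForm_sub_sub_cyclic, areaForm_sub_sub_cyclic, Orientation.areaForm_swap]
  rw [hedge]
  by_contra! hneg
  replace hneg : 0 < area (p - v) (q - v) := by linarith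
  have hpv₀ : p - v ≠ 0 := fun h => by simp [h] at hneg
  have hqv₀ : q - v ≠ 0 := fun h => by simp [h] at hneg
  have hrot := rotatedArea_pos hω hpv₀ hqv₀ hneg.le
    (hthin (sub_ne_zero.1 hpv₀) (sub_ne_zero.1 hqv₀))
  rw [hpv, hqv, rotatedArea_armCoordinates] at hrot
  have hquad := quadratic_nonneg_of_mem_triangle hα hβ hs ht (cos_le_one ω)
    (pos_of_mul_pos_left (harea ▸ hneg) hsin.le)
  linarith [pos_of_mul_pos_left hrot hsin.le]

theorem mem_wedgeSet_of_areaForm_sub_sub_nonneg (hω₀ : 0 < ω) (hω : ω < π) (hpq : p ≠ q)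
    (hp : p ∈ ray x (unitVec φ)) (hq : q ∈ ray x (unitVec (φ + ω)))
    (harea : 0 ≤ area (p - q) (v - q)) (hthinp : v ≠ p → ∠ v p q < ω)
    (hthinq : v ≠ q → ∠ p q v < ω) : v ∈ wedgeSet x (unitVec φ) (unitVec (φ + ω)) := by
  obtain ⟨s, hs, hp⟩ := hp
  obtain ⟨t, ht, hq⟩ := hq
  have hsin := sin_pos_of_pos_of_lt_pi hω₀ hω
  obtain ⟨α, β, hv⟩ := exists_eq_add_armCoordinates hsin.ne' φ x v
  have hvp : v - p = (α - s) • unitVec φ + β • unitVec (φ + ω) := by rw [hp, hv]; module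
  have hqp : q - p = (-s) • unitVec φ + t • unitVec (φ + ω) := by rw [hq, hp]; module
  have hpq' : p - q = s • unitVec φ + (-t) • unitVec (φ + ω) := by rw [hq, hp]; module
  have hvq : v - q = α • unitVec φ + (β - t) • unitVec (φ + ω) := by rw [hv, hq]; module
  have hchord : 0 < s ^ 2 + t ^ 2 - 2 * (s * t) * cos ω := by
    have : 0 < ‖p - q‖ ^ 2 := by
      have := sub_ne_zero.2 hpq
      positivity
    rw [hpq', norm_sq_armCoordinates] at this
    linarith
  have harea' : 0 ≤ area (v - p) (q - p) := areaForm_sub_sub_cyclic p q v ▸ harea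
  have hrotp := rotatedArea_nonneg hω harea' fun h _ => hthinp (sub_ne_zero.1 h)
  have hrotq := rotatedArea_nonneg hω harea fun _ h => hthinq (sub_ne_zero.1 h)
  rw [hvp, hqp, rotatedArea_armCoordinates] at hrotp
  rw [hpq', hvq, rotatedArea_armCoordinates] at hrotq
  rw [hvp, hqp, areaForm_armCoordinates] at harea'
  rw [hpq', hvq, areaForm_armCoordinates] at harea
  replace hrotp := nonneg_of_mul_nonneg_left hrotp hsin
  replace hrotq := nonneg_of_mul_nonneg_left hrotq hsin
  replace harea := nonneg_of_mul_nonneg_left harea hsin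
  replace harea' := nonneg_of_mul_nonneg_left harea' hsin
  refine ⟨α, β, nonneg_of_mul_nonneg_right ?_ hchord, nonneg_of_mul_nonneg_right ?_ hchord, hv⟩
  · linarith [mul_nonneg ht harea, mul_nonneg hs hrotq]
  · linarith [mul_nonneg hs harea', mul_nonneg ht hrotp]

end ArmCoordinates

/-- A strictly convex polygon with vertices `f i`, traversed counterclockwise by `next`: each edge
has all the other vertices strictly on its left. -/
structure IsCCWPolygon {ι : Type*} (next : Equiv.Perm ι) (f : ι → Plane) : Prop where
  next_next_ne (i : ι) : next (next i) ≠ i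
  areaForm_pos (i j : ι) : j ≠ i → j ≠ next i → 0 < area (f (next i) - f i) (f j - f i)

/-- The polygon `f` is `ω`-thin: the angle between consecutive edges is less than `ω` at each
vertex. -/
def IsThin {ι : Type*} (next : Equiv.Perm ι) (f : ι → Plane) (ω : ℝ) : Prop :=
  ∀ i, ∠ (f i) (f (next i)) (f (next (next i))) < ω

theorem IsThin.mono {ι : Type*} {next : Equiv.Perm ι} {f : ι → Plane} {ω ω' : ℝ}
    (h : IsThin next f ω) (hω : ω ≤ ω') : IsThin next f ω' :=
  fun i => (h i).trans_le hω

namespace IsCCWPolygon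

variable {ι : Type*} {next : Equiv.Perm ι} {f : ι → Plane} {ω : ℝ}

theorem next_ne (h : IsCCWPolygon next f) (i : ι) : next i ≠ i :=
  fun hi => h.next_next_ne i (by rw [hi, hi])

theorem areaForm_nonneg (h : IsCCWPolygon next f) (i j : ι) :
    0 ≤ area (f (next i) - f i) (f j - f i) := by
  rcases eq_or_ne j i with rfl | hj
  · simp
  rcases eq_or_ne j (next i) with rfl | hj'
  · rw [Orientation.areaForm_apply_self]
  exact (h.areaForm_pos i j hj hj').le

theorem injective (h : IsCCWPolygon next f) : Function.Injective f := by
  intro i j hij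
  by_contra hne
  by_cases hj : j = next i
  · simpa [← hj, hij] using
      h.areaForm_pos i (next (next i)) (h.next_next_ne i) (h.next_ne (next i))
  · simpa [hij] using h.areaForm_pos i j (Ne.symm hne) hj

theorem map_next_ne (h : IsCCWPolygon next f) (i : ι) : f (next i) ≠ f i :=
  h.injective.ne (h.next_ne i)

theorem areaForm_vertex_pos (h : IsCCWPolygon next f) (i : ι) :
    0 < area (f (next (next i)) - f (next i)) (f i - f (next i)) :=
  h.areaForm_pos (next i) i (h.next_ne i).symm (h.next_next_ne i).symm

theorem convexHull_subset_wedgeSet (h : IsCCWPolygon next f) (i : ι) :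
    convexHull ℝ (range f) ⊆
      wedgeSet (f (next i)) (f (next (next i)) - f (next i)) (f i - f (next i)) := by
  refine convexHull_min ?_ (convex_wedgeSet _ _ _)
  rintro _ ⟨j, rfl⟩
  refine (mem_wedgeSet_iff (h.areaForm_vertex_pos i)).2 ⟨h.areaForm_nonneg (next i) j, ?_⟩
  rw [← areaForm_sub_sub_cyclic]
  exact h.areaForm_nonneg i j

theorem angle_le (h : IsCCWPolygon next f) (i : ι) {a b : Plane}
    (ha : a ∈ range f) (hb : b ∈ range f) (hav : a ≠ f (next i))
    (hbv : b ≠ f (next i)) : ∠ a (f (next i)) b ≤ ∠ (f i) (f (next i)) (f (next (next i))) := by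
  have hsub := (subset_convexHull ℝ _).trans (h.convexHull_subset_wedgeSet i)
  rw [angle_comm (f i)]
  exact angle_le_of_mem_wedgeSet (h.areaForm_vertex_pos i) (hsub ha) (hsub hb) hav hbv

theorem interiorAngle_le (h : IsCCWPolygon next f) (i : ι) :
    interiorAngle (convexHull ℝ (range f)) (f (next i)) ≤
      ∠ (f i) (f (next i)) (f (next (next i))) := by
  rw [angle_comm]
  exact interiorAngle_le_of_subset_wedgeSet (h.areaForm_vertex_pos i)
    (h.convexHull_subset_wedgeSet i)

theorem interiorAngle_lt (h : IsCCWPolygon next f) (hthin : IsThin next f ω) (i : ι) :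
    interiorAngle (convexHull ℝ (range f)) (f i) < ω := by
  obtain ⟨j, rfl⟩ := next.surjective i
  exact (h.interiorAngle_le j).trans_lt (hthin j)

theorem areaForm_diagonal_pos (h : IsCCWPolygon next f) {i j : ι} (hj : j ≠ next i) :
    0 < area (f (next (next i)) - f i) (f j - f (next i)) := by
  have hsplit : area (f (next (next i)) - f i) (f j - f (next i)) =
      area (f (next (next i)) - f (next i)) (f j - f (next i)) +
        area (f (next i) - f i) (f j - f i) := by
    simp only [areaForm_plane, PiLp.sub_apply]
    ring
  rw [hsplit]
  by_cases hjn : j = next (next i)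
  · exact add_pos_of_nonneg_of_pos (h.areaForm_nonneg _ _)
      (h.areaForm_pos i j (hjn ▸ h.next_next_ne i) hj)
  · exact add_pos_of_pos_of_nonneg (h.areaForm_pos _ _ hj hjn) (h.areaForm_nonneg _ _)

theorem isConvexPolygon [Fintype ι] [Nonempty ι] (h : IsCCWPolygon next f) :
    IsConvexPolygon (Finset.univ.image f) := by
  constructor
  · obtain ⟨i⟩ := ‹Nonempty ι›
    rw [Finset.card_image_of_injective _ h.injective]
    refine (Finset.card_eq_three.2 ⟨i, next i, next (next i), (h.next_ne i).symm,
      (h.next_next_ne i).symm, (h.next_ne _).symm, rfl⟩).symm.trans_le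
      (Finset.card_le_univ {i, next i, next (next i)})
  · intro v hv hmem
    obtain ⟨j, -, rfl⟩ := Finset.mem_image.1 hv
    obtain ⟨i, rfl⟩ := next.surjective j
    have hsub : ((Finset.univ.image f).erase (f (next i)) : Set Plane) ⊆
        {y | area (f (next (next i)) - f i) (f (next i)) < area (f (next (next i)) - f i) y} := by
      intro y hy
      obtain ⟨⟨j, rfl⟩, hy⟩ : (∃ j, f j = y) ∧ y ≠ f (next i) := by simpa using hy
      have := h.areaForm_diagonal_pos (i := i) (j := j) fun hj => hy (hj ▸ rfl)
      rwa [map_sub, sub_pos] at this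
    have hlt := convexHull_min hsub
      (convex_halfSpace_gt (area (f (next (next i)) - f i)).isLinear _) hmem
    exact lt_irrefl _ hlt.out

theorem omegaCloud_subset (h : IsCCWPolygon next f) (hω₀ : 0 < ω) (hω : ω < π)
    (hthin : IsThin next f ω) :
    omegaCloud (range f) ω ⊆ ⋃ i, wedgeArc ω (f i) (f (next i)) := by
  intro x hx
  obtain ⟨φ, -, -, -, hsub, ⟨_, ⟨j, rfl⟩, hj⟩, ⟨_, ⟨k, rfl⟩, hk⟩⟩ := mem_omegaCloud_iff.1 hx
  refine mem_iUnion.2 ⟨k, ?_⟩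
  by_cases hjk : j = k
  · subst hjk
    have hx : f j = x := eq_of_mem_ray_of_mem_ray
      (by simpa using (sin_pos_of_pos_of_lt_pi hω₀ hω).ne') hj hk
    exact hx ▸ left_mem_wedgeArc ω (f j) (f (next j))
  have hedge := areaForm_sub_sub_nonneg_of_mem_wedgeSet hω₀ hω hj hk (hsub ⟨next k, rfl⟩)
    fun hne hne' => (h.angle_le k ⟨j, rfl⟩ ⟨k, rfl⟩ hne hne').trans_lt (hthin k)
  obtain rfl : j = next k := by
    by_contra hne
    rw [Orientation.areaForm_swap] at hedge
    linarith [h.areaForm_pos k j hjk hne]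
  exact ⟨φ, hj, hk⟩

theorem wedgeArc_subset_omegaCloud (h : IsCCWPolygon next f) (hω₀ : 0 < ω) (hω : ω < π)
    (hthin : IsThin next f ω) (i : ι) :
    wedgeArc ω (f i) (f (next i)) ⊆ omegaCloud (range f) ω := by
  rintro x ⟨φ, hp, hq⟩
  refine mem_omegaCloud_iff.2
    ⟨φ, norm_unitVec _, norm_unitVec _, ?_, ?_, ⟨_, ⟨_, rfl⟩, hp⟩, ⟨_, ⟨_, rfl⟩, hq⟩⟩
  · simpa [abs_of_pos hω₀, hω.le] using
      angle_smul_unitVec (α := φ) (β := φ + ω) one_pos one_pos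
  · rintro _ ⟨j, rfl⟩
    refine mem_wedgeSet_of_areaForm_sub_sub_nonneg hω₀ hω (h.map_next_ne i) hp hq
      (h.areaForm_nonneg i j)
      (fun hne => (h.angle_le i ⟨j, rfl⟩ ⟨i, rfl⟩ hne ?_).trans_lt (hthin i)) fun hne => ?_
    · exact (h.map_next_ne i).symm
    · obtain ⟨k, rfl⟩ := next.surjective i
      exact (h.angle_le k ⟨_, rfl⟩ ⟨j, rfl⟩ (h.map_next_ne _) hne).trans_lt (hthin k)

theorem omegaCloud_convexHull_range (h : IsCCWPolygon next f) (hω₀ : 0 < ω) (hω : ω < π)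
    (hthin : IsThin next f ω) :
    omegaCloud (convexHull ℝ (range f)) ω = ⋃ i, wedgeArc ω (f i) (f (next i)) := by
  rw [omegaCloud_convexHull hω₀ hω]
  exact (h.omegaCloud_subset hω₀ hω hthin).antisymm
    (iUnion_subset (h.wedgeArc_subset_omegaCloud hω₀ hω hthin))

end IsCCWPolygon

/-- The midpoint of the arc `wedgeArc ω q p`: the apex of the isosceles triangle over the chord
from `q` to `p`, on its right, with apex angle `ω`. -/
def arcMidpoint (ω : ℝ) (q p : Plane) : Plane := midpoint ℝ q p - (cot (ω / 2) / 2) • J (p - q)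

section ArcMidpoint

variable {ω φ : ℝ} {p q : Plane}

theorem arcMidpoint_self (ω : ℝ) (v : Plane) : arcMidpoint ω v v = v := by
  simp [arcMidpoint]

theorem arcMidpoint_neg (ω : ℝ) (q p : Plane) : arcMidpoint (-ω) p q = arcMidpoint ω q p := by
  simp only [arcMidpoint, midpoint_comm p q, map_sub, neg_div, cot_eq_cos_div_sin, cos_neg,
    sin_neg, div_neg]
  module

theorem eq_zero_of_eq_smul_rightAngleRotation {z : Plane} {k : ℝ} (h : z = k • J z) : z = 0 := by
  have hzz : ⟪z, z⟫ = k * ⟪J z, z⟫ := by rw [← real_inner_smul_left, ← h]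
  simpa using hzz

theorem arcMidpoint_left_injective (ω : ℝ) (p : Plane) :
    Function.Injective fun q => arcMidpoint ω q p := by
  intro q q' h
  refine sub_eq_zero.1 (eq_zero_of_eq_smul_rightAngleRotation (k := -cot (ω / 2)) ?_)
  simp only [arcMidpoint, midpoint_eq_smul_add, map_sub, invOf_eq_inv] at h ⊢
  linear_combination (norm := module) (2 : ℝ) • h

theorem arcMidpoint_right_injective (ω : ℝ) (q : Plane) :
    Function.Injective fun p => arcMidpoint ω q p := by
  simpa only [arcMidpoint_neg] using arcMidpoint_left_injective (-ω) q

theorem sin_half_pos (hω₀ : 0 < ω) (hω : ω < π) : 0 < sin (ω / 2) :=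
  sin_pos_of_pos_of_lt_pi (half_pos hω₀) (by linarith)

theorem arcMidpoint_armCoordinates (h : sin (ω / 2) ≠ 0) (φ s t : ℝ) (x : Plane) :
    arcMidpoint ω (x + t • unitVec (φ + ω)) (x + s • unitVec φ) =
      x + ((t - s) / (2 * sin (ω / 2))) • unitVec (φ + (π + ω) / 2) := by
  obtain ⟨ψ, rfl⟩ : ∃ ψ, φ = ψ + -(ω / 2) := ⟨φ + ω / 2, by ring⟩
  rw [show ψ + -(ω / 2) + ω = ψ + ω / 2 by ring,
    show ψ + -(ω / 2) + (π + ω) / 2 = ψ + π / 2 by ring, ← rightAngleRotation_unitVec,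
    unitVec_add, unitVec_add]
  simp only [arcMidpoint, midpoint_eq_smul_add, map_sub, map_add, map_smul, invOf_eq_inv,
    Orientation.rightAngleRotation_rightAngleRotation, cos_neg, sin_neg, cot_eq_cos_div_sin]
  match_scalars <;> field_simp
  · norm_num
  · ring
  · linear_combination (t - s) * sin_sq_add_cos_sq (ω / 2)
  · ring

theorem arcMidpoint_sub_left (h : sin (ω / 2) ≠ 0) {L : ℝ} (hL : p - q = L • unitVec φ) :
    arcMidpoint ω q p - q = (L / (2 * sin (ω / 2))) • unitVec (φ - (π - ω) / 2) := by
  have hb := arcMidpoint_armCoordinates h φ L 0 q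
  rw [zero_smul, add_zero, ← hL, add_sub_cancel] at hb
  rw [hb, add_sub_cancel_left, show φ - (π - ω) / 2 = φ + (π + ω) / 2 - π by ring,
    unitVec_sub_pi]
  module

theorem arcMidpoint_sub_right (h : sin (ω / 2) ≠ 0) {L : ℝ} (hL : p - q = L • unitVec φ) :
    arcMidpoint ω q p - p = (L / (2 * sin (ω / 2))) • unitVec (φ - π + (π - ω) / 2) := by
  have hb := arcMidpoint_armCoordinates h (φ - π - ω) 0 L p
  rw [sub_add_cancel, unitVec_sub_pi, smul_neg, ← hL, neg_sub, add_sub_cancel, zero_smul,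
    add_zero, sub_zero] at hb
  rw [hb, add_sub_cancel_left]
  congr 2
  ring

theorem half_norm_sub_div_sin_pos (hω₀ : 0 < ω) (hω : ω < π) (hpq : p ≠ q) :
    0 < ‖p - q‖ / (2 * sin (ω / 2)) :=
  div_pos (norm_sub_pos_iff.2 hpq) (mul_pos two_pos (sin_half_pos hω₀ hω))

theorem angle_arcMidpoint (hω₀ : 0 < ω) (hω : ω < π) (hpq : p ≠ q) :
    ∠ q (arcMidpoint ω q p) p = ω := by
  obtain ⟨φ, hφ⟩ := exists_eq_norm_smul_unitVec (p - q)
  have hsin := (sin_half_pos hω₀ hω).ne'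
  have hk := half_norm_sub_div_sin_pos hω₀ hω hpq
  have habs : |φ - π + (π - ω) / 2 - (φ - (π - ω) / 2)| = ω := by
    rw [show φ - π + (π - ω) / 2 - (φ - (π - ω) / 2) = -ω by ring, abs_neg, abs_of_pos hω₀]
  rw [EuclideanGeometry.angle, vsub_eq_sub, vsub_eq_sub, ← InnerProductGeometry.angle_neg_neg,
    neg_sub, neg_sub, arcMidpoint_sub_left hsin hφ, arcMidpoint_sub_right hsin hφ,
    angle_smul_unitVec hk hk (habs.trans_le hω.le), habs]

theorem angle_arcMidpoint_left (hω₀ : 0 < ω) (hω : ω < π) (hpq : p ≠ q) :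
    ∠ (arcMidpoint ω q p) q p = (π - ω) / 2 := by
  obtain ⟨φ, hφ⟩ := exists_eq_norm_smul_unitVec (p - q)
  have habs : |φ - (φ - (π - ω) / 2)| = (π - ω) / 2 := by
    rw [sub_sub_cancel, abs_of_pos (by linarith)]
  rw [EuclideanGeometry.angle, vsub_eq_sub, vsub_eq_sub,
    arcMidpoint_sub_left (sin_half_pos hω₀ hω).ne' hφ]
  nth_rw 2 [hφ]
  rw [angle_smul_unitVec (half_norm_sub_div_sin_pos hω₀ hω hpq) (norm_sub_pos_iff.2 hpq)
    (by linarith), habs]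

theorem angle_arcMidpoint_right (hω₀ : 0 < ω) (hω : ω < π) (hpq : p ≠ q) :
    ∠ q p (arcMidpoint ω q p) = (π - ω) / 2 := by
  obtain ⟨φ, hφ⟩ := exists_eq_norm_smul_unitVec (p - q)
  have habs : |φ - π + (π - ω) / 2 - (φ - π)| = (π - ω) / 2 := by
    rw [add_sub_cancel_left, abs_of_pos (by linarith)]
  have hqp : q - p = ‖p - q‖ • unitVec (φ - π) := by
    rw [unitVec_sub_pi, smul_neg, ← hφ, neg_sub]
  rw [EuclideanGeometry.angle, vsub_eq_sub, vsub_eq_sub,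
    arcMidpoint_sub_right (sin_half_pos hω₀ hω).ne' hφ, hqp,
    angle_smul_unitVec (norm_sub_pos_iff.2 hpq) (half_norm_sub_div_sin_pos hω₀ hω hpq)
    (by linarith), habs]

theorem wedgeArc_eq_union_arcMidpoint (h : 0 < sin (ω / 2)) (q p : Plane) :
    wedgeArc ω q p = wedgeArc ((π + ω) / 2) q (arcMidpoint ω q p) ∪
      wedgeArc ((π + ω) / 2) (arcMidpoint ω q p) p := by
  ext x
  constructor
  · rintro ⟨φ, ⟨s, hs, rfl⟩, ⟨t, ht, rfl⟩⟩
    rw [arcMidpoint_armCoordinates h.ne']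
    rcases le_total t s with hts | hst
    · refine .inl ⟨φ + (π + ω) / 2 - π, ?_, ⟨t, ht, ?_⟩⟩
      · refine ⟨(s - t) / (2 * sin (ω / 2)), div_nonneg (sub_nonneg.2 hts) (by positivity), ?_⟩
        rw [unitVec_sub_pi]
        module
      · ring_nf
    · exact .inr ⟨φ, ⟨s, hs, rfl⟩, _, div_nonneg (sub_nonneg.2 hst) (by positivity), rfl⟩
  · rintro (⟨φ, ⟨r, hr, hb⟩, ⟨t, ht, rfl⟩⟩ | ⟨φ, ⟨s, hs, rfl⟩, ⟨r, hr, hb⟩⟩)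
    · obtain ⟨ψ, rfl⟩ : ∃ ψ, φ = ψ + (π + ω) / 2 - π := ⟨φ - (π + ω) / 2 + π, by ring⟩
      rw [show ψ + (π + ω) / 2 - π + (π + ω) / 2 = ψ + ω by ring] at hb ⊢
      have hpos : 0 ≤ t + r * (2 * sin (ω / 2)) := by positivity
      have hψ := arcMidpoint_armCoordinates h.ne' ψ (t + r * (2 * sin (ω / 2))) t x
      rw [sub_add_cancel_left, neg_div, mul_div_cancel_right₀ _ (by positivity), neg_smul,
        ← smul_neg, ← unitVec_sub_pi, ← hb] at hψ
      exact ⟨ψ, ⟨_, hpos, (arcMidpoint_right_injective ω _ hψ).symm⟩, t, ht, rfl⟩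
    · have hpos : 0 ≤ s + r * (2 * sin (ω / 2)) := by positivity
      have hφ := arcMidpoint_armCoordinates h.ne' φ s (s + r * (2 * sin (ω / 2))) x
      rw [add_sub_cancel_left, mul_div_cancel_right₀ _ (by positivity), ← hb] at hφ
      exact ⟨φ, ⟨s, hs, rfl⟩, _, hpos, (arcMidpoint_left_injective ω _ hφ).symm⟩

end ArcMidpoint

theorem one_sub_cos_mul_cot_half {ω : ℝ} (h : sin (ω / 2) ≠ 0) :
    (1 - cos ω) * cot (ω / 2) = sin ω := by
  obtain ⟨η, rfl⟩ : ∃ η, ω = 2 * η := ⟨ω / 2, by ring⟩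
  rw [mul_div_cancel_left₀ η two_ne_zero] at h ⊢
  rw [cot_eq_cos_div_sin, cos_two_mul, sin_two_mul]
  field_simp
  linear_combination -2 * cos η * sin_sq_add_cos_sq η

theorem sin_mul_cot_half {ω : ℝ} (h : sin (ω / 2) ≠ 0) :
    sin ω * cot (ω / 2) = 1 + cos ω := by
  obtain ⟨η, rfl⟩ : ∃ η, ω = 2 * η := ⟨ω / 2, by ring⟩
  rw [mul_div_cancel_left₀ η two_ne_zero] at h ⊢
  rw [cot_eq_cos_div_sin, cos_two_mul, sin_two_mul]
  field_simp
  ring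

theorem areaForm_arcMidpoint_sub_left {ω : ℝ} (h : sin (ω / 2) ≠ 0) (q p v₁ v₂ : Plane) :
    2 * (1 - cos ω) * area (arcMidpoint ω q p - q) (arcMidpoint ω v₁ v₂ - q) =
      rotatedArea ω (p - q) (v₁ - q) + area (p - q) (v₂ - q) := by
  have hcot := one_sub_cos_mul_cot_half h
  have hcot_sq : (1 - cos ω) * cot (ω / 2) ^ 2 = 1 + cos ω := by
    rw [pow_two, ← mul_assoc, hcot, sin_mul_cot_half h]
  set k := cot (ω / 2)
  have hb : arcMidpoint ω q p - q = (1 / 2 : ℝ) • (p - q) - (k / 2) • J (p - q) := by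
    rw [arcMidpoint, midpoint_eq_smul_add, invOf_eq_inv]
    module
  have hv : arcMidpoint ω v₁ v₂ - q =
      (1 / 2 : ℝ) • ((v₁ - q) + (v₂ - q)) - (k / 2) • (J (v₂ - q) - J (v₁ - q)) := by
    rw [arcMidpoint, midpoint_eq_smul_add, invOf_eq_inv, ← map_sub, sub_sub_sub_cancel_right]
    module
  rw [hb, hv, rotatedArea]
  generalize p - q = u, v₁ - q = a, v₂ - q = c
  simp only [map_add, map_sub, map_smul, LinearMap.sub_apply, LinearMap.smul_apply, smul_eq_mul,
    Orientation.areaForm_rightAngleRotation_left, Orientation.areaForm_rightAngleRotation_right,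
    Orientation.inner_rightAngleRotation_left]
  linear_combination ⟪u, a⟫ * hcot + (area u c - area u a) / 2 * hcot_sq

theorem areaForm_arcMidpoint_sub_right {ω : ℝ} (h : sin (ω / 2) ≠ 0) (q p v₁ v₂ : Plane) :
    2 * (1 - cos ω) * area (arcMidpoint ω v₁ v₂ - p) (arcMidpoint ω q p - p) =
      area (v₁ - p) (q - p) + rotatedArea ω (v₂ - p) (q - p) := by
  have hmirror := areaForm_arcMidpoint_sub_left (ω := -ω) (by simpa [neg_div] using h) p q v₂ v₁
  rw [rotatedArea, arcMidpoint_neg, arcMidpoint_neg, cos_neg, sin_neg, real_inner_comm,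
    Orientation.areaForm_swap, Orientation.areaForm_swap _ (q - p),
    Orientation.areaForm_swap _ (q - p)] at hmirror
  rw [rotatedArea]
  linear_combination -hmirror

/-- The cyclic order of `bulge`: each vertex `inl i` is followed by the new vertex `inr i`. -/
def bulgeNext {ι : Type*} (next : Equiv.Perm ι) : Equiv.Perm (ι ⊕ ι) :=
  (Equiv.sumComm ι ι).trans (next.sumCongr 1)

/-- The polygon obtained from `f` by inserting, between the endpoints of every edge, the midpoint
of the `ω`-arc over that edge. -/
def bulge {ι : Type*} (ω : ℝ) (next : Equiv.Perm ι) (f : ι → Plane) : ι ⊕ ι → Plane :=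
  Sum.elim f fun i => arcMidpoint ω (f i) (f (next i))

section Bulge

variable {ι : Type*} (ω : ℝ) (next : Equiv.Perm ι) (f : ι → Plane) (i : ι)

@[simp]
theorem bulgeNext_inl : bulgeNext next (.inl i) = .inr i := rfl

@[simp]
theorem bulgeNext_inr : bulgeNext next (.inr i) = .inl (next i) := rfl

@[simp]
theorem bulge_inl : bulge ω next f (.inl i) = f i := rfl

@[simp]
theorem bulge_inr : bulge ω next f (.inr i) = arcMidpoint ω (f i) (f (next i)) := rfl

end Bulge

namespace IsCCWPolygon

variable {ι : Type*} {next : Equiv.Perm ι} {f : ι → Plane} {ω : ℝ}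

theorem rotatedArea_pos_left (h : IsCCWPolygon next f) (hω : ω < π)
    (hthin : IsThin next f ω) {i j : ι} (hj : j ≠ i) :
    0 < rotatedArea ω (f (next i) - f i) (f j - f i) := by
  obtain ⟨k, rfl⟩ := next.surjective i
  have hnn := h.map_next_ne (next k)
  have hjn := h.injective.ne hj
  exact rotatedArea_pos hω (sub_ne_zero.2 hnn) (sub_ne_zero.2 hjn)
    (h.areaForm_nonneg _ j) ((h.angle_le k ⟨_, rfl⟩ ⟨j, rfl⟩ hnn hjn).trans_lt (hthin k))

theorem rotatedArea_pos_right (h : IsCCWPolygon next f) (hω : ω < π)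
    (hthin : IsThin next f ω) {i j : ι} (hj : j ≠ next i) :
    0 < rotatedArea ω (f j - f (next i)) (f i - f (next i)) := by
  have hi := (h.map_next_ne i).symm
  have hjn := h.injective.ne hj
  refine rotatedArea_pos hω (sub_ne_zero.2 hjn) (sub_ne_zero.2 hi)
    ?_ ((h.angle_le i ⟨j, rfl⟩ ⟨i, rfl⟩ hjn hi).trans_lt (hthin i))
  rw [← areaForm_sub_sub_cyclic]
  exact h.areaForm_nonneg i j

end IsCCWPolygon

section Bulge

variable {ι : Type*} {next : Equiv.Perm ι} {f : ι → Plane} {ω : ℝ}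

theorem isCCWPolygon_bulge (h : IsCCWPolygon next f) (hω₀ : 0 < ω) (hω : ω < π)
    (hthin : IsThin next f ω) : IsCCWPolygon (bulgeNext next) (bulge ω next f) where
  next_next_ne := by
    rintro (i | i) <;> simp [h.next_ne]
  areaForm_pos := by
    have hsin := (sin_half_pos hω₀ hω).ne'
    have hcos : 0 < 2 * (1 - cos ω) := by
      have := cos_lt_cos_of_nonneg_of_le_pi le_rfl hω.le hω₀
      rw [cos_zero] at this
      linarith
    rintro (i | i) (j | j) hj hj' <;> refine pos_of_mul_pos_right ?_ hcos.le
    · have hj : j ≠ i := fun h => hj (h ▸ rfl)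
      have := areaForm_arcMidpoint_sub_left hsin (f i) (f (next i)) (f j) (f j)
      rw [arcMidpoint_self] at this
      rw [bulgeNext_inl, bulge_inr, bulge_inl, bulge_inl, this]
      exact add_pos_of_pos_of_nonneg (h.rotatedArea_pos_left hω hthin hj) (h.areaForm_nonneg i j)
    · have hj : j ≠ i := fun h => hj' (h ▸ rfl)
      rw [bulgeNext_inl, bulge_inr, bulge_inr, bulge_inl, areaForm_arcMidpoint_sub_left hsin]
      exact add_pos_of_pos_of_nonneg (h.rotatedArea_pos_left hω hthin hj)
        (h.areaForm_nonneg i (next j))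
    · have hj : j ≠ next i := fun h => hj' (h ▸ rfl)
      have := areaForm_arcMidpoint_sub_right hsin (f i) (f (next i)) (f j) (f j)
      rw [arcMidpoint_self] at this
      simp only [bulgeNext_inr, bulge_inl, bulge_inr]
      rw [areaForm_sub_sub_cyclic, this]
      refine add_pos_of_nonneg_of_pos ?_ (h.rotatedArea_pos_right hω hthin hj)
      rw [← areaForm_sub_sub_cyclic]
      exact h.areaForm_nonneg i j
    · have hj : next j ≠ next i := fun h => hj (next.injective h ▸ rfl)
      simp only [bulgeNext_inr, bulge_inl, bulge_inr]
      rw [areaForm_sub_sub_cyclic, areaForm_arcMidpoint_sub_right hsin,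
        ← areaForm_sub_sub_cyclic]
      exact add_pos_of_nonneg_of_pos (h.areaForm_nonneg i j)
        (h.rotatedArea_pos_right hω hthin hj)

theorem isThin_bulge (hf : ∀ i, f (next i) ≠ f i) (hω₀ : 0 < ω) (hω : ω < π)
    (hthin : IsThin next f ((3 * ω - π) / 2)) :
    IsThin (bulgeNext next) (bulge ω next f) ((π + ω) / 2) := by
  rintro (i | i)
  · simp only [bulgeNext_inl, bulgeNext_inr, bulge_inl, bulge_inr]
    rw [angle_arcMidpoint hω₀ hω (hf i)]
    linarith
  · simp only [bulgeNext_inl, bulgeNext_inr, bulge_inl, bulge_inr]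
    set b := arcMidpoint ω (f i) (f (next i)) with hb
    set b' := arcMidpoint ω (f (next i)) (f (next (next i))) with hb'
    calc ∠ b (f (next i)) b'
        ≤ ∠ b (f (next i)) (f i) + ∠ (f i) (f (next i)) b' := angle_le_angle_add_angle _ _ _ _
      _ ≤ ∠ b (f (next i)) (f i) + (∠ (f i) (f (next i)) (f (next (next i))) +
            ∠ (f (next (next i))) (f (next i)) b') := by
          gcongr
          exact angle_le_angle_add_angle _ _ _ _
      _ = (π - ω) / 2 + (∠ (f i) (f (next i)) (f (next (next i))) + (π - ω) / 2) := by
          rw [angle_comm b, angle_comm _ _ b', hb, hb', angle_arcMidpoint_right hω₀ hω (hf _),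
            angle_arcMidpoint_left hω₀ hω (hf _)]
      _ < (π + ω) / 2 := by linarith [hthin i]

theorem IsCCWPolygon.convexHull_range_ne_bulge [Nonempty ι] (h : IsCCWPolygon next f)
    (hω₀ : 0 < ω) (hω : ω < π) (hthin : IsThin next f ω) :
    convexHull ℝ (range f) ≠ convexHull ℝ (range (bulge ω next f)) := by
  obtain ⟨i⟩ := ‹Nonempty ι›
  intro heq
  have hleft : convexHull ℝ (range f) ⊆
      {y | area (f (next i) - f i) (f i) ≤ area (f (next i) - f i) y} := by
    refine convexHull_min ?_ (convex_halfSpace_ge (area (f (next i) - f i)).isLinear _)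
    rintro _ ⟨j, rfl⟩
    simpa only [mem_ofPred_eq, map_sub, sub_nonneg] using h.areaForm_nonneg i j
  have hmem := hleft (heq ▸ subset_convexHull ℝ (range (bulge ω next f)) ⟨.inr i, rfl⟩)
  have hright := (isCCWPolygon_bulge h hω₀ hω hthin).areaForm_pos (.inl i) (.inl (next i))
    (by simpa using h.next_ne i) (by simp)
  rw [Orientation.areaForm_swap] at hright
  simp only [bulgeNext_inl, bulge_inl, bulge_inr, mem_ofPred_eq, map_sub,
    LinearMap.sub_apply] at hmem hright
  linarith

theorem IsCCWPolygon.omegaCloud_bulge (h : IsCCWPolygon next f) (hω₀ : 0 < ω) (hω : ω < π)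
    (hthin : IsThin next f ((3 * ω - π) / 2)) :
    omegaCloud (convexHull ℝ (range (bulge ω next f))) ((π + ω) / 2) =
      omegaCloud (convexHull ℝ (range f)) ω := by
  have hthin' : IsThin next f ω := hthin.mono (by linarith)
  rw [(isCCWPolygon_bulge h hω₀ hω hthin').omegaCloud_convexHull_range (by linarith) (by linarith)
      (isThin_bulge h.map_next_ne hω₀ hω hthin),
    h.omegaCloud_convexHull_range hω₀ hω hthin', iUnion_sum, ← iUnion_union_distrib]
  exact iUnion_congr fun i => (wedgeArc_eq_union_arcMidpoint (sin_half_pos hω₀ hω) _ _).symm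

end Bulge

/-- A triangle with interior angles `γ`, `β` and `π - β - γ` at its vertices `0`, `1` and `2`,
scaled so that the sides are the sines of the opposite angles. -/
def triangle (β γ : ℝ) : Fin 3 → Plane :=
  ![0, sin (β + γ) • unitVec 0, sin β • unitVec γ]

section Triangle

theorem isCCWPolygon_finRotate_three {f : Fin 3 → Plane} (h : 0 < area (f 1 - f 0) (f 2 - f 0)) :
    IsCCWPolygon (finRotate 3) f where
  next_next_ne := by decide
  areaForm_pos i j hi hj := by
    have h₁ := h
    rw [areaForm_sub_sub_cyclic] at h₁
    have h₂ := h₁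
    rw [areaForm_sub_sub_cyclic] at h₂
    fin_cases i <;> fin_cases j <;> first | exact h | exact h₁ | exact h₂ | simp at hi hj

variable {β γ : ℝ}

theorem triangle_one_sub_zero :
    triangle β γ 1 - triangle β γ 0 = sin (β + γ) • unitVec 0 := by
  simp [triangle]

theorem triangle_two_sub_zero : triangle β γ 2 - triangle β γ 0 = sin β • unitVec γ := by
  simp [triangle]

theorem triangle_one_sub_two : triangle β γ 1 - triangle β γ 2 = sin γ • unitVec (-β) := by
  ext k
  fin_cases k
  · simp [triangle, sin_add, mul_comm]
  · simp [triangle, mul_comm]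

theorem isCCWPolygon_triangle (hβ : 0 < β) (hγ : 0 < γ) (hβγ : β + γ < π) :
    IsCCWPolygon (finRotate 3) (triangle β γ) := by
  have hsinβ : 0 < sin β := sin_pos_of_pos_of_lt_pi hβ (by linarith)
  have hsinγ : 0 < sin γ := sin_pos_of_pos_of_lt_pi hγ (by linarith)
  have hsin : 0 < sin (β + γ) := sin_pos_of_pos_of_lt_pi (by linarith) hβγ
  refine isCCWPolygon_finRotate_three ?_
  rw [triangle_one_sub_zero, triangle_two_sub_zero]
  simpa using mul_pos hsinβ (mul_pos hsin hsinγ)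

theorem angle_triangle_zero (hβ : 0 < β) (hγ : 0 < γ) (hβγ : β + γ < π) :
    ∠ (triangle β γ 2) (triangle β γ 0) (triangle β γ 1) = γ := by
  have habs : |γ - 0| = γ := by rw [sub_zero, abs_of_pos hγ]
  rw [angle_comm, EuclideanGeometry.angle, vsub_eq_sub, vsub_eq_sub, triangle_one_sub_zero,
    triangle_two_sub_zero, angle_smul_unitVec (sin_pos_of_pos_of_lt_pi (by linarith) hβγ)
      (sin_pos_of_pos_of_lt_pi hβ (by linarith)) (by linarith), habs]

theorem angle_triangle_one (hβ : 0 < β) (hγ : 0 < γ) (hβγ : β + γ < π) :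
    ∠ (triangle β γ 0) (triangle β γ 1) (triangle β γ 2) = β := by
  have habs : |-β - 0| = β := by rw [sub_zero, abs_neg, abs_of_pos hβ]
  rw [EuclideanGeometry.angle, vsub_eq_sub, vsub_eq_sub, ← InnerProductGeometry.angle_neg_neg,
    neg_sub, neg_sub, triangle_one_sub_zero, triangle_one_sub_two,
    angle_smul_unitVec (sin_pos_of_pos_of_lt_pi (by linarith) hβγ)
      (sin_pos_of_pos_of_lt_pi hγ (by linarith)) (by linarith), habs]

theorem angle_triangle_two (hβ : 0 < β) (hγ : 0 < γ) (hβγ : β + γ < π) :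
    ∠ (triangle β γ 1) (triangle β γ 2) (triangle β γ 0) = π - β - γ := by
  have habs : |γ - π - -β| = π - β - γ := by
    rw [abs_of_neg (by linarith)]
    ring
  have hside : triangle β γ 0 - triangle β γ 2 = sin β • unitVec (γ - π) := by
    rw [unitVec_sub_pi, smul_neg, ← triangle_two_sub_zero, neg_sub]
  rw [EuclideanGeometry.angle, vsub_eq_sub, vsub_eq_sub, triangle_one_sub_two, hside,
    angle_smul_unitVec (sin_pos_of_pos_of_lt_pi hγ (by linarith))
      (sin_pos_of_pos_of_lt_pi hβ (by linarith)) (by linarith), habs]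

theorem isThin_triangle {ω : ℝ} (hβ : 0 < β) (hγ : 0 < γ) (hβγ : β + γ < π) (hβω : β < ω)
    (hγω : γ < ω) (hω : π - β - γ < ω) : IsThin (finRotate 3) (triangle β γ) ω := by
  intro i
  fin_cases i
  · exact (angle_triangle_one hβ hγ hβγ).trans_lt hβω
  · exact (angle_triangle_two hβ hγ hβγ).trans_lt hω
  · exact (angle_triangle_zero hβ hγ hβγ).trans_lt hγω

end Triangle

/-- Non-uniqueness when `ω` is unknown and `ω ≥ π/2` is allowed: there is a curve (a circular
arc sequence, given as the common point set) which is simultaneously the maximal `2π/3`-cloud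
of a triangle `ace` (with angles `π/3`, `16π/45`, `14π/45`) and the maximal `5π/6`-cloud of a
hexagon `abcdef` all of whose interior angles are less than `5π/6`. -/
theorem stmt_17 :
    ∃ (V V' : Finset Plane) (ω ω' : ℝ) (a b c d e f : Plane),
      IsConvexPolygon V ∧ IsConvexPolygon V' ∧
      V.card = 3 ∧ V'.card = 6 ∧
      ω = 2 * π / 3 ∧ ω' = 5 * π / 6 ∧ ω ≠ ω' ∧
      (V : Set Plane) = {a, c, e} ∧ (V' : Set Plane) = {a, b, c, d, e, f} ∧
      ∠ a c e = π / 3 ∧ ∠ c e a = 16 * π / 45 ∧ ∠ e a c = 14 * π / 45 ∧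
      (∀ v ∈ V', interiorAngle (convexHull ℝ (V' : Set Plane)) v < ω') ∧
      convexHull ℝ (V : Set Plane) ≠ convexHull ℝ (V' : Set Plane) ∧
      omegaCloud (convexHull ℝ (V : Set Plane)) ω =
        omegaCloud (convexHull ℝ (V' : Set Plane)) ω' := by
  obtain ⟨hβ, hγ, hβγ, hω₀, hω⟩ : 0 < 16 * π / 45 ∧ 0 < π / 3 ∧ 16 * π / 45 + π / 3 < π ∧
      0 < 2 * π / 3 ∧ 2 * π / 3 < π := by
    refine ⟨?_, ?_, ?_, ?_, ?_⟩ <;> linarith [pi_pos]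
  have hω' : (π + 2 * π / 3) / 2 = 5 * π / 6 := by ring
  set T := triangle (16 * π / 45) (π / 3)
  set H := bulge (2 * π / 3) (finRotate 3) T
  have hT : IsCCWPolygon (finRotate 3) T := isCCWPolygon_triangle hβ hγ hβγ
  have hT_thin : IsThin (finRotate 3) T ((3 * (2 * π / 3) - π) / 2) :=
    isThin_triangle hβ hγ hβγ (by linarith) (by linarith) (by linarith)
  have hT_thin' : IsThin (finRotate 3) T (2 * π / 3) := hT_thin.mono (by linarith)
  have hH : IsCCWPolygon _ H := isCCWPolygon_bulge hT hω₀ hω hT_thin'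
  have hH_thin : IsThin _ H (5 * π / 6) := hω' ▸ isThin_bulge hT.map_next_ne hω₀ hω hT_thin
  refine ⟨Finset.univ.image T, Finset.univ.image H, 2 * π / 3, 5 * π / 6, T 2, H (.inr 2), T 0,
    H (.inr 0), T 1, H (.inr 1), hT.isConvexPolygon, hH.isConvexPolygon,
    Finset.card_image_of_injective _ hT.injective, Finset.card_image_of_injective _ hH.injective,
    rfl, rfl, by linarith, ?_, ?_, angle_triangle_zero hβ hγ hβγ, angle_triangle_one hβ hγ hβγ,
    (angle_triangle_two hβ hγ hβγ).trans (by ring), ?_⟩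
  · rw [show (Finset.univ : Finset (Fin 3)) = {2, 0, 1} by decide]
    simp
  · rw [show (Finset.univ : Finset (Fin 3 ⊕ Fin 3)) =
      {.inl 2, .inr 2, .inl 0, .inr 0, .inl 1, .inr 1} by decide]
    simp [H]
  · simp only [Finset.coe_image, Finset.coe_univ, image_univ]
    exact ⟨Finset.forall_mem_image.2 fun k _ => hH.interiorAngle_lt hH_thin k,
      hT.convexHull_range_ne_bulge hω₀ hω hT_thin',
      hω' ▸ (hT.omegaCloud_bulge hω₀ hω hT_thin).symm⟩

end
end
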